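/- arXiv:2308.16728 — 4 statements merged into one kernel-verified Lean document; each statement's English description precedes it below -/
import Mathlib

section
/- For every real ε > 0 there exists r₀ such that for all integers r ≥ r₀ one has (1 − ε) · r ≤ f_3(r, {𝒞_2^{(3)}, 𝒞_4^{(3)}}) ≤ (1 + ε) · r. -/
/-- An `m`-uniform edge set: every edge has exactly `m` vertices. -/
def IsUniform (m : ℕ) {n : ℕ} (E : Finset (Finset (Fin n))) : Prop :=
  ∀ e ∈ E, e.card = m

/-- The hypergraph with edge set `GE` contains a subhypergraph isomorphic to the
hypergraph with edge set `HE`: there is an injection of vertices sending every edge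
of `HE` to an edge of `GE`. -/
def HypContains {n N : ℕ} (HE : Finset (Finset (Fin n))) (GE : Finset (Finset (Fin N))) : Prop :=
  ∃ f : Fin n → Fin N, Function.Injective f ∧ ∀ e ∈ HE, e.image f ∈ GE

/-- The hypergraph with edge set `GE` is an `(r,k)`-hypergraph (`m`-uniform setting):
its vertex set can be partitioned into `r` parts of size at most `k` so that for every
`m`-element set of parts there is an edge meeting each of those parts in exactly one vertex. -/
def IsRKHyper {N : ℕ} (GE : Finset (Finset (Fin N))) (m r k : ℕ) : Prop :=
  ∃ P : Fin r → Finset (Fin N),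
    (∀ v : Fin N, ∃! i, v ∈ P i) ∧
    (∀ i, (P i).card ≤ k) ∧
    ∀ S : Finset (Fin r), S.card = m → ∃ e ∈ GE, ∀ i ∈ S, (e ∩ P i).card = 1

/-- A hypergraph: a number of vertices together with an edge set. -/
abbrev Hyp := (n : ℕ) × Finset (Finset (Fin n))

/-- `f_m(r, ℋ)`: the minimum `k` for which there is an `ℋ`-free `m`-uniform
`(r,k)`-hypergraph. -/
noncomputable def fHyper (m r : ℕ) (ℋ : Set Hyp) : ℕ :=
  sInf {k | ∃ (N : ℕ) (GE : Finset (Finset (Fin N))),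
    IsUniform m GE ∧ (∀ H ∈ ℋ, ¬ HypContains H.2 GE) ∧ IsRKHyper GE m r k}

/-- A hypergraph is a Berge cycle of length `ℓ` (in the `m`-uniform setting) if it is
`m`-uniform and there are distinct vertices `v_1,…,v_ℓ` and distinct edges `e_1,…,e_ℓ`
(the edges of the hypergraph being exactly `e_1,…,e_ℓ`) with `{v_i, v_{i+1}} ⊆ e_i`
for all `i`, indices modulo `ℓ`. -/
def IsBergeCycle (m ℓ : ℕ) (H : Hyp) : Prop :=
  IsUniform m H.2 ∧
  ∃ (v : ZMod ℓ → Fin H.1) (e : ZMod ℓ → Finset (Fin H.1)),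
    Function.Injective v ∧ Function.Injective e ∧
    (∀ i, e i ∈ H.2) ∧ (∀ b ∈ H.2, ∃ i, e i = b) ∧
    ∀ i, ({v i, v (i + 1)} : Finset (Fin H.1)) ⊆ e i

/-- `𝒞_ℓ^{(m)}`: the family of all `m`-uniform hypergraphs that are Berge cycles
of length `ℓ`. -/
def bergeCycles (m ℓ : ℕ) : Set Hyp := {H | IsBergeCycle m ℓ H}


section primes

open MeasureTheory Filter Topology

noncomputable def fej (l t : ℝ) : ℝ := 2 * ∫ ξ in (0:ℝ)..l, (1 - ξ / l) * Real.cos (ξ * t)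

lemma fej_cont (l : ℝ) : Continuous (fej l) := by
  unfold fej
  refine continuous_const.mul ?_
  apply intervalIntegral.continuous_parametric_intervalIntegral_of_continuous'
  fun_prop

lemma fej_zero {l : ℝ} (hl : 0 < l) : fej l 0 = l := by
  unfold fej
  have h : ∀ ξ ∈ Set.uIcc 0 l, HasDerivAt (fun ξ : ℝ => ξ - ξ ^ 2 / (2 * l))
      ((1 - ξ / l) * Real.cos (ξ * 0)) ξ := by
    intro ξ _
    have h1 := (hasDerivAt_id ξ).sub (((hasDerivAt_id ξ).pow 2).div_const (2 * l))
    refine h1.congr_deriv ?_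
    simp
    field_simp
  rw [intervalIntegral.integral_eq_sub_of_hasDerivAt h
    (Continuous.intervalIntegrable (by fun_prop) _ _)]
  field_simp
  ring

lemma fej_eq {l t : ℝ} (hl : 0 < l) (ht : t ≠ 0) :
    fej l t = 2 * (1 - Real.cos (l * t)) / (l * t ^ 2) := by
  unfold fej
  have h : ∀ ξ ∈ Set.uIcc 0 l, HasDerivAt
      (fun ξ : ℝ => (1 - ξ / l) * (Real.sin (ξ * t) / t) - Real.cos (ξ * t) / (l * t ^ 2))
      ((1 - ξ / l) * Real.cos (ξ * t)) ξ := by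
    intro ξ _
    have h0 : HasDerivAt (fun ξ : ℝ => ξ * t) t ξ := by
      simpa using (hasDerivAt_id ξ).mul_const t
    have h1 := (((hasDerivAt_id ξ).div_const l).const_sub 1).mul ((h0.sin).div_const t)
    have h2 := h1.sub (h0.cos.div_const (l * t ^ 2))
    refine h2.congr_deriv ?_
    simp
    field_simp
    ring
  rw [intervalIntegral.integral_eq_sub_of_hasDerivAt h
    (Continuous.intervalIntegrable (by fun_prop) _ _)]
  simp
  field_simp
  ring

lemma fej_nonneg {l : ℝ} (hl : 0 < l) (t : ℝ) : 0 ≤ fej l t := by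
  by_cases ht : t = 0
  · rw [ht, fej_zero hl]; exact hl.le
  · rw [fej_eq hl ht]
    have := Real.cos_le_one (l * t)
    apply div_nonneg <;> [linarith; positivity]

lemma fej_le_l {l : ℝ} (hl : 0 < l) (t : ℝ) : fej l t ≤ l := by
  refine le_trans ?_ (fej_zero hl).le
  unfold fej
  refine mul_le_mul_of_nonneg_left ?_ (by norm_num)
  apply intervalIntegral.integral_mono_on hl.le
    (Continuous.intervalIntegrable (by fun_prop) _ _)
    (Continuous.intervalIntegrable (by fun_prop) _ _)
  intro x hx
  have h1 : 0 ≤ 1 - x / l := by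
    have : x / l ≤ 1 := (div_le_one hl).2 hx.2
    linarith
  refine mul_le_mul_of_nonneg_left ?_ h1
  simpa using Real.cos_le_one _

lemma fej_le {l t : ℝ} (hl : 0 < l) (ht : t ≠ 0) : fej l t ≤ 4 / (l * t ^ 2) := by
  rw [fej_eq hl ht]
  have := Real.neg_one_le_cos (l * t)
  gcongr
  linarith

lemma fej_one_le (t : ℝ) : fej 1 t ≤ 8 * (1 + t ^ 2)⁻¹ := by
  by_cases h : |t| ≤ 1
  · have h1 := fej_le_l one_pos t
    have h2 : t ^ 2 ≤ 1 := (sq_le_one_iff_abs_le_one t).2 h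
    have : 1 ≤ 8 * (1 + t ^ 2)⁻¹ := by
      rw [← div_eq_mul_inv, le_div_iff₀ (by positivity)]; linarith
    linarith
  · have ht : t ≠ 0 := by rintro rfl; simp at h
    have h2 : 1 ≤ t ^ 2 := by
      rw [← sq_abs]; nlinarith [not_le.1 h]
    refine (fej_le one_pos ht).trans ?_
    rw [← div_eq_mul_inv, div_le_div_iff₀ (by positivity) (by positivity)]
    linarith

lemma fej_one_ge {t M : ℝ} (hM : 0 < M) (h : t ^ 2 ≤ M) : 2 * (1 - Real.cos t) / M ≤ fej 1 t := by
  by_cases ht : t = 0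
  · rw [ht, fej_zero one_pos]; simp
  · rw [fej_eq one_pos ht]
    have := Real.cos_le_one t
    simp only [one_mul]
    apply div_le_div_of_nonneg_left (by linarith) (by positivity) h

lemma fej_sum_ge (t : ℝ) : (1 + t ^ 2)⁻¹ ≤ 6 * (fej 1 t + fej 1 (t - Real.pi)) := by
  have hp := Real.pi_lt_d2
  have hp0 := Real.pi_pos
  have hM : 0 < 2 * t ^ 2 + 22 := by positivity
  have h1 := fej_one_ge (t := t) hM (by nlinarith)
  have h2 := fej_one_ge (t := t - Real.pi) hM (by nlinarith [sq_nonneg (t + Real.pi)])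
  rw [Real.cos_sub_pi] at h2
  have h3 : 2 * (1 - Real.cos t) / (2 * t ^ 2 + 22) + 2 * (1 - -Real.cos t) / (2 * t ^ 2 + 22)
      = 4 / (2 * t ^ 2 + 22) := by
    rw [← add_div]; ring
  have h4 : (1 + t ^ 2)⁻¹ ≤ 6 * (4 / (2 * t ^ 2 + 22)) := by
    rw [inv_eq_one_div, ← mul_div_assoc, div_le_div_iff₀ (by positivity) (by positivity)]
    nlinarith [sq_nonneg t]
  linarith

lemma fej_ge_half {l t : ℝ} (hl : 0 < l) (h0 : 0 ≤ t) (h1 : t ≤ 1 / l) : l / 2 ≤ fej l t := by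
  have h : fej l 0 / 2 ≤ fej l t := by
    unfold fej
    rw [mul_div_assoc]
    refine mul_le_mul_of_nonneg_left ?_ (by norm_num)
    rw [← intervalIntegral.integral_div]
    apply intervalIntegral.integral_mono_on hl.le
      (Continuous.intervalIntegrable (by fun_prop) _ _)
      (Continuous.intervalIntegrable (by fun_prop) _ _)
    intro x hx
    have h2 : 0 ≤ 1 - x / l := by
      have : x / l ≤ 1 := (div_le_one hl).2 hx.2
      linarith
    rw [mul_div_assoc]
    refine mul_le_mul_of_nonneg_left ?_ h2
    have h3 := Real.one_sub_sq_div_two_le_cos (x := x * t)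
    have h4 : x * t ≤ 1 := by
      calc x * t ≤ l * (1 / l) := mul_le_mul hx.2 h1 h0 hl.le
        _ = 1 := by field_simp
    have h5 : 0 ≤ x * t := mul_nonneg hx.1 h0
    simp
    nlinarith
  rwa [fej_zero hl] at h

open MeasureTheory Filter Topology

open ArithmeticFunction in
lemma S_hasSum {l δ : ℝ} (hl : 0 < l) (hδ : 0 < δ) (u : ℝ) :
    HasSum (fun n : ℕ => vonMangoldt n / (n : ℝ) ^ (1 + δ) * fej l (Real.log n - u))
      (2 * (∫ ξ in (0:ℝ)..l, ((1 - ξ / l : ℝ) : ℂ) * Complex.exp (Complex.I * ξ * u) *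
        LSeries (fun n => (vonMangoldt n : ℂ)) (1 + δ + Complex.I * ξ)).re) := by
  have hsum0 : LSeriesSummable (fun n => (vonMangoldt n : ℂ)) (1 + δ : ℝ) :=
    LSeriesSummable_vonMangoldt (by simpa using hδ)
  have hre : ∀ ξ : ℝ, 1 < (1 + δ + Complex.I * ξ : ℂ).re := by intro ξ; simpa using hδ
  have hterm : ∀ (n : ℕ) (ξ : ℝ), LSeries.term (fun n => (vonMangoldt n : ℂ)) (1 + δ + Complex.I * ξ) n
      = ((vonMangoldt n / (n : ℝ) ^ (1 + δ) : ℝ) : ℂ) * Complex.exp (-(Complex.I * ξ * Real.log n)) := by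
    intro n ξ
    rcases eq_or_ne n 0 with rfl | hn
    · simp
    have hn' : (n : ℂ) ≠ 0 := by exact_mod_cast hn
    rw [LSeries.term_of_ne_zero hn, Complex.cpow_add _ _ hn', Complex.exp_neg]
    rw [Complex.cpow_def_of_ne_zero hn' (Complex.I * ξ)]
    push_cast
    rw [Complex.ofReal_cpow (by positivity)]
    push_cast
    rw [show Complex.log n * (Complex.I * ξ) = Complex.I * ξ * Complex.log n by ring]
    field_simp
  have hIntegral : ∀ n : ℕ, ((2 * (∫ ξ in (0:ℝ)..l, ((1 - ξ / l : ℝ) : ℂ) * Complex.exp (Complex.I * ξ * u) *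
      LSeries.term (fun n => (vonMangoldt n : ℂ)) (1 + δ + Complex.I * ξ) n).re)) =
      vonMangoldt n / (n : ℝ) ^ (1 + δ) * fej l (Real.log n - u) := by
    intro n
    simp_rw [hterm]
    have := Complex.reCLM.intervalIntegral_comp_comm (μ := volume) (a := 0) (b := l)
      (f := fun ξ : ℝ => ((1 - ξ / l : ℝ) : ℂ) * Complex.exp (Complex.I * ξ * u) *
       (((vonMangoldt n / (n : ℝ) ^ (1 + δ) : ℝ) : ℂ) * Complex.exp (-(Complex.I * ξ * Real.log n))))
       (Continuous.intervalIntegrable (by fun_prop) _ _)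
    simp only [Complex.reCLM_apply] at this
    rw [← this]
    unfold fej
    rw [mul_left_comm _ 2]
    congr 1
    rw [← intervalIntegral.integral_const_mul]
    apply intervalIntegral.integral_congr
    intro ξ _
    have h1 : ((1 - ξ / l : ℝ) : ℂ) * Complex.exp (Complex.I * ξ * u) *
       (((vonMangoldt n / (n : ℝ) ^ (1 + δ) : ℝ) : ℂ) * Complex.exp (-(Complex.I * ξ * Real.log n)))
       = ((vonMangoldt n / (n : ℝ) ^ (1 + δ) * (1 - ξ / l) : ℝ) : ℂ) *
        Complex.exp ((-(ξ * (Real.log n - u)) : ℝ) * Complex.I) := by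
      rw [mul_mul_mul_comm, ← Complex.exp_add]
      push_cast
      ring_nf
    simp only [h1]
    rw [Complex.re_ofReal_mul, Complex.exp_ofReal_mul_I_re, Real.cos_neg]
    ring
  have key := intervalIntegral.hasSum_integral_of_dominated_convergence (μ := volume) (a := 0) (b := l)
    (F := fun (n : ℕ) (ξ : ℝ) => ((1 - ξ / l : ℝ) : ℂ) * Complex.exp (Complex.I * ξ * u) *
      LSeries.term (fun n => (vonMangoldt n : ℂ)) (1 + δ + Complex.I * ξ) n)
    (f := fun ξ : ℝ => ((1 - ξ / l : ℝ) : ℂ) * Complex.exp (Complex.I * ξ * u) *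
        LSeries (fun n => (vonMangoldt n : ℂ)) (1 + δ + Complex.I * ξ))
    (fun n _ => vonMangoldt n / (n : ℝ) ^ (1 + δ)) ?_ ?_ ?_ ?_ ?_
  · have := (Complex.hasSum_re key).mul_left 2
    simpa only [hIntegral] using this
  · intro n
    simp_rw [hterm]
    exact (Continuous.aestronglyMeasurable (by fun_prop))
  · intro n
    refine Eventually.of_forall fun ξ hξ => ?_
    rw [Set.uIoc_of_le hl.le] at hξ
    rw [hterm, norm_mul, norm_mul, norm_mul, Complex.norm_real, Complex.norm_real]
    have e1 : ‖Complex.exp (Complex.I * ξ * u)‖ = 1 := by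
      rw [Complex.norm_exp]; simp
    have e2 : ‖Complex.exp (-(Complex.I * ξ * Real.log n))‖ = 1 := by
      rw [Complex.norm_exp]
      simp only [Complex.neg_re, Complex.mul_re, Complex.mul_im, Complex.ofReal_re,
        Complex.ofReal_im, Complex.I_re, Complex.I_im]
      simp
    rw [e1, e2, mul_one, mul_one]
    have h3 : 0 ≤ vonMangoldt n / (n : ℝ) ^ (1 + δ) := by
      have := @vonMangoldt_nonneg n
      positivity
    rw [Real.norm_of_nonneg h3]
    have h4 : ‖1 - ξ / l‖ ≤ 1 := by
      have h5 : ξ / l ≤ 1 := (div_le_one hl).2 hξ.2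
      have h6 : 0 ≤ ξ / l := div_nonneg hξ.1.le hl.le
      rw [Real.norm_eq_abs, abs_le]; constructor <;> linarith
    exact mul_le_of_le_one_left h3 h4
  · refine Eventually.of_forall fun ξ hξ => ?_
    have := hsum0.norm
    refine this.congr ?_
    intro n
    have h := hterm n 0
    simp at h
    simp
    rw [h]
    have h3 : 0 ≤ vonMangoldt n := vonMangoldt_nonneg
    simp [abs_of_nonneg h3]
    rw [abs_of_nonneg (by positivity)]
  · simp
  · refine Eventually.of_forall fun ξ hξ => ?_
    exact (LSeriesSummable_vonMangoldt (hre ξ)).hasSum.mul_left _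

lemma P_eq {l δ : ℝ} (hl : 0 < l) (hδ : 0 < δ) (u : ℝ) :
    ∫ t in Set.Ioi (0:ℝ), Real.exp (-δ * t) * fej l (t - u) =
      2 * (∫ ξ in (0:ℝ)..l, ((1 - ξ / l : ℝ) : ℂ) * Complex.exp (Complex.I * ξ * u) *
        (1 / (δ + Complex.I * ξ))).re := by
  have hinner : ∀ ξ : ℝ, (1 / (δ + Complex.I * ξ) : ℂ) =
      ∫ t in Set.Ioi (0:ℝ), Complex.exp (-(δ + Complex.I * ξ) * t) := by
    intro ξ
    rw [integral_exp_mul_complex_Ioi (by simpa using hδ)]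
    rw [Complex.ofReal_zero, mul_zero, Complex.exp_zero, neg_div_neg_eq]
  set G : ℝ → ℝ → ℂ := fun ξ t => ((1 - ξ / l : ℝ) : ℂ) * Complex.exp (Complex.I * ξ * u) *
        Complex.exp (-(δ + Complex.I * ξ) * t) with hG
  have hGint : Integrable (Function.uncurry G)
      ((volume.restrict (Set.Ioc 0 l)).prod (volume.restrict (Set.Ioi (0:ℝ)))) := by
    have h1 : Integrable (fun ξ : ℝ => (1 - ξ / l : ℝ)) (volume.restrict (Set.Ioc 0 l)) := by
      have : IntervalIntegrable (fun ξ : ℝ => (1 - ξ / l : ℝ)) volume 0 l :=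
        Continuous.intervalIntegrable (by fun_prop) _ _
      rwa [intervalIntegrable_iff_integrableOn_Ioc_of_le hl.le] at this
    have h2 : Integrable (fun t : ℝ => Real.exp (-δ * t)) (volume.restrict (Set.Ioi (0:ℝ))) :=
      integrableOn_exp_mul_Ioi (by linarith) 0
    refine (h1.mul_prod h2).mono (Continuous.aestronglyMeasurable (by simp only [hG]; fun_prop)) ?_
    refine Eventually.of_forall fun z => le_of_eq ?_
    obtain ⟨ξ, t⟩ := z
    simp only [hG, Function.uncurry, norm_mul, Complex.norm_real, Complex.norm_exp]
    simp [Real.norm_eq_abs]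
  have hswap := integral_integral_swap hGint
  have h1 : (∫ ξ in (0:ℝ)..l, ((1 - ξ / l : ℝ) : ℂ) * Complex.exp (Complex.I * ξ * u) *
        (1 / (δ + Complex.I * ξ))) = ∫ t in Set.Ioi (0:ℝ), ∫ ξ in Set.Ioc 0 l, G ξ t := by
    rw [← hswap, intervalIntegral.integral_of_le hl.le]
    simp_rw [hinner, ← integral_const_mul]
    rfl
  rw [h1]
  have hI := hGint.integral_prod_right
  simp only [Function.uncurry] at hI
  have h2 := Complex.reCLM.integral_comp_comm hI
  simp only [Complex.reCLM_apply] at h2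
  rw [← h2, ← integral_const_mul]
  congr 1
  ext t
  have hcont : IntervalIntegrable (fun ξ => G ξ t) volume 0 l :=
    Continuous.intervalIntegrable (by simp only [hG]; fun_prop) _ _
  have h3 := Complex.reCLM.intervalIntegral_comp_comm hcont
  simp only [Complex.reCLM_apply] at h3
  rw [← intervalIntegral.integral_of_le hl.le, ← h3]
  unfold fej
  rw [mul_left_comm, ← intervalIntegral.integral_const_mul]
  congr 1
  apply intervalIntegral.integral_congr
  intro ξ _
  have h4 : G ξ t = ((Real.exp (-δ * t) * (1 - ξ / l) : ℝ) : ℂ) *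
        Complex.exp ((-(ξ * (t - u)) : ℝ) * Complex.I) := by
    simp only [hG]
    push_cast
    rw [mul_assoc, ← Complex.exp_add, mul_comm (Complex.exp _) (1 - _ : ℂ), mul_assoc,
      mul_assoc, ← Complex.exp_add]
    ring_nf
  simp only [h4]
  rw [Complex.re_ofReal_mul, Complex.exp_ofReal_mul_I_re, Real.cos_neg]
  ring

open MeasureTheory Filter Topology

noncomputable def Faux : ℂ → ℂ := ArithmeticFunction.vonMangoldt.LFunctionResidueClassAux (1 : ZMod 1)

lemma Faux_eq {s : ℂ} (hs : 1 < s.re) :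
    LSeries (fun n => (ArithmeticFunction.vonMangoldt n : ℂ)) s = Faux s + 1 / (s - 1) := by
  have h := ArithmeticFunction.vonMangoldt.eqOn_LFunctionResidueClassAux (q := 1) (a := 1)
    isUnit_one (x := s) hs
  unfold Faux
  rw [h]
  have h2 : (fun n => ((ArithmeticFunction.vonMangoldt.residueClass (1 : ZMod 1) n : ℝ) : ℂ)) =
      fun n => (ArithmeticFunction.vonMangoldt n : ℂ) := by
    ext n
    simp [ArithmeticFunction.vonMangoldt.residueClass, Subsingleton.elim _ (1 : ZMod 1)]
  simp only [h2]
  simp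

noncomputable def gF (δ ξ : ℝ) : ℂ := Faux (1 + (|δ| : ℝ) + Complex.I * ξ)

lemma gF_cont : Continuous (Function.uncurry gF) := by
  have h : ContinuousOn Faux {s | 1 ≤ s.re} :=
    ArithmeticFunction.vonMangoldt.continuousOn_LFunctionResidueClassAux (1 : ZMod 1)
  unfold gF
  refine h.comp_continuous (f := fun z : ℝ × ℝ => (1 + (|z.1| : ℝ) + Complex.I * z.2 : ℂ)) (by fun_prop) ?_
  intro z
  simp

attribute [irreducible] Faux

lemma gF_cont' (f g : ℝ × ℝ → ℝ) (hf : Continuous f) (hg : Continuous g) :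
    Continuous (fun z => gF (f z) (g z)) :=
  Continuous.comp (g := Function.uncurry gF) (f := fun z => (f z, g z)) gF_cont (hf.prodMk hg)

lemma gF_cont2 (δ : ℝ) : Continuous (gF δ) :=
  Continuous.comp (g := Function.uncurry gF) (f := fun z => (δ, z)) gF_cont
    (Continuous.prodMk continuous_const continuous_id)

noncomputable def Rr (l δ u : ℝ) : ℝ :=
  2 * (∫ ξ in (0:ℝ)..l, ((1 - ξ / l : ℝ) : ℂ) * Complex.exp (Complex.I * ξ * u) * gF δ ξ).re

noncomputable def Pp (l δ u : ℝ) : ℝ := ∫ t in Set.Ioi (0:ℝ), Real.exp (-δ * t) * fej l (t - u)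

open ArithmeticFunction in
lemma SPR {l δ : ℝ} (hl : 0 < l) (hδ : 0 < δ) (u : ℝ) :
    HasSum (fun n : ℕ => vonMangoldt n / (n : ℝ) ^ (1 + δ) * fej l (Real.log n - u))
      (Pp l δ u + Rr l δ u) := by
  convert S_hasSum hl hδ u using 1
  unfold Pp Rr
  rw [P_eq hl hδ u, ← mul_add, ← Complex.add_re, ← intervalIntegral.integral_add]
  · congr 2
    apply intervalIntegral.integral_congr
    intro ξ _
    have : 1 < (1 + δ + Complex.I * ξ : ℂ).re := by simpa using hδ
    simp only [Faux_eq this, gF, abs_of_pos hδ]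
    ring
  · refine Continuous.intervalIntegrable ?_ _ _
    refine Continuous.mul (by fun_prop) ?_
    refine Continuous.div continuous_const (by fun_prop) ?_
    intro ξ h
    have := congrArg Complex.re h
    simp at this
    exact hδ.ne' this
  · refine Continuous.intervalIntegrable ?_ _ _
    exact Continuous.mul (by fun_prop) (gF_cont2 δ)

lemma Rr_tendsto_delta (l u : ℝ) : Tendsto (fun δ => Rr l δ u) (𝓝 0) (𝓝 (Rr l 0 u)) := by
  have : Continuous (fun δ => Rr l δ u) := by
    unfold Rr
    refine continuous_const.mul (Complex.continuous_re.comp ?_)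
    apply intervalIntegral.continuous_parametric_intervalIntegral_of_continuous'
    refine Continuous.mul (by fun_prop) (gF_cont' _ _ continuous_fst continuous_snd)
  exact this.tendsto 0

lemma Rr_tendsto_u {l : ℝ} (hl : 0 < l) : Tendsto (fun u => Rr l 0 u) atTop (𝓝 0) := by
  set f : ℝ → ℂ := (Set.Ioc 0 l).indicator (fun ξ => ((1 - ξ / l : ℝ) : ℂ) * gF 0 ξ) with hf
  have h := Real.tendsto_integral_exp_smul_cocompact f
  have hu : Tendsto (fun u : ℝ => -(u / (2 * Real.pi))) atTop (cocompact ℝ) := by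
    rw [cocompact_eq_atBot_atTop]
    refine Tendsto.mono_right ?_ le_sup_left
    exact tendsto_neg_atTop_atBot.comp (tendsto_id.atTop_div_const (by positivity))
  have h2 := h.comp hu
  have h3 : (fun u => Rr l 0 u) = fun u => 2 * (((fun w : ℝ => ∫ v : ℝ, Real.fourierChar (-(v * w)) • f v) ∘
      (fun u : ℝ => -(u / (2 * Real.pi)))) u).re := by
    ext u
    unfold Rr
    congr 2
    rw [intervalIntegral.integral_of_le hl.le, ← integral_indicator measurableSet_Ioc]
    simp only [Function.comp]
    congr 1
    ext v
    simp only [hf, Set.indicator]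
    split_ifs
    · rw [Circle.smul_def, Real.fourierChar_apply]
      simp only [smul_eq_mul]
      have : (2 * Real.pi * -(v * -(u / (2 * Real.pi)))) = v * u := by
        have := Real.pi_pos
        field_simp
      rw [this]
      push_cast
      ring_nf
    · simp
  rw [h3]
  have h4 := (Complex.continuous_re.tendsto 0).comp h2
  simpa using h4.const_mul 2

lemma Rr_bound : ∃ C : ℝ, ∀ δ ∈ Set.Ioc (0:ℝ) 1, ∀ u, Rr 1 δ u ≤ C := by
  have hK : IsCompact (Set.Icc (0:ℝ) 1 ×ˢ Set.Icc (0:ℝ) 1) := isCompact_Icc.prod isCompact_Icc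
  obtain ⟨C, hC⟩ := hK.exists_bound_of_continuousOn gF_cont.continuousOn
  refine ⟨2 * C, fun δ hδ u => ?_⟩
  unfold Rr
  refine mul_le_mul_of_nonneg_left ?_ (by norm_num)
  refine (Complex.re_le_norm _).trans ?_
  have := intervalIntegral.norm_integral_le_of_norm_le_const (a := 0) (b := 1) (C := C)
    (f := fun ξ : ℝ => ((1 - ξ / 1 : ℝ) : ℂ) * Complex.exp (Complex.I * ξ * u) * gF δ ξ) ?_
  · simpa using this
  intro ξ hξ
  rw [Set.uIoc_of_le zero_le_one] at hξ
  have h1 := hC (δ, ξ) ⟨⟨hδ.1.le, hδ.2⟩, ⟨hξ.1.le, hξ.2⟩⟩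
  simp only [Function.uncurry] at h1
  have e1 : ‖Complex.exp (Complex.I * ξ * u)‖ = 1 := by
    rw [Complex.norm_exp]; simp
  rw [norm_mul, norm_mul, e1, Complex.norm_real, mul_one]
  have h4 : ‖1 - ξ / 1‖ ≤ 1 := by
    rw [Real.norm_eq_abs, abs_le]; constructor <;> linarith [hξ.1, hξ.2]
  calc _ ≤ 1 * ‖gF δ ξ‖ := mul_le_mul_of_nonneg_right h4 (norm_nonneg _)
    _ ≤ C := by linarith

lemma Pp_integrable {l δ : ℝ} (hl : 0 < l) (hδ : 0 < δ) (u : ℝ) :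
    IntegrableOn (fun t => Real.exp (-δ * t) * fej l (t - u)) (Set.Ioi 0) := by
  have h2 : IntegrableOn (fun t : ℝ => Real.exp (-δ * t) * l) (Set.Ioi (0:ℝ)) :=
    (integrableOn_exp_mul_Ioi (by linarith) 0).mul_const l
  refine Integrable.mono h2 ?_ ?_
  · have := fej_cont l
    exact Continuous.aestronglyMeasurable (by fun_prop)
  · refine Eventually.of_forall fun t => ?_
    rw [norm_mul, norm_mul]
    refine mul_le_mul_of_nonneg_left ?_ (norm_nonneg _)
    rw [Real.norm_of_nonneg (fej_nonneg hl _), Real.norm_of_nonneg hl.le]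
    exact fej_le_l hl _

lemma Pp_le {δ : ℝ} (hδ : 0 < δ) (u : ℝ) : Pp 1 δ u ≤ 8 * Real.pi := by
  unfold Pp
  have hi : Integrable (fun t : ℝ => 8 * (1 + (t - u) ^ 2)⁻¹) :=
    (integrable_inv_one_add_sq.comp_sub_right u).const_mul 8
  calc _ ≤ ∫ t in Set.Ioi (0:ℝ), 8 * (1 + (t - u) ^ 2)⁻¹ := by
        refine setIntegral_mono_on (Pp_integrable one_pos hδ u) hi.integrableOn measurableSet_Ioi ?_
        intro t ht
        refine le_trans ?_ (fej_one_le (t - u))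
        refine mul_le_of_le_one_left (fej_nonneg one_pos _) ?_
        rw [Real.exp_le_one_iff]
        have : (0:ℝ) < t := ht
        nlinarith
    _ ≤ ∫ t : ℝ, 8 * (1 + (t - u) ^ 2)⁻¹ := by
        refine setIntegral_le_integral hi (Eventually.of_forall fun t => ?_)
        positivity
    _ = 8 * Real.pi := by
        rw [integral_const_mul, integral_sub_right_eq_self (fun t : ℝ => (1 + t ^ 2)⁻¹) u,
          integral_univ_inv_one_add_sq]

lemma Pp_ge {l δ u : ℝ} (hl : 0 < l) (hδ : 0 < δ) (hu : 0 < u) :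
    Real.exp (-δ * (u + 1 / l)) / 2 ≤ Pp l δ u := by
  unfold Pp
  have hsub : Set.Ioc u (u + 1 / l) ⊆ Set.Ioi 0 := fun x hx => hu.trans hx.1
  calc _ = ∫ t in Set.Ioc u (u + 1 / l), Real.exp (-δ * (u + 1 / l)) * (l / 2) := by
        rw [setIntegral_const]
        simp [measureReal_def]
        rw [ENNReal.toReal_ofReal (by positivity)]
        field_simp
    _ ≤ ∫ t in Set.Ioc u (u + 1 / l), Real.exp (-δ * t) * fej l (t - u) := by
        refine setIntegral_mono_on (integrableOn_const (by simp)) ((Pp_integrable hl hδ u).mono_set hsub) measurableSet_Ioc ?_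
        intro t ht
        refine mul_le_mul ?_ (fej_ge_half hl (by linarith [ht.1]) (by linarith [ht.2])) (by positivity)
          (by positivity)
        rw [Real.exp_le_exp]
        nlinarith [ht.2]
    _ ≤ _ := by
        refine setIntegral_mono_set (Pp_integrable hl hδ u) ?_ (LE.le.eventuallyLE hsub)
        refine Eventually.of_forall fun t => ?_
        exact mul_nonneg (Real.exp_pos _).le (fej_nonneg hl _)

open MeasureTheory Filter Topology

open ArithmeticFunction in
lemma tail_bound : ∃ C : ℝ, 0 < C ∧ ∀ δ ∈ Set.Ioc (0:ℝ) 1, ∀ u,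
    Summable (fun n : ℕ => vonMangoldt n / (n : ℝ) ^ (1 + δ) * (1 + (Real.log n - u) ^ 2)⁻¹) ∧
    ∑' n : ℕ, vonMangoldt n / (n : ℝ) ^ (1 + δ) * (1 + (Real.log n - u) ^ 2)⁻¹ ≤ C := by
  obtain ⟨C, hC⟩ := Rr_bound
  refine ⟨6 * ((8 * Real.pi + |C|) + (8 * Real.pi + |C|)), by positivity, fun δ hδ u => ?_⟩
  have h1 := SPR one_pos hδ.1 u
  have h2 := SPR one_pos hδ.1 (u + Real.pi)
  have h3 := (h1.add h2).mul_left 6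
  have hle : ∀ n : ℕ, vonMangoldt n / (n : ℝ) ^ (1 + δ) * (1 + (Real.log n - u) ^ 2)⁻¹ ≤
      6 * (vonMangoldt n / (n : ℝ) ^ (1 + δ) * fej 1 (Real.log n - u) +
        vonMangoldt n / (n : ℝ) ^ (1 + δ) * fej 1 (Real.log n - (u + Real.pi))) := by
    intro n
    have h := fej_sum_ge (Real.log n - u)
    have h0 : 0 ≤ vonMangoldt n / (n : ℝ) ^ (1 + δ) := by
      have := @vonMangoldt_nonneg n
      positivity
    rw [← sub_sub, ← mul_add, mul_left_comm]
    exact mul_le_mul_of_nonneg_left h h0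
  have hs : Summable (fun n : ℕ => vonMangoldt n / (n : ℝ) ^ (1 + δ) * (1 + (Real.log n - u) ^ 2)⁻¹) := by
    refine Summable.of_nonneg_of_le (fun n => ?_) hle h3.summable
    have := @vonMangoldt_nonneg n
    positivity
  refine ⟨hs, (hasSum_le hle hs.hasSum h3).trans ?_⟩
  have a1 := Pp_le hδ.1 u
  have a2 := Pp_le hδ.1 (u + Real.pi)
  have b1 := hC δ hδ u
  have b2 := hC δ hδ (u + Real.pi)
  have := le_abs_self C
  linarith

lemma nonprime_summable : Summable (fun n : ℕ => (if n.Prime then 0 else ArithmeticFunction.vonMangoldt n) / (n : ℝ)) := by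
  have := ArithmeticFunction.vonMangoldt.summable_residueClass_non_primes_div (1 : ZMod 1)
  refine this.congr fun n => ?_
  simp [ArithmeticFunction.vonMangoldt.residueClass, Subsingleton.elim _ (1 : ZMod 1)]

open ArithmeticFunction in
lemma prime_window {η : ℝ} (hη : 0 < η) : ∃ U : ℝ, ∀ u ≥ U, ∃ p : ℕ, p.Prime ∧ |Real.log p - u| ≤ η := by
  obtain ⟨C, hC0, hC⟩ := tail_bound
  set l : ℝ := 64 * (1 + 1 / η ^ 2) * C with hl_def
  have hl : 0 < l := by positivity
  set G : ℕ → ℝ := fun n => (if n.Prime then 0 else vonMangoldt n) / (n : ℝ) with hG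
  have hG0 : ∀ n, 0 ≤ G n := by
    intro n
    simp only [hG]
    have := @vonMangoldt_nonneg n
    split_ifs <;> positivity
  have hGs : Summable G := nonprime_summable
  have ht := tendsto_sum_nat_add G
  obtain ⟨N, hN⟩ := (ht.eventually_lt_const (show (0:ℝ) < 1 / (16 * l) by positivity)).exists
  have hR := (Rr_tendsto_u hl).eventually_const_lt (show (-(1/32) : ℝ) < 0 by norm_num)
  obtain ⟨U1, hU1⟩ := eventually_atTop.1 hR
  refine ⟨max U1 (Real.log N + η + 1), fun u hu => ?_⟩
  have hu1 : U1 ≤ u := (le_max_left _ _).trans hu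
  have hu2 : Real.log N + η + 1 ≤ u := (le_max_right _ _).trans hu
  have hlogN : 0 ≤ Real.log N := Real.log_natCast_nonneg N
  have hu0 : 0 < u := by linarith
  have hR0 := hU1 u hu1
  by_contra hno
  push Not at hno
  -- choose δ
  have e1 : ∀ᶠ δ in 𝓝[>] (0:ℝ), -(1/16 : ℝ) < Rr l δ u := by
    refine nhdsWithin_le_nhds ?_
    exact (Rr_tendsto_delta l u).eventually_const_lt (by linarith)
  have e2 : ∀ᶠ δ in 𝓝[>] (0:ℝ), (1/2 : ℝ) < Real.exp (-δ * (u + 1 / l)) := by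
    refine nhdsWithin_le_nhds ?_
    have hc : Continuous (fun δ : ℝ => Real.exp (-δ * (u + 1 / l))) := by fun_prop
    refine (hc.tendsto 0).eventually_const_lt ?_
    simp
    norm_num
  have e3 : ∀ᶠ δ in 𝓝[>] (0:ℝ), δ ∈ Set.Ioc (0:ℝ) 1 := Ioc_mem_nhdsGT one_pos
  obtain ⟨δ, ⟨h1, h2⟩, h3⟩ := ((e1.and e2).and e3).exists
  have hS := SPR hl h3.1 u
  have hP := Pp_ge hl h3.1 hu0
  obtain ⟨hs, hsC⟩ := hC δ h3 u
  set Gw : ℕ → ℝ := fun n => if |Real.log n - u| ≤ η then G n else 0 with hGw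
  have hGw0 : ∀ n, 0 ≤ Gw n := by
    intro n; simp only [hGw]; split_ifs <;> simp [hG0]
  have hGwle : ∀ n, Gw n ≤ G n := by
    intro n; simp only [hGw]; split_ifs <;> simp [hG0]
  have hGws : Summable Gw := Summable.of_nonneg_of_le hGw0 hGwle hGs
  have hGwsum : ∑' n, Gw n ≤ 1 / (16 * l) := by
    rw [← hGws.sum_add_tsum_nat_add N]
    have z : ∑ i ∈ Finset.range N, Gw i = 0 := by
      refine Finset.sum_eq_zero fun n hn => ?_
      simp only [hGw]
      rw [if_neg]
      intro h
      have h4 := (abs_le.1 h).1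
      have h5 : Real.log n ≤ Real.log N := by
        rcases Nat.eq_zero_or_pos n with rfl | hn0
        · simpa using hlogN
        · exact Real.log_le_log (by exact_mod_cast hn0) (by exact_mod_cast (Finset.mem_range.1 hn).le)
      linarith
    rw [z, zero_add]
    refine le_trans ?_ hN.le
    exact Summable.tsum_le_tsum (fun n => hGwle _) ((summable_nat_add_iff N).2 hGws)
      ((summable_nat_add_iff N).2 hGs)
  have hpt : ∀ n : ℕ, vonMangoldt n / (n : ℝ) ^ (1 + δ) * fej l (Real.log n - u) ≤
      4 / l * (1 + 1 / η ^ 2) * (vonMangoldt n / (n : ℝ) ^ (1 + δ) * (1 + (Real.log n - u) ^ 2)⁻¹)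
        + l * Gw n := by
    intro n
    have hL := @vonMangoldt_nonneg n
    have h0 : 0 ≤ vonMangoldt n / (n : ℝ) ^ (1 + δ) := by positivity
    by_cases hw : |Real.log n - u| ≤ η
    · have hnp : ¬ n.Prime := fun hp => absurd hw (not_le.2 (hno n hp))
      have : vonMangoldt n / (n : ℝ) ^ (1 + δ) * fej l (Real.log n - u) ≤ l * Gw n := by
        simp only [hGw, hG, if_pos hw, if_neg hnp]
        rw [mul_comm l]
        refine mul_le_mul ?_ (fej_le_l hl _) (fej_nonneg hl _) (by positivity)
        rcases Nat.eq_zero_or_pos n with rfl | hn0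
        · simp
        · have hn1 : (1:ℝ) ≤ n := by exact_mod_cast hn0
          refine div_le_div_of_nonneg_left hL (by linarith) ?_
          calc (n:ℝ) = (n:ℝ) ^ (1:ℝ) := (Real.rpow_one _).symm
            _ ≤ _ := Real.rpow_le_rpow_of_exponent_le hn1 (by linarith [h3.1])
      have : 0 ≤ 4 / l * (1 + 1 / η ^ 2) *
          (vonMangoldt n / (n : ℝ) ^ (1 + δ) * (1 + (Real.log n - u) ^ 2)⁻¹) := by positivity
      linarith
    · have hw' := not_le.1 hw
      have hne : Real.log n - u ≠ 0 := by
        intro h; rw [h] at hw'; simp at hw'; linarith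
      set t := Real.log n - u
      have ht2 : η ^ 2 ≤ t ^ 2 := by
        rw [← sq_abs t]; exact pow_le_pow_left₀ hη.le hw'.le 2
      have ht0 : 0 < t ^ 2 := by positivity
      have hf : fej l t ≤ 4 / l * (1 + 1 / η ^ 2) * (1 + t ^ 2)⁻¹ := by
        refine (fej_le hl hne).trans ?_
        have : 1 / t ^ 2 ≤ (1 + 1 / η ^ 2) * (1 + t ^ 2)⁻¹ := by
          rw [← div_eq_mul_inv, div_le_div_iff₀ ht0 (by positivity)]
          have : 1 ≤ 1 / η ^ 2 * t ^ 2 := by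
            rw [one_div, inv_mul_eq_div, le_div_iff₀ (by positivity)]; linarith
          linarith
        calc 4 / (l * t ^ 2) = 4 / l * (1 / t ^ 2) := by field_simp
          _ ≤ 4 / l * ((1 + 1 / η ^ 2) * (1 + t ^ 2)⁻¹) :=
            mul_le_mul_of_nonneg_left this (by positivity)
          _ = _ := by ring
      have : 0 ≤ l * Gw n := mul_nonneg hl.le (hGw0 n)
      have := mul_le_mul_of_nonneg_left hf h0
      linarith
  have hfin := hasSum_le hpt hS ((hs.hasSum.mul_left _).add (hGws.hasSum.mul_left l))
  have c1 : 4 / l * (1 + 1 / η ^ 2) * C = 1 / 16 := by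
    rw [hl_def]
    have : 1 + 1 / η ^ 2 ≠ 0 := by positivity
    field_simp
    norm_num
  have c2 : 4 / l * (1 + 1 / η ^ 2) * (∑' n : ℕ, vonMangoldt n / (n : ℝ) ^ (1 + δ) * (1 + (Real.log n - u) ^ 2)⁻¹)
      ≤ 1 / 16 := by
    rw [← c1]; exact mul_le_mul_of_nonneg_left hsC (by positivity)
  have c3 : l * ∑' n, Gw n ≤ 1 / 16 := by
    calc _ ≤ l * (1 / (16 * l)) := mul_le_mul_of_nonneg_left hGwsum hl.le
      _ = 1 / 16 := by field_simp
  linarith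

lemma prime_gap {ε : ℝ} (hε : 0 < ε) : ∃ X : ℝ, ∀ x ≥ X, ∃ p : ℕ, p.Prime ∧ x ≤ p ∧ p ≤ (1 + ε) * x := by
  have hη : 0 < Real.log (1 + ε) / 2 := by
    have := Real.log_pos (show 1 < 1 + ε by linarith)
    positivity
  obtain ⟨U, hU⟩ := prime_window hη
  refine ⟨max 1 (Real.exp U), fun x hx => ?_⟩
  have hx1 : 1 ≤ x := (le_max_left _ _).trans hx
  have hx2 : Real.exp U ≤ x := (le_max_right _ _).trans hx
  have hx0 : 0 < x := by linarith
  have hU' : U ≤ Real.log x := (Real.le_log_iff_exp_le hx0).2 hx2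
  obtain ⟨p, hp, h⟩ := hU (Real.log x + Real.log (1 + ε) / 2) (by linarith)
  have hp0 : (0:ℝ) < p := by exact_mod_cast hp.pos
  rw [abs_le] at h
  refine ⟨p, hp, ?_, ?_⟩
  · rw [← Real.log_le_log_iff hx0 hp0]; linarith
  · rw [← Real.log_le_log_iff hp0 (by positivity), Real.log_mul (by positivity) (by positivity)]
    linarith


end primes


section lower
variable {N : ℕ} {E : Finset (Finset (Fin N))}

lemma low_B (hcard : ∀ e ∈ E, e.card = 3)
    (hlin : ∀ e ∈ E, ∀ f ∈ E, ∀ a b, a ≠ b → a ∈ e → b ∈ e → a ∈ f → b ∈ f → e = f)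
    (hC4 : ∀ a v b w : Fin N, a ≠ v → a ≠ b → a ≠ w → v ≠ b → v ≠ w → b ≠ w →
      ∀ e1 ∈ E, ∀ e2 ∈ E, ∀ e3 ∈ E, ∀ e4 ∈ E, e1 ≠ e2 → e1 ≠ e3 → e1 ≠ e4 → e2 ≠ e3 → e2 ≠ e4 → e3 ≠ e4 →
      a ∈ e1 → v ∈ e1 → v ∈ e2 → b ∈ e2 → b ∈ e3 → w ∈ e3 → w ∈ e4 → a ∈ e4 → False)
    (B : Finset (Fin N)) (e : Finset (Fin N)) (he : e ∈ E) (a v : Fin N) (ha : a ∈ e) (hv : v ∈ e)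
    (hav : a ≠ v)
    (hB : ∀ b ∈ B, ∃ v' ∈ e, v' ≠ v ∧ v' ≠ a ∧ (∃ f ∈ E, f ≠ e ∧ v ∈ f ∧ b ∈ f ∧ b ≠ v) ∧
      (∃ f ∈ E, f ≠ e ∧ v' ∈ f ∧ b ∈ f ∧ b ≠ v')) : B.card ≤ 6 := by
  rcases B.eq_empty_or_nonempty with rfl | ⟨b0, hb0⟩
  · simp
  obtain ⟨v0, hv0, hv0v, hv0a, ⟨f0, hf0, hf0e, hvf0, hbf0, hb0v⟩, ⟨g0, hg0, hg0e, hvg0, hbg0, hb0v0⟩⟩ := hB b0 hb0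
  have hsub : B ⊆ f0 ∪ g0 := by
    intro b hb
    obtain ⟨v1, hv1, hv1v, hv1a, ⟨f, hf, hfe, hvf, hbf, hbv⟩, ⟨g, hg, hge, hvg, hbg, hbv1⟩⟩ := hB b hb
    have hv01 : v1 = v0 := by
      by_contra hne
      have h4 : ({a, v, v0, v1} : Finset (Fin N)) ⊆ e := by
        intro x hx; simp at hx; rcases hx with rfl | rfl | rfl | rfl <;> assumption
      have h5 := Finset.card_le_card h4
      rw [hcard e he] at h5
      have h6 : ({a, v, v0, v1} : Finset (Fin N)).card = 4 := by
        rw [Finset.card_eq_succ]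
        refine ⟨a, {v, v0, v1}, ?_, rfl, ?_⟩
        · simp [hav, hv0a.symm, hv1a.symm]
        · rw [Finset.card_eq_three]
          exact ⟨v, v0, v1, hv0v.symm, hv1v.symm, Ne.symm hne, rfl⟩
      omega
    subst hv01
    rw [Finset.mem_union]
    by_contra hcon
    push Not at hcon
    have hbb0 : b ≠ b0 := by rintro rfl; exact hcon.1 hbf0
    refine hC4 v b v1 b0 hbv.symm hv1v.symm hb0v.symm hbv1 hbb0 hb0v0.symm f hf g hg g0 hg0 f0 hf0
      ?_ ?_ ?_ ?_ ?_ ?_ hvf hbf hbg hvg hvg0 hbg0 hbf0 hvf0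
    · rintro rfl; exact hfe (hlin _ hf _ he v v1 hv1v.symm hvf hvg hv hv1)
    · rintro rfl; exact hfe (hlin _ hf _ he v v1 hv1v.symm hvf hvg0 hv hv1)
    · rintro rfl; exact hcon.1 hbf
    · rintro rfl; exact hcon.2 hbg
    · rintro rfl; exact hge (hlin _ hg _ he v v1 hv1v.symm hvf0 hvg hv hv1)
    · rintro rfl; exact hg0e (hlin _ hg0 _ he v v1 hv1v.symm hvf0 hvg0 hv hv1)
  calc B.card ≤ (f0 ∪ g0).card := Finset.card_le_card hsub
    _ ≤ f0.card + g0.card := Finset.card_union_le _ _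
    _ = 6 := by rw [hcard _ hf0, hcard _ hg0]

open Classical in
lemma low_main (hcard : ∀ e ∈ E, e.card = 3)
    (hlin : ∀ e ∈ E, ∀ f ∈ E, ∀ a b, a ≠ b → a ∈ e → b ∈ e → a ∈ f → b ∈ f → e = f)
    (hC4 : ∀ a v b w : Fin N, a ≠ v → a ≠ b → a ≠ w → v ≠ b → v ≠ w → b ≠ w →
      ∀ e1 ∈ E, ∀ e2 ∈ E, ∀ e3 ∈ E, ∀ e4 ∈ E, e1 ≠ e2 → e1 ≠ e3 → e1 ≠ e4 → e2 ≠ e3 → e2 ≠ e4 → e3 ≠ e4 →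
      a ∈ e1 → v ∈ e1 → v ∈ e2 → b ∈ e2 → b ∈ e3 → w ∈ e3 → w ∈ e4 → a ∈ e4 → False) :
    36 * (E.card : ℝ) ^ 2 ≤ N * ((N : ℝ) ^ 2 + 84 * E.card) := by
  set h : Fin N → ℕ := fun v => (E.filter (v ∈ ·)).card with hh
  let T : Finset (Σ _ : Fin N, Σ _ : Finset (Fin N) × Finset (Fin N), Fin N × Fin N) :=
    Finset.univ.sigma fun v => (E.filter (v ∈ ·)).offDiag.sigma fun p => p.1.erase v ×ˢ p.2.erase v
  have memT : ∀ v e f a b, (⟨v, ⟨(e, f), (a, b)⟩⟩ : Σ _ : Fin N, Σ _ : Finset (Fin N) × Finset (Fin N), Fin N × Fin N) ∈ T ↔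
      (e ∈ E ∧ v ∈ e) ∧ (f ∈ E ∧ v ∈ f) ∧ e ≠ f ∧ (a ≠ v ∧ a ∈ e) ∧ (b ≠ v ∧ b ∈ f) := by
    intro v e f a b
    simp only [T, Finset.mem_sigma, Finset.mem_univ, true_and, Finset.mem_offDiag, Finset.mem_filter,
      Finset.mem_product, Finset.mem_erase]
    tauto
  have cardT : T.card = ∑ v, 4 * (h v * h v - h v) := by
    simp only [T]
    rw [Finset.card_sigma]
    refine Finset.sum_congr rfl fun v _ => ?_
    rw [Finset.card_sigma, Finset.sum_congr rfl (g := fun _ => 4)]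
    · rw [Finset.sum_const, Finset.offDiag_card, smul_eq_mul, mul_comm]
    · rintro ⟨e, f⟩ hp
      simp only [Finset.mem_offDiag, Finset.mem_filter] at hp
      rw [Finset.card_product, Finset.card_erase_of_mem hp.1.2, Finset.card_erase_of_mem hp.2.1.2,
        hcard _ hp.1.1, hcard _ hp.2.1.1]
  have sumh : ∑ v, h v = 3 * E.card := by
    simp only [hh, Finset.card_filter]
    rw [Finset.sum_comm, Finset.sum_congr rfl (g := fun _ => 3)]
    · simp [mul_comm]
    · intro e he
      rw [← hcard e he]
      simp
  -- the bad target
  let B : Finset (Fin N) → Fin N → Fin N → Finset (Fin N) := fun e a v =>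
    Finset.univ.filter fun b => ∃ v' ∈ e, v' ≠ v ∧ v' ≠ a ∧ (∃ f ∈ E, f ≠ e ∧ v ∈ f ∧ b ∈ f ∧ b ≠ v) ∧
      (∃ f ∈ E, f ≠ e ∧ v' ∈ f ∧ b ∈ f ∧ b ≠ v')
  let D : Finset (Σ _ : Finset (Fin N), Σ _ : Fin N × Fin N, Fin N) :=
    E.sigma fun e => e.offDiag.sigma fun p => B e p.1 p.2
  have cardD : D.card ≤ 36 * E.card := by
    simp only [D]
    rw [Finset.card_sigma, mul_comm, ← smul_eq_mul]
    refine Finset.sum_le_card_nsmul _ _ _ fun e he => ?_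
    rw [Finset.card_sigma]
    have : e.offDiag.card = 6 := by rw [Finset.offDiag_card, hcard e he]
    calc _ ≤ e.offDiag.card • 6 := by
          refine Finset.sum_le_card_nsmul _ _ _ ?_
          rintro ⟨a, v⟩ hp
          rw [Finset.mem_offDiag] at hp
          refine low_B hcard hlin hC4 _ e he a v hp.1 hp.2.1 hp.2.2 ?_
          intro b hb
          simpa [B] using hb
      _ = 36 := by rw [this]; rfl
  let bad1 := T.filter fun t => (⟨t.2.1.1, ⟨(t.2.2.1, t.1), t.2.2.2⟩⟩ : Σ _ : Finset (Fin N), Σ _ : Fin N × Fin N, Fin N) ∈ D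
  let bad2 := T.filter fun t => (⟨t.2.1.2, ⟨(t.2.2.2, t.1), t.2.2.1⟩⟩ : Σ _ : Finset (Fin N), Σ _ : Fin N × Fin N, Fin N) ∈ D
  have hbad1 : bad1.card ≤ D.card := by
    refine Finset.card_le_card_of_injOn (fun t => ⟨t.2.1.1, ⟨(t.2.2.1, t.1), t.2.2.2⟩⟩) ?_ ?_
    · intro t ht; exact (Finset.mem_filter.1 ht).2
    · rintro ⟨v, ⟨⟨e, f⟩, ⟨a, b⟩⟩⟩ ht ⟨v', ⟨⟨e', f'⟩, ⟨a', b'⟩⟩⟩ ht' heq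
      have h1 := (memT _ _ _ _ _).1 (Finset.mem_filter.1 ht).1
      have h2 := (memT _ _ _ _ _).1 (Finset.mem_filter.1 ht').1
      simp only [Sigma.mk.injEq, heq_eq_eq, Prod.mk.injEq] at heq
      obtain ⟨rfl, ⟨rfl, rfl⟩, rfl⟩ := heq
      have : f = f' := hlin _ h1.2.1.1 _ h2.2.1.1 v b h1.2.2.2.2.1.symm h1.2.1.2 h1.2.2.2.2.2 h2.2.1.2 h2.2.2.2.2.2
      rw [this]
  have hbad2 : bad2.card ≤ D.card := by
    refine Finset.card_le_card_of_injOn (fun t => ⟨t.2.1.2, ⟨(t.2.2.2, t.1), t.2.2.1⟩⟩) ?_ ?_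
    · intro t ht; exact (Finset.mem_filter.1 ht).2
    · rintro ⟨v, ⟨⟨e, f⟩, ⟨a, b⟩⟩⟩ ht ⟨v', ⟨⟨e', f'⟩, ⟨a', b'⟩⟩⟩ ht' heq
      have h1 := (memT _ _ _ _ _).1 (Finset.mem_filter.1 ht).1
      have h2 := (memT _ _ _ _ _).1 (Finset.mem_filter.1 ht').1
      simp only [Sigma.mk.injEq, heq_eq_eq, Prod.mk.injEq] at heq
      obtain ⟨rfl, ⟨rfl, rfl⟩, rfl⟩ := heq
      have : e = e' := hlin _ h1.1.1 _ h2.1.1 v a h1.2.2.2.1.1.symm h1.1.2 h1.2.2.2.1.2 h2.1.2 h2.2.2.2.1.2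
      rw [this]
  have hgood : (T \ (bad1 ∪ bad2)).card ≤ N ^ 2 := by
    have : (Finset.univ : Finset (Fin N × Fin N)).card = N ^ 2 := by
      simp [sq]
    rw [← this]
    refine Finset.card_le_card_of_injOn (fun t => t.2.2) (fun _ _ => Finset.mem_coe.2 (Finset.mem_univ _)) ?_
    rintro ⟨v, ⟨⟨e, f⟩, ⟨a, b⟩⟩⟩ ht ⟨v', ⟨⟨e', f'⟩, ⟨a', b'⟩⟩⟩ ht' heq
    simp only [Prod.mk.injEq] at heq
    obtain ⟨rfl, rfl⟩ := heq
    have ht := Finset.mem_sdiff.1 ht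
    have ht' := Finset.mem_sdiff.1 ht'
    have hnb := ht.2
    have htT := ht.1
    obtain ⟨⟨he, hve⟩, ⟨hf, hvf⟩, hef, ⟨hav, hae⟩, ⟨hbv, hbf⟩⟩ := (memT _ _ _ _ _).1 ht.1
    obtain ⟨⟨he', hve'⟩, ⟨hf', hvf'⟩, hef', ⟨hav', hae'⟩, ⟨hbv', hbf'⟩⟩ := (memT _ _ _ _ _).1 ht'.1
    by_cases hvv : v = v'
    · subst hvv
      have h1 : e = e' := hlin _ he _ he' a v hav hae hve hae' hve'
      have h2 : f = f' := hlin _ hf _ hf' b v hbv hbf hvf hbf' hvf'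
      rw [h1, h2]
    exfalso
    have hab : a ≠ b := by
      rintro rfl
      exact hef (hlin _ he _ hf a v hav hae hve hbf hvf)
    have hee : e ≠ e' := by
      rintro rfl
      apply hnb
      refine Finset.mem_union_left _ (Finset.mem_filter.2 ⟨htT, ?_⟩)
      simp only [D, Finset.mem_sigma, Finset.mem_offDiag]
      refine ⟨he, ⟨hae, hve, hav⟩, ?_⟩
      simp only [B, Finset.mem_filter, Finset.mem_univ, true_and]
      exact ⟨v', hve', Ne.symm hvv, hav'.symm, ⟨f, hf, hef.symm, hvf, hbf, hbv⟩, ⟨f', hf', hef'.symm, hvf', hbf', hbv'⟩⟩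
    have hff : f ≠ f' := by
      rintro rfl
      apply hnb
      refine Finset.mem_union_right _ (Finset.mem_filter.2 ⟨htT, ?_⟩)
      simp only [D, Finset.mem_sigma, Finset.mem_offDiag]
      refine ⟨hf, ⟨hbf, hvf, hbv⟩, ?_⟩
      simp only [B, Finset.mem_filter, Finset.mem_univ, true_and]
      exact ⟨v', hvf', Ne.symm hvv, hbv'.symm, ⟨e, he, hef, hve, hae, hav⟩, ⟨e', he', hef', hve', hae', hav'⟩⟩
    refine hC4 a v b v' hav hab hav' hbv.symm hvv hbv' e he f hf f' hf' e' he' hef ?_ hee hff ?_ hef'.symm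
      hae hve hvf hbf hbf' hvf' hve' hae'
    · rintro rfl; exact hef (hlin _ he _ hf v b hbv.symm hve hbf' hvf hbf)
    · rintro rfl; exact hef (hlin _ he _ hf a v hav hae hve hae' hvf)
  have hT : T.card ≤ N ^ 2 + 72 * E.card := by
    have h1 : T ⊆ (T \ (bad1 ∪ bad2)) ∪ (bad1 ∪ bad2) := by
      intro t ht; simp only [Finset.mem_union, Finset.mem_sdiff]; tauto
    have h2 := Finset.card_le_card h1
    have h3 := Finset.card_union_le (T \ (bad1 ∪ bad2)) (bad1 ∪ bad2)
    have h4 := Finset.card_union_le bad1 bad2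
    omega
  have hTR : (T.card : ℝ) = 4 * ∑ v, (h v : ℝ) ^ 2 - 12 * E.card := by
    rw [cardT]
    push_cast
    have : ∀ v, ((h v * h v - h v : ℕ) : ℝ) = (h v : ℝ) ^ 2 - h v := by
      intro v
      rw [Nat.cast_sub (Nat.le_mul_self _)]; push_cast; ring
    simp_rw [this]
    rw [← Finset.mul_sum, Finset.sum_sub_distrib, ← Nat.cast_sum, sumh]
    push_cast; ring
  have hCS := sq_sum_le_card_mul_sum_sq (s := (Finset.univ : Finset (Fin N))) (f := fun v => (h v : ℝ))
  rw [← Nat.cast_sum, sumh] at hCS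
  simp only [Finset.card_univ, Fintype.card_fin] at hCS
  push_cast at hCS
  have hT' : (T.card : ℝ) ≤ (N : ℝ) ^ 2 + 72 * E.card := by exact_mod_cast hT
  have hN : (0 : ℝ) ≤ N := Nat.cast_nonneg N
  have : (N : ℝ) * (4 * ∑ v, (h v : ℝ) ^ 2) ≤ N * ((N : ℝ) ^ 2 + 84 * E.card) :=
    mul_le_mul_of_nonneg_left (by linarith) hN
  nlinarith
end lower


lemma low_lin {N : ℕ} {GE : Finset (Finset (Fin N))} (hU : IsUniform 3 GE)
    (hF : ∀ H ∈ bergeCycles 3 2 ∪ bergeCycles 3 4, ¬ HypContains H.2 GE) :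
    ∀ e ∈ GE, ∀ f ∈ GE, ∀ a b, a ≠ b → a ∈ e → b ∈ e → a ∈ f → b ∈ f → e = f := by
  intro e he f hf a b hab hae hbe haf hbf
  by_contra hne
  refine hF ⟨N, {e, f}⟩ (Or.inl ?_) ⟨id, Function.injective_id, ?_⟩
  · refine ⟨?_, (![a, b] : Fin 2 → Fin N), (![e, f] : Fin 2 → Finset (Fin N)), ?_, ?_, ?_, ?_, ?_⟩
    · change ∀ g ∈ ({e, f} : Finset (Finset (Fin N))), g.card = 3
      intro g hg
      simp only [Finset.mem_insert, Finset.mem_singleton] at hg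
      rcases hg with rfl | rfl
      · exact hU _ he
      · exact hU _ hf
    · intro (i : Fin 2) (j : Fin 2) h
      fin_cases i <;> fin_cases j <;> first | rfl | simp_all
    · intro (i : Fin 2) (j : Fin 2) h
      fin_cases i <;> fin_cases j <;> first | rfl | simp_all
    · intro (i : Fin 2)
      fin_cases i <;> simp
    · change ∀ g ∈ ({e, f} : Finset (Finset (Fin N))), ∃ i : Fin 2, (![e, f] : Fin 2 → Finset (Fin N)) i = g
      intro g hg
      simp only [Finset.mem_insert, Finset.mem_singleton] at hg
      rcases hg with rfl | rfl
      · exact ⟨(0 : Fin 2), rfl⟩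
      · exact ⟨(1 : Fin 2), rfl⟩
    · have : ∀ i : Fin 2, ({(![a, b] : Fin 2 → Fin N) i, (![a, b] : Fin 2 → Fin N) (i + 1)} :
        Finset (Fin N)) ⊆ (![e, f] : Fin 2 → Finset (Fin N)) i := by
        intro i
        fin_cases i <;> simp [Finset.insert_subset_iff, *]
      exact this
  · change ∀ g ∈ ({e, f} : Finset (Finset (Fin N))), g.image id ∈ GE
    intro g hg
    simp only [Finset.mem_insert, Finset.mem_singleton] at hg
    rcases hg with rfl | rfl <;> simpa

lemma low_C4 {N : ℕ} {GE : Finset (Finset (Fin N))} (hU : IsUniform 3 GE)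
    (hF : ∀ H ∈ bergeCycles 3 2 ∪ bergeCycles 3 4, ¬ HypContains H.2 GE) :
    ∀ a v b w : Fin N, a ≠ v → a ≠ b → a ≠ w → v ≠ b → v ≠ w → b ≠ w →
    ∀ e1 ∈ GE, ∀ e2 ∈ GE, ∀ e3 ∈ GE, ∀ e4 ∈ GE, e1 ≠ e2 → e1 ≠ e3 → e1 ≠ e4 → e2 ≠ e3 →
    e2 ≠ e4 → e3 ≠ e4 → a ∈ e1 → v ∈ e1 → v ∈ e2 → b ∈ e2 → b ∈ e3 → w ∈ e3 → w ∈ e4 →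
    a ∈ e4 → False := by
  intro a v b w h1 h2 h3 h4 h5 h6 e1 he1 e2 he2 e3 he3 e4 he4 g1 g2 g3 g4 g5 g6 k1 k2 k3 k4 k5 k6 k7 k8
  refine hF ⟨N, {e1, e2, e3, e4}⟩ (Or.inr ?_) ⟨id, Function.injective_id, ?_⟩
  · refine ⟨?_, (![a, v, b, w] : Fin 4 → Fin N), (![e1, e2, e3, e4] : Fin 4 → Finset (Fin N)),
      ?_, ?_, ?_, ?_, ?_⟩
    · change ∀ g ∈ ({e1, e2, e3, e4} : Finset (Finset (Fin N))), g.card = 3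
      intro g hg
      simp only [Finset.mem_insert, Finset.mem_singleton] at hg
      rcases hg with rfl | rfl | rfl | rfl
      · exact hU _ he1
      · exact hU _ he2
      · exact hU _ he3
      · exact hU _ he4
    · intro (i : Fin 4) (j : Fin 4) h
      clear k1 k2 k3 k4 k5 k6 k7 k8
      fin_cases i <;> fin_cases j <;> first | rfl | simp_all
    · intro (i : Fin 4) (j : Fin 4) h
      clear k1 k2 k3 k4 k5 k6 k7 k8
      fin_cases i <;> fin_cases j <;> first | rfl | simp_all
    · intro (i : Fin 4)
      fin_cases i <;> simp
    · change ∀ g ∈ ({e1, e2, e3, e4} : Finset (Finset (Fin N))), ∃ i : Fin 4, (![e1, e2, e3, e4] : Fin 4 → Finset (Fin N)) i = g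
      intro g hg
      simp only [Finset.mem_insert, Finset.mem_singleton] at hg
      rcases hg with rfl | rfl | rfl | rfl
      · exact ⟨(0 : Fin 4), rfl⟩
      · exact ⟨(1 : Fin 4), rfl⟩
      · exact ⟨(2 : Fin 4), rfl⟩
      · exact ⟨(3 : Fin 4), rfl⟩
    · have : ∀ i : Fin 4, ({(![a, v, b, w] : Fin 4 → Fin N) i,
        (![a, v, b, w] : Fin 4 → Fin N) (i + 1)} :
        Finset (Fin N)) ⊆ (![e1, e2, e3, e4] : Fin 4 → Finset (Fin N)) i := by
        intro i
        fin_cases i <;> simp [Finset.insert_subset_iff, *]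
      exact this
  · change ∀ g ∈ ({e1, e2, e3, e4} : Finset (Finset (Fin N))), g.image id ∈ GE
    intro g hg
    simp only [Finset.mem_insert, Finset.mem_singleton] at hg
    rcases hg with rfl | rfl | rfl | rfl <;> simpa

lemma low_count {N r k : ℕ} {GE : Finset (Finset (Fin N))} (hU : IsUniform 3 GE)
    (hR : IsRKHyper GE 3 r k) : r.choose 3 ≤ GE.card ∧ N ≤ r * k := by
  obtain ⟨P, hP, hk, hS⟩ := hR
  have hex : ∀ S : Finset (Fin r), ∃ e, S.card = 3 → e ∈ GE ∧ ∀ i ∈ S, (e ∩ P i).card = 1 := by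
    intro S
    by_cases h : S.card = 3
    · obtain ⟨e, he, h2⟩ := hS S h
      exact ⟨e, fun _ => ⟨he, h2⟩⟩
    · exact ⟨∅, fun h' => absurd h' h⟩
  choose F hFe using hex
  constructor
  · have : ((Finset.univ : Finset (Fin r)).powersetCard 3).card ≤ GE.card := by
      apply Finset.card_le_card_of_injOn F
      · intro S hS'
        have := (Finset.mem_powersetCard.1 hS').2
        exact (hFe S this).1
      · intro S hS1 T hT1 hST
        have hS3 := (Finset.mem_powersetCard.1 hS1).2
        have hT3 := (Finset.mem_powersetCard.1 hT1).2
        have e1 := hFe S hS3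
        have e2 := hFe T hT3
        rw [← hST] at e2
        have hsub : T ∪ S ⊆ S := by
          apply subset_of_eq
          symm
          apply Finset.eq_of_subset_of_card_le Finset.subset_union_right
          have hd : ((T ∪ S).biUnion fun i => F S ∩ P i).card = ∑ i ∈ T ∪ S, (F S ∩ P i).card := by
            apply Finset.card_biUnion
            intro i _ j _ hij
            rw [Function.onFun, Finset.disjoint_left]
            intro v hv hv'
            exact hij ((hP v).unique (Finset.mem_inter.1 hv).2 (Finset.mem_inter.1 hv').2)
          have hle : ((T ∪ S).biUnion fun i => F S ∩ P i).card ≤ (F S).card := by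
            apply Finset.card_le_card
            intro v hv
            obtain ⟨i, _, hi⟩ := Finset.mem_biUnion.1 hv
            exact (Finset.mem_inter.1 hi).1
          have hs : ∑ i ∈ T ∪ S, (F S ∩ P i).card = (T ∪ S).card := by
            rw [Finset.card_eq_sum_ones]
            apply Finset.sum_congr rfl
            intro i hi
            rcases Finset.mem_union.1 hi with h | h
            · exact e2.2 i h
            · exact e1.2 i h
          have := hU _ e1.1
          omega
        have : T ⊆ S := Finset.subset_union_left.trans hsub
        exact (Finset.eq_of_subset_of_card_le this (by omega)).symm
    simpa using this
  · have : (Finset.univ : Finset (Fin N)) ⊆ Finset.univ.biUnion P := by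
      intro v _
      obtain ⟨i, hi, _⟩ := hP v
      exact Finset.mem_biUnion.2 ⟨i, Finset.mem_univ _, hi⟩
    have h2 := (Finset.card_le_card this).trans Finset.card_biUnion_le
    have h3 : ∑ i, (P i).card ≤ ∑ _i : Fin r, k := Finset.sum_le_sum fun i _ => hk i
    simp at h2 h3
    omega

lemma low_final {N r k : ℕ} {GE : Finset (Finset (Fin N))} {ε : ℝ} (hε : 0 < ε) (hU : IsUniform 3 GE)
    (hF : ∀ H ∈ bergeCycles 3 2 ∪ bergeCycles 3 4, ¬ HypContains H.2 GE)
    (hR : IsRKHyper GE 3 r k) (h20 : 20 ≤ r) (hr : 20 / ε < r) : (1 - ε) * r ≤ k := by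
  obtain ⟨hc, hN⟩ := low_count hU hR
  have hm := low_main hU (low_lin hU hF) (low_C4 hU hF)
  by_contra! hlt
  have hr0 : (20 : ℝ) ≤ r := by exact_mod_cast h20
  have hk0 : (0 : ℝ) ≤ k := Nat.cast_nonneg k
  have hN' : (N : ℝ) ≤ r * k := by exact_mod_cast hN
  have hN0 : (0 : ℝ) ≤ N := Nat.cast_nonneg N
  have hε1 : 0 < 1 - ε := by
    by_contra! h
    nlinarith
  have hN2 : (N : ℝ) ≤ (1 - ε) * r ^ 2 := by nlinarith
  have hM : (r : ℝ) * (r - 1) * (r - 2) ≤ 6 * GE.card := by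
    have : r * (r - 1) * (r - 2) = 6 * r.choose 3 := by
      have h := Nat.descFactorial_eq_factorial_mul_choose r 3
      simp [Nat.descFactorial, Nat.factorial] at h
      rw [← h]; ring
    have h2 : r * (r - 1) * (r - 2) ≤ 6 * GE.card := by omega
    have h3 : ((r * (r - 1) * (r - 2) : ℕ) : ℝ) ≤ 6 * GE.card := by exact_mod_cast h2
    rwa [Nat.cast_mul, Nat.cast_mul, Nat.cast_sub (by omega), Nat.cast_sub (by omega),
      Nat.cast_one, Nat.cast_ofNat] at h3
  set R : ℝ := (r : ℝ)
  set m : ℝ := 6 * (GE.card : ℝ) with hmdef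
  have hεR : 20 < ε * R := by rwa [div_lt_iff₀ hε, mul_comm] at hr
  have hm3 : R ^ 3 - 3 * R ^ 2 ≤ m := by nlinarith
  have hmm : m * (m - 14 * N) ≤ N ^ 3 := by rw [hmdef]; nlinarith
  have hNR : (N : ℝ) ≤ R ^ 2 := by nlinarith [sq_nonneg R]
  have h1 : (R ^ 3 - 3 * R ^ 2) * (R ^ 3 - 17 * R ^ 2) ≤ m * (m - 14 * N) := by
    apply mul_le_mul hm3
    · linarith
    · nlinarith [sq_nonneg R]
    · nlinarith [sq_nonneg R]
  have h2 : (N : ℝ) ^ 3 ≤ (1 - ε) * R ^ 6 := by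
    have : (N : ℝ) ^ 2 ≤ (R ^ 2) ^ 2 := by gcongr
    calc (N : ℝ) ^ 3 = N * N ^ 2 := by ring
      _ ≤ ((1 - ε) * R ^ 2) * (R ^ 2) ^ 2 := by gcongr
      _ = _ := by ring
  have h3 : 0 < R ^ 5 := by positivity
  nlinarith [mul_lt_mul_of_pos_right hεR h3, pow_pos (by linarith : 0 < R) 4]


section upper
variable {r p : ℕ}

def upAdj (r p : ℕ) (u v : Fin r × ZMod p) : Prop :=
  u.1 ≠ v.1 ∧ u.2 + v.2 = ((u.1 : ℕ) : ZMod p) * ((v.1 : ℕ) : ZMod p)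

lemma upAdj_symm {u v : Fin r × ZMod p} (h : upAdj r p u v) : upAdj r p v u :=
  ⟨h.1.symm, by rw [add_comm, h.2, mul_comm]⟩

lemma up_cast_inj (hrp : r ≤ p) {i j : Fin r} (h : ((i : ℕ) : ZMod p) = ((j : ℕ) : ZMod p)) :
    i = j := by
  rw [ZMod.natCast_eq_natCast_iff'] at h
  rw [Nat.mod_eq_of_lt (i.2.trans_le hrp), Nat.mod_eq_of_lt (j.2.trans_le hrp)] at h
  exact Fin.ext h

lemma up_noC4 [Fact p.Prime] (hrp : r ≤ p) {a b c d : Fin r × ZMod p} (h1 : upAdj r p a b)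
    (h2 : upAdj r p b c) (h3 : upAdj r p c d) (h4 : upAdj r p d a) : a = c ∨ b = d := by
  have key : (((a.1 : ℕ) : ZMod p) - ((c.1 : ℕ) : ZMod p)) *
      (((b.1 : ℕ) : ZMod p) - ((d.1 : ℕ) : ZMod p)) = 0 := by
    linear_combination -h1.2 + h2.2 - h3.2 + h4.2
  rcases mul_eq_zero.1 key with h | h
  · left
    have h := up_cast_inj hrp (sub_eq_zero.1 h)
    refine Prod.ext h ?_
    have e1 := h1.2
    rw [h] at e1
    linear_combination e1 - h2.2
  · right
    have h := up_cast_inj hrp (sub_eq_zero.1 h)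
    refine Prod.ext h ?_
    have e1 := h2.2
    rw [h] at e1
    linear_combination e1 - h3.2

lemma up_exists [Fact p.Prime] (hp : p ≠ 2) (hr : r ≤ p) (hr3 : 3 ≤ r) :
    ∃ (N : ℕ) (GE : Finset (Finset (Fin N))),
    IsUniform 3 GE ∧ (∀ H ∈ bergeCycles 3 2 ∪ bergeCycles 3 4, ¬ HypContains H.2 GE) ∧
    IsRKHyper GE 3 r p := by
  classical
  let φ : Fin (Fintype.card (Fin r × ZMod p)) ≃ Fin r × ZMod p := (Fintype.equivFin _).symm
  have h20 : (2 : ZMod p) ≠ 0 := by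
    intro h
    have h' : ((2 : ℕ) : ZMod p) = 0 := by exact_mod_cast h
    rw [ZMod.natCast_eq_zero_iff] at h'
    have := (Nat.prime_dvd_prime_iff_eq Fact.out Nat.prime_two).1 h'
    exact hp this
  let GE : Finset (Finset (Fin (Fintype.card (Fin r × ZMod p)))) :=
    Finset.univ.filter fun e => e.card = 3 ∧ ∀ u ∈ e, ∀ v ∈ e, u ≠ v → upAdj r p (φ u) (φ v)
  have hGE : ∀ e, e ∈ GE ↔ e.card = 3 ∧ ∀ u ∈ e, ∀ v ∈ e, u ≠ v → upAdj r p (φ u) (φ v) := by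
    intro e; simp [GE]
  refine ⟨_, GE, fun e he => ((hGE e).1 he).1, ?_, ?_⟩
  · rintro ⟨n, H⟩ hH ⟨f, hf, hfE⟩
    have hadj : ∀ e ∈ H, ∀ u ∈ e, ∀ v ∈ e, u ≠ v → upAdj r p (φ (f u)) (φ (f v)) := by
      intro e he u hu v hv huv
      exact ((hGE _).1 (hfE e he)).2 _ (Finset.mem_image_of_mem f hu) _
        (Finset.mem_image_of_mem f hv) (hf.ne huv)
    have hφf : Function.Injective fun u => φ (f u) := φ.injective.comp hf
    rcases hH with hH | hH
    · obtain ⟨hu, v, e, hv, he, heH, -, hsub⟩ := hH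
      dsimp only at *
      have hv01 : v 0 ≠ v 1 := hv.ne (by decide)
      have he01 : e 0 ≠ e 1 := he.ne (by decide)
      have s0 := hsub 0
      have s1 := hsub 1
      rw [show (0 : ZMod 2) + 1 = 1 by decide] at s0
      rw [show (1 : ZMod 2) + 1 = 0 by decide] at s1
      have a0 : v 0 ∈ e 0 := s0 (by simp)
      have b0 : v 1 ∈ e 0 := s0 (by simp)
      have a1 : v 0 ∈ e 1 := s1 (by simp)
      have b1 : v 1 ∈ e 1 := s1 (by simp)
      have third : ∀ i : ZMod 2, v 0 ∈ e i → v 1 ∈ e i →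
          ∃ w, w ≠ v 0 ∧ w ≠ v 1 ∧ e i = {v 0, v 1, w} := by
        intro i h0 h1
        have hsub : ({v 0, v 1} : Finset (Fin n)) ⊆ e i := by
          simp [Finset.insert_subset_iff, h0, h1]
        have hc := Finset.card_sdiff_of_subset hsub
        rw [hu _ (heH i), Finset.card_pair hv01] at hc
        obtain ⟨w, hw⟩ := Finset.card_eq_one.1 hc
        have hw' : w ∈ e i \ {v 0, v 1} := by rw [hw]; simp
        simp only [Finset.mem_sdiff, Finset.mem_insert, Finset.mem_singleton, not_or] at hw'
        refine ⟨w, hw'.2.1, hw'.2.2, ?_⟩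
        rw [← Finset.union_sdiff_of_subset hsub, hw]
        ext y
        simp [or_assoc]
      obtain ⟨w0, p0, q0, r0⟩ := third 0 a0 b0
      obtain ⟨w1, p1, q1, r1⟩ := third 1 a1 b1
      have m0 : w0 ∈ e 0 := by rw [r0]; simp
      have m1 : w1 ∈ e 1 := by rw [r1]; simp
      rcases up_noC4 hr (hadj _ (heH 0) _ a0 _ m0 p0.symm) (hadj _ (heH 0) _ m0 _ b0 q0)
        (hadj _ (heH 1) _ b1 _ m1 q1.symm) (hadj _ (heH 1) _ m1 _ a1 p1) with h | h
      · exact hv01 (hφf h)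
      · have : w0 = w1 := hφf h
        exact he01 (by rw [r0, r1, this])
    · obtain ⟨hu, v, e, hv, he, heH, -, hsub⟩ := hH
      dsimp only at *
      have A : ∀ i j : ZMod 4, i + 1 = j → i ≠ j → upAdj r p (φ (f (v i))) (φ (f (v j))) := by
        rintro i _ rfl hij
        exact hadj _ (heH i) _ (hsub i (by simp)) _ (hsub i (by simp)) (hv.ne hij)
      rcases up_noC4 hr (A 0 1 (by decide) (by decide)) (A 1 2 (by decide) (by decide))
        (A 2 3 (by decide) (by decide)) (A 3 0 (by decide) (by decide)) with h | h
      · exact absurd (hv (hφf h)) (by decide)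
      · exact absurd (hv (hφf h)) (by decide)
  · refine ⟨fun i => Finset.univ.filter fun v => (φ v).1 = i, ?_, ?_, ?_⟩
    · intro v
      refine ⟨(φ v).1, by simp, ?_⟩
      intro j hj
      exact (Finset.mem_filter.1 hj).2.symm
    · intro i
      have : (Finset.univ.filter fun v => (φ v).1 = i).card ≤
          (Finset.univ : Finset (ZMod p)).card := by
        apply Finset.card_le_card_of_injOn (fun v => (φ v).2) (by simp)
        intro u hu v hv h
        simp at hu hv
        exact φ.injective (Prod.ext (hu.trans hv.symm) h)
      rwa [Finset.card_univ, ZMod.card] at this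
    · intro S hS
      obtain ⟨a, b, c, hab, hac, hbc, rfl⟩ := Finset.card_eq_three.1 hS
      let t : Fin r → ZMod p := fun i => ((i : ℕ) : ZMod p)
      let x : Fin r → Fin r → Fin r → Fin r × ZMod p :=
        fun a b c => (a, (t a * t b + t a * t c - t b * t c) / 2)
      have hx : ∀ a b c, a ≠ b → upAdj r p (x a b c) (x b a c) := by
        intro a b c h
        refine ⟨h, ?_⟩
        simp only [x]
        field_simp
        ring
      have hx' : ∀ a b c, x a b c = x a c b := by
        intro a b c
        simp only [x]
        congr 2
        ring
      have Aab := hx a b c hab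
      have Aac : upAdj r p (x a b c) (x c a b) := by rw [hx' a b c]; exact hx a c b hac
      have Abc : upAdj r p (x b a c) (x c a b) := by
        rw [hx' b a c, hx' c a b]; exact hx b c a hbc
      have n1 : φ.symm (x a b c) ≠ φ.symm (x b a c) := fun h =>
        hab (congrArg Prod.fst (φ.symm.injective h))
      have n2 : φ.symm (x a b c) ≠ φ.symm (x c a b) := fun h =>
        hac (congrArg Prod.fst (φ.symm.injective h))
      have n3 : φ.symm (x b a c) ≠ φ.symm (x c a b) := fun h =>
        hbc (congrArg Prod.fst (φ.symm.injective h))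
      refine ⟨{φ.symm (x a b c), φ.symm (x b a c), φ.symm (x c a b)}, ?_, ?_⟩
      · rw [hGE]
        refine ⟨Finset.card_eq_three.2 ⟨_, _, _, n1, n2, n3, rfl⟩, ?_⟩
        intro u hu v hv huv
        simp only [Finset.mem_insert, Finset.mem_singleton] at hu hv
        rcases hu with rfl | rfl | rfl <;> rcases hv with rfl | rfl | rfl <;>
          simp only [Equiv.apply_symm_apply] <;>
          first
          | exact absurd rfl huv
          | assumption
          | (apply upAdj_symm; assumption)
      · intro i hi
        simp only [Finset.mem_insert, Finset.mem_singleton] at hi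
        rw [Finset.card_eq_one]
        rcases hi with rfl | rfl | rfl
        · refine ⟨φ.symm (x i b c), ?_⟩
          ext v
          simp only [Finset.mem_inter, Finset.mem_insert, Finset.mem_singleton, Finset.mem_filter,
            Finset.mem_univ, true_and]
          constructor
          · rintro ⟨rfl | rfl | rfl, h⟩
            · rfl
            · simp [x] at h; exact absurd h.symm hab
            · simp [x] at h; exact absurd h.symm hac
          · rintro rfl
            simp [x]
        · refine ⟨φ.symm (x i a c), ?_⟩
          ext v
          simp only [Finset.mem_inter, Finset.mem_insert, Finset.mem_singleton, Finset.mem_filter,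
            Finset.mem_univ, true_and]
          constructor
          · rintro ⟨rfl | rfl | rfl, h⟩
            · simp [x] at h; exact absurd h hab
            · rfl
            · simp [x] at h; exact absurd h.symm hbc
          · rintro rfl
            simp [x]
        · refine ⟨φ.symm (x i a b), ?_⟩
          ext v
          simp only [Finset.mem_inter, Finset.mem_insert, Finset.mem_singleton, Finset.mem_filter,
            Finset.mem_univ, true_and]
          constructor
          · rintro ⟨rfl | rfl | rfl, h⟩
            · simp [x] at h; exact absurd h hac
            · simp [x] at h; exact absurd h hbc
            · rfl
          · rintro rfl
            simp [x]

end upper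

/-- For every `ε > 0`, for all sufficiently large `r`,
`(1−ε)·r ≤ f_3(r, {𝒞_2^{(3)}, 𝒞_4^{(3)}}) ≤ (1+ε)·r`. -/
theorem stmt9 (ε : ℝ) (hε : 0 < ε) :
    ∃ r₀ : ℕ, ∀ r : ℕ, r₀ ≤ r →
      (1 - ε) * (r : ℝ) ≤ (fHyper 3 r (bergeCycles 3 2 ∪ bergeCycles 3 4) : ℝ) ∧
      (fHyper 3 r (bergeCycles 3 2 ∪ bergeCycles 3 4) : ℝ) ≤ (1 + ε) * (r : ℝ) := by
  obtain ⟨X, hX⟩ := prime_gap hε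
  refine ⟨max (max ⌈X⌉₊ (⌈20 / ε⌉₊ + 1)) 20, fun r hr => ?_⟩
  have h20 : 20 ≤ r := (le_max_right _ _).trans hr
  have hrX : X ≤ r :=
    Nat.ceil_le.1 (((le_max_left _ _).trans (le_max_left _ _)).trans hr)
  have hrε : 20 / ε < r := by
    have h1 : ⌈20 / ε⌉₊ + 1 ≤ r := ((le_max_right _ _).trans (le_max_left _ _)).trans hr
    exact Nat.lt_of_ceil_lt (Nat.lt_of_succ_le h1)
  obtain ⟨p, hp, hrp, hpr⟩ := hX r hrX
  have hrp' : r ≤ p := by exact_mod_cast hrp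
  haveI : Fact p.Prime := ⟨hp⟩
  have hmem := up_exists (r := r) (p := p) (by omega) hrp' (by omega)
  constructor
  · have hs := Nat.sInf_mem (s := {k | ∃ (N : ℕ) (GE : Finset (Finset (Fin N))),
      IsUniform 3 GE ∧ (∀ H ∈ bergeCycles 3 2 ∪ bergeCycles 3 4, ¬ HypContains H.2 GE) ∧
        IsRKHyper GE 3 r k}) ⟨p, hmem⟩
    obtain ⟨N, GE, h1, h2, h3⟩ := hs
    exact low_final hε h1 h2 h3 h20 hrε
  · refine le_trans ?_ hpr
    have : fHyper 3 r (bergeCycles 3 2 ∪ bergeCycles 3 4) ≤ p := Nat.sInf_le hmem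
    exact_mod_cast this
end

section
/- For every integer t ≥ 2 there exists a constant C_t > 0 such that the following holds: if q is an even power of an odd prime, d is a positive integer dividing q − 1, and a ≤ h are positive integers with h·a = (q−1)/d, then f(q^{t−1}·a, K_{t, (t−1)!·d^{t−1} + 1}) ≤ a + h + C_t · h^{2/5}, where K_{s,t'} denotes the complete bipartite graph with parts of sizes s and t'. -/
open SimpleGraph

/-- `G` is an `(r,k)`-graph: its vertex set can be partitioned into `r` parts,
each of size at most `k`, with at least one edge between any two distinct parts. -/
def IsRKGraph {V : Type} [Fintype V] (G : SimpleGraph V) (r k : ℕ) : Prop :=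
  ∃ P : Fin r → Finset V,
    (∀ v : V, ∃! i, v ∈ P i) ∧
    (∀ i, (P i).card ≤ k) ∧
    ∀ i j : Fin r, i ≠ j → ∃ u ∈ P i, ∃ w ∈ P j, G.Adj u w

/-- `G` contains a subgraph isomorphic to `H`. -/
def ContainsSub {W V : Type} (H : SimpleGraph W) (G : SimpleGraph V) : Prop :=
  ∃ f : H →g G, Function.Injective f

/-- `f(r,H)`: the minimum `k` for which there exists an `H`-free `(r,k)`-graph. -/
noncomputable def fGraph {W : Type} (H : SimpleGraph W) (r : ℕ) : ℕ :=
  sInf {k | ∃ (n : ℕ) (G : SimpleGraph (Fin n)), ¬ ContainsSub H G ∧ IsRKGraph G r k}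


section
open MvPolynomial

lemma val_integral {K L ι κ : Type} [Field K] [Field L] [Algebra K L] [Fintype ι] [Fintype κ]
    (hcard : Fintype.card κ ≤ Fintype.card ι) (c : ι → κ → K)
    (hc : ∀ j, Function.Injective fun i => c i j) (x : κ → L) (V : ValuationSubring L)
    (hK : ∀ a : K, algebraMap K L a ∈ V)
    (hf : ∀ i, ∏ j, (x j - algebraMap K L (c i j)) ∈ V) (j0 : κ) : x j0 ∈ V := by
  classical
  by_contra hj0
  have hj : 1 < V.valuation (x j0) := by
    rw [← not_le, ValuationSubring.valuation_le_one_iff]; exact hj0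
  have hKv : ∀ a : K, V.valuation (algebraMap K L a) ≤ 1 := fun a =>
    (ValuationSubring.valuation_le_one_iff _ _).2 (hK a)
  have hbig : ∀ i, V.valuation (x j0 - algebraMap K L (c i j0)) = V.valuation (x j0) := fun i =>
    Valuation.map_sub_eq_of_lt_left _ (lt_of_le_of_lt (hKv _) hj)
  have hk : ∀ i, ∃ k, V.valuation (x k - algebraMap K L (c i k)) < 1 := by
    intro i
    by_contra! hcon
    have h1 := (ValuationSubring.valuation_le_one_iff V _).2 (hf i)
    rw [map_prod, ← Finset.mul_prod_erase _ _ (Finset.mem_univ j0), hbig] at h1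
    have h2 : 1 ≤ ∏ k ∈ Finset.univ.erase j0, V.valuation (x k - algebraMap K L (c i k)) :=
      Finset.one_le_prod' fun k _ => hcon k
    exact absurd h1 (not_le.2 (lt_of_lt_of_le hj (le_mul_of_one_le_right' h2)))
  choose k hk using hk
  have hinj : Function.Injective k := by
    intro i i' hii
    by_contra hne
    have h1 := hk i
    have h2 := hk i'
    rw [← hii] at h2
    have h3 : V.valuation (algebraMap K L (c i (k i) - c i' (k i))) < 1 := by
      have := Valuation.map_sub_lt V.valuation h2 h1
      simpa using this
    have hne' : c i (k i) - c i' (k i) ≠ 0 := sub_ne_zero.2 fun h => hne (hc (k i) h)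
    have h4 := hKv (c i (k i) - c i' (k i))⁻¹
    have h5 : V.valuation (algebraMap K L (c i (k i) - c i' (k i))) *
        V.valuation (algebraMap K L (c i (k i) - c i' (k i))⁻¹) = 1 := by
      rw [← map_mul, ← map_mul, mul_inv_cancel₀ hne', map_one, map_one]
    have : V.valuation (algebraMap K L (c i (k i) - c i' (k i))) *
        V.valuation (algebraMap K L (c i (k i) - c i' (k i))⁻¹) < 1 :=
      lt_of_le_of_lt (mul_le_of_le_one_right' h4) h3
    exact absurd h5 this.ne
  have : Function.Surjective k := by
    have : Function.Bijective k := (Fintype.bijective_iff_injective_and_card k).2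
      ⟨hinj, le_antisymm (Fintype.card_le_of_injective k hinj) hcard⟩
    exact this.2
  obtain ⟨i, hi⟩ := this j0
  have := hk i
  rw [hi, hbig] at this
  exact absurd this (not_lt.2 hj.le)

/-- `J` has codimension at most `N`. -/
def Sp (K : Type) {B : Type} [Field K] [CommRing B] [Algebra K B] (J : Ideal B) (N : ℕ) : Prop :=
  ∃ e : Finset B, e.card ≤ N ∧ ∀ b : B, ∃ s ∈ Submodule.span K (e : Set B), b - s ∈ J

section
variable {K B : Type} [Field K] [CommRing B] [Algebra K B]

lemma Sp_top : Sp K (⊤ : Ideal B) 0 := ⟨∅, by simp, fun b => ⟨0, by simp, by simp⟩⟩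

lemma Sp_mul (J : Ideal B) (g h : B) (N M : ℕ) (h1 : Sp K (J ⊔ Ideal.span {g}) N)
    (h2 : Sp K (J ⊔ Ideal.span {h}) M) : Sp K (J ⊔ Ideal.span {g * h}) (N + M) := by
  classical
  obtain ⟨e, he, h1⟩ := h1
  obtain ⟨e', he', h2⟩ := h2
  refine ⟨e ∪ e'.image (fun x => g * x), ?_, ?_⟩
  · exact (Finset.card_union_le _ _).trans (add_le_add he (Finset.card_image_le.trans he'))
  intro b
  obtain ⟨s, hs, hb⟩ := h1 b
  rw [sup_comm, Ideal.mem_span_singleton_sup] at hb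
  obtain ⟨b', j, hj, hb⟩ := hb
  obtain ⟨s', hs', hb'⟩ := h2 b'
  rw [sup_comm, Ideal.mem_span_singleton_sup] at hb'
  obtain ⟨b'', j', hj', hb'⟩ := hb'
  refine ⟨s + g * s', ?_, ?_⟩
  · apply Submodule.add_mem
    · exact Submodule.span_mono (by simp) hs
    · have : g * s' ∈ (Submodule.span K (e' : Set B)).map (LinearMap.mulLeft K g) :=
        ⟨s', hs', rfl⟩
      rw [Submodule.map_span] at this
      refine Submodule.span_mono ?_ this
      intro y hy
      simp only [Finset.coe_union, Finset.coe_image]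
      exact Or.inr hy
  · rw [sup_comm, Ideal.mem_span_singleton_sup]
    refine ⟨b'', j + g * j', J.add_mem hj (J.mul_mem_left _ hj'), ?_⟩
    linear_combination hb + g * hb'

lemma Sp_prod {κ : Type} (s : Finset κ) (J : Ideal B) (g : κ → B) (N : κ → ℕ)
    (h : ∀ j ∈ s, Sp K (J ⊔ Ideal.span {g j}) (N j)) :
    Sp K (J ⊔ Ideal.span {∏ j ∈ s, g j}) (∑ j ∈ s, N j) := by
  classical
  induction s using Finset.induction_on with
  | empty => simpa using Sp_top
  | insert a s ha ih =>
    rw [Finset.prod_insert ha, Finset.sum_insert ha]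
    exact Sp_mul _ _ _ _ _ (h a (by simp)) (ih fun j hj => h j (by simp [hj]))
end

lemma Sp_main {K ι κ : Type} [Field K] [Fintype κ] [DecidableEq κ] [DecidableEq ι]
    (c : ι → κ → K)
    (hc : ∀ j, Function.Injective fun i => c i j) :
    ∀ (n : ℕ) (s : Finset ι) (u : Finset κ) (J : Ideal (MvPolynomial κ K)),
      s.card = n → u.card = n →
      (∀ j, j ∉ u → ∃ k, k ∉ s ∧ (X j - C (c k j) : MvPolynomial κ K) ∈ J) →
      Sp K (J ⊔ Ideal.span ((fun i => ∏ j, (X j - C (c i j) : MvPolynomial κ K)) '' s))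
        n.factorial := by
  intro n
  induction n with
  | zero =>
    intro s u J hs hu h
    rw [Finset.card_eq_zero] at hs hu
    subst hs hu
    refine ⟨{1}, by simp, fun b => ?_⟩
    simp only [Finset.coe_singleton, Finset.coe_empty, Set.image_empty, Ideal.span_empty, sup_bot_eq]
    simp only [Submodule.mem_span_singleton]
    choose k hk using fun j => h j (by simp)
    refine ⟨_, ⟨MvPolynomial.eval (fun j => c (k j) j) b, rfl⟩, ?_⟩
    rw [← Ideal.Quotient.eq]
    have : (Ideal.Quotient.mk J) = (Ideal.Quotient.mk J).comp
        ((C : K →+* MvPolynomial κ K).comp (MvPolynomial.eval (fun j => c (k j) j))) := by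
      apply MvPolynomial.ringHom_ext
      · intro r; simp
      · intro j
        simp only [RingHom.comp_apply, eval_X]
        rw [Ideal.Quotient.eq]
        exact (hk j).2
    rw [MvPolynomial.smul_eq_C_mul, mul_one]
    exact congrArg (fun f => f b) this
  | succ n ih =>
    intro s u J hs hu h
    obtain ⟨i, hi⟩ : s.Nonempty := by rw [← Finset.card_pos]; omega
    have key := Sp_prod (K := K) (Finset.univ : Finset κ)
      (J ⊔ Ideal.span ((fun i => ∏ j, (X j - C (c i j) : MvPolynomial κ K)) '' (s.erase i)))
      (fun j => X j - C (c i j)) (fun j => if j ∈ u then n.factorial else 0) ?_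
    · have h1 : ∑ j, (if j ∈ u then n.factorial else 0) = (n+1).factorial := by
        simp [Finset.sum_ite_mem, hu, Nat.factorial_succ]
      rw [h1, sup_assoc, ← Ideal.span_union] at key
      convert key using 3
      ext y
      simp only [Set.mem_image, Finset.mem_coe, Finset.coe_erase, Set.mem_union, Set.mem_sdiff,
        Set.mem_singleton_iff]
      constructor
      · rintro ⟨k, hk, rfl⟩
        by_cases hki : k = i
        · right; rw [hki]
        · left; exact ⟨k, ⟨hk, hki⟩, rfl⟩
      · rintro (⟨k, hk, rfl⟩ | rfl)
        · exact ⟨k, hk.1, rfl⟩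
        · exact ⟨i, hi, rfl⟩
    · intro j _
      by_cases hj : j ∈ u
      · simp only [hj, if_true]
        rw [sup_right_comm]
        refine ih (s.erase i) (u.erase j) _ ?_ ?_ ?_
        · rw [Finset.card_erase_of_mem hi]; omega
        · rw [Finset.card_erase_of_mem hj]; omega
        · intro j' hj'
          by_cases hjj : j' = j
          · subst hjj
            exact ⟨i, by simp, Ideal.mem_sup_right (Ideal.subset_span rfl)⟩
          · have : j' ∉ u := fun hu => hj' (Finset.mem_erase.2 ⟨hjj, hu⟩)
            obtain ⟨k, hk, hk2⟩ := h j' this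
            exact ⟨k, fun hks => hk (Finset.mem_of_mem_erase hks), Ideal.mem_sup_left hk2⟩
      · simp only [hj, if_false]
        obtain ⟨k, hk, hk2⟩ := h j hj
        convert Sp_top (K := K) (B := MvPolynomial κ K)
        rw [Ideal.eq_top_iff_one]
        have hne : c k j - c i j ≠ 0 := sub_ne_zero.2 fun h => hk ((hc j h) ▸ hi)
        have e1 : (X j - C (c i j) : MvPolynomial κ K) - (X j - C (c k j)) = C (c k j - c i j) := by
          rw [C_sub]; ring
        have e2 : (1 : MvPolynomial κ K) = C (c k j - c i j)⁻¹ *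
            ((X j - C (c i j) : MvPolynomial κ K) - (X j - C (c k j))) := by
          rw [e1, ← C_mul, inv_mul_cancel₀ hne, C_1]
        rw [e2]
        apply Ideal.mul_mem_left
        apply Ideal.sub_mem
        · exact Ideal.mem_sup_right (Ideal.subset_span rfl)
        · exact Ideal.mem_sup_left (Ideal.mem_sup_left hk2)

lemma minpoly_bound {A B : Type} [CommRing A] [IsDomain A] [IsIntegrallyClosed A] [CommRing B]
    [IsDomain B] [Algebra A B] [FaithfulSMul A B] [Module.Finite A B] (I : Ideal A) (hI : I ≠ ⊤)
    (e : Finset B)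
    (he : (⊤ : Submodule A B) ≤ Submodule.span A (e : Set B) ⊔ I • ⊤) (u : B) :
    ∃ P : Polynomial A, P.Monic ∧ P.natDegree ≤ e.card ∧ Polynomial.aeval u P = 0 := by
  have hu : IsIntegral A u := Algebra.IsIntegral.isIntegral u
  refine ⟨minpoly A u, minpoly.monic hu, ?_, minpoly.aeval A u⟩
  set M := Submodule.span A (e : Set B) with hM
  obtain ⟨r, hr, hr2⟩ := Submodule.exists_sub_one_mem_and_smul_eq_zero_of_fg_of_le_smul I
    (⊤ : Submodule A (B ⧸ M)) Module.Finite.fg_top (by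
      have := Submodule.map_mono (f := M.mkQ) he
      rw [Submodule.map_sup, Submodule.map_top, Submodule.map_smul'', Submodule.range_mkQ,
        Submodule.mkQ_map_self, bot_sup_eq, Submodule.map_top, Submodule.range_mkQ] at this
      exact this)
  have hr0 : r ≠ 0 := by
    rintro rfl
    apply hI
    rw [Ideal.eq_top_iff_one]
    have := I.neg_mem hr
    simpa using this
  have hrM : ∀ b : B, r • b ∈ M := by
    intro b
    have := hr2 (M.mkQ b) trivial
    rw [← map_smul] at this
    exact (Submodule.Quotient.mk_eq_zero M).1 this
  have hdep : ¬ LinearIndependent A (fun k : Fin (e.card + 1) => r • u ^ (k : ℕ)) := by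
    intro hli
    have := linearIndependent_le_span_aux' _ hli (e : Set B) (by
      rintro _ ⟨k, rfl⟩
      exact hrM _)
    simp at this
  rw [Fintype.not_linearIndependent_iff] at hdep
  obtain ⟨g, hg, k, hk⟩ := hdep
  have hsum : Polynomial.aeval u (∑ k : Fin (e.card + 1), Polynomial.monomial (k : ℕ) (g k)) = 0 := by
    have : r • Polynomial.aeval u (∑ k : Fin (e.card + 1), Polynomial.monomial (k : ℕ) (g k)) = 0 := by
      rw [← hg, map_sum, Finset.smul_sum]
      refine Finset.sum_congr rfl fun i _ => ?_
      rw [Polynomial.aeval_monomial, smul_smul, mul_comm, mul_smul, Algebra.smul_def (g i)]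
      rw [Algebra.smul_def, Algebra.smul_def]; ring
    rw [Algebra.smul_def] at this
    rcases mul_eq_zero.1 this with h | h
    · exact absurd ((FaithfulSMul.algebraMap_injective A B) (h.trans (map_zero _).symm)) hr0
    · exact h
  have hne : (∑ k : Fin (e.card + 1), Polynomial.monomial (k : ℕ) (g k)) ≠ 0 := by
    intro h0
    have := congrArg (fun p => Polynomial.coeff p (k : ℕ)) h0
    simp only [Polynomial.finsetSum_coeff, Polynomial.coeff_monomial, Fin.val_inj] at this
    simp at this
    exact hk this
  have hdvd := minpoly.isIntegrallyClosed_dvd hu hsum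
  have := Polynomial.natDegree_le_of_dvd hdvd hne
  refine this.trans ?_
  apply Polynomial.natDegree_sum_le_of_forall_le
  intro i _
  refine (Polynomial.natDegree_monomial_le _).trans ?_
  have := i.2; omega

theorem krs {K ι κ : Type} [Field K] [Fintype ι] [Fintype κ]
    (hcard : Fintype.card ι = Fintype.card κ) (c : ι → κ → K)
    (hc : ∀ j, Function.Injective fun i => c i j) (b : ι → K) (j0 : κ) (S : Finset K)
    (hS : ∀ z ∈ S, ∃ x : κ → K, x j0 = z ∧ ∀ i, ∏ j, (x j - c i j) = b i) :
    S.card ≤ (Fintype.card ι).factorial := by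
  classical
  let f : ι → MvPolynomial κ K := fun i => ∏ j, (X j - C (c i j))
  let algAB : Algebra (MvPolynomial ι K) (MvPolynomial κ K) := (aeval f).toAlgebra
  have hmap : ∀ p, algebraMap (MvPolynomial ι K) (MvPolynomial κ K) p = aeval f p := fun p => rfl
  have tower : IsScalarTower K (MvPolynomial ι K) (MvPolynomial κ K) :=
    IsScalarTower.of_algebraMap_eq fun r => by rw [hmap]; simp
  have hIntg : ∀ j, IsIntegral (Algebra.adjoin K (Set.range f)) (X j : MvPolynomial κ K) := by
    intro j
    let L := FractionRing (MvPolynomial κ K)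
    let φ : MvPolynomial κ K →+* L := algebraMap _ _
    let s : Set L := Set.range (algebraMap K L) ∪ Set.range (fun i => φ (f i))
    have hmem : φ (X j) ∈ (integralClosure (Subring.closure s) L).toSubring := by
      rw [← iInf_valuationSubring_superset, Subring.mem_iInf]
      rintro ⟨V, hV⟩
      refine val_integral hcard.ge c hc (fun j => φ (X j)) V (fun a => hV (Or.inl ⟨a, rfl⟩)) ?_ j
      intro i
      have h1 : φ (f i) ∈ V := hV (Or.inr ⟨i, rfl⟩)
      have h2 : φ (f i) = ∏ j, (φ (X j) - algebraMap K L (c i j)) := by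
        simp only [f, map_prod, map_sub]
        rfl
      rwa [← h2]
    have hI : IsIntegral (Subring.closure s) (φ (X j)) := hmem
    have hI2 : (φ.comp (algebraMap (Algebra.adjoin K (Set.range f)) (MvPolynomial κ K))).IsIntegralElem
        (φ (X j)) := by
      obtain ⟨p, hp, hp2⟩ := hI
      have hlift : ∀ y : Subring.closure s, (y : L) ∈
          (φ.comp (algebraMap (Algebra.adjoin K (Set.range f)) (MvPolynomial κ K))).range := by
        intro y
        refine (Subring.closure_le.2 ?_) y.2
        rintro _ (⟨a, rfl⟩ | ⟨i, rfl⟩)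
        · exact ⟨algebraMap K _ a, rfl⟩
        · exact ⟨⟨f i, Algebra.subset_adjoin ⟨i, rfl⟩⟩, rfl⟩
      have hq : (p.map (algebraMap (Subring.closure s) L)) ∈ Polynomial.lifts
          (φ.comp (algebraMap (Algebra.adjoin K (Set.range f)) (MvPolynomial κ K))) := by
        rw [Polynomial.lifts_iff_coeff_lifts]
        intro n
        rw [Polynomial.coeff_map]
        exact hlift _
      obtain ⟨q, hq1, -, hq3⟩ := Polynomial.lifts_and_natDegree_eq_and_monic hq (hp.map _)
      refine ⟨q, hq3, ?_⟩
      rw [← Polynomial.eval_map, hq1, Polynomial.eval_map]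
      exact hp2
    obtain ⟨q, hq, hq2⟩ := hI2
    refine ⟨q, hq, ?_⟩
    apply IsFractionRing.injective (MvPolynomial κ K) L
    rw [map_zero, Polynomial.hom_eval₂]
    exact hq2
  have hIntgAlg : Algebra.IsIntegral (Algebra.adjoin K (Set.range f)) (MvPolynomial κ K) := by
    constructor
    intro p
    induction p using MvPolynomial.induction_on with
    | C a => exact isIntegral_algebraMap (R := Algebra.adjoin K (Set.range f)) (x := algebraMap K _ a)
    | add p q hp hq => exact hp.add hq
    | mul_X p n hp => exact hp.mul (hIntg n)
  have hind : AlgebraicIndependent K f := by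
    refine (Algebra.IsAlgebraic.isTranscendenceBasis_of_lift_le_trdeg_of_finite K f ?_).1
    rw [MvPolynomial.trdeg_of_isDomain]
    simp [hcard]
  have : FaithfulSMul (MvPolynomial ι K) (MvPolynomial κ K) := by
    rw [faithfulSMul_iff_algebraMap_injective]
    exact hind
  have : Algebra.IsIntegral (MvPolynomial ι K) (MvPolynomial κ K) := by
    constructor
    intro p
    obtain ⟨q, hq, hq2⟩ := hIntgAlg.isIntegral p
    have hq' : q.map (algebraMap (Algebra.adjoin K (Set.range f)) (MvPolynomial κ K)) ∈
        Polynomial.lifts (algebraMap (MvPolynomial ι K) (MvPolynomial κ K)) := by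
      rw [Polynomial.lifts_iff_coeff_lifts]
      intro n
      rw [Polynomial.coeff_map]
      exact (Algebra.adjoin_range_eq_range_aeval K f).le (q.coeff n).2
    obtain ⟨q', hq1, -, hq3⟩ := Polynomial.lifts_and_natDegree_eq_and_monic hq' (hq.map _)
    refine ⟨q', hq3, ?_⟩
    rw [← Polynomial.eval_map, hq1, Polynomial.eval_map]
    exact hq2
  have : Algebra.FiniteType (MvPolynomial ι K) (MvPolynomial κ K) :=
    Algebra.FiniteType.of_restrictScalars_finiteType K _ _
  have : Module.Finite (MvPolynomial ι K) (MvPolynomial κ K) := Algebra.IsIntegral.finite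
  let I : Ideal (MvPolynomial ι K) := RingHom.ker (MvPolynomial.eval (fun _ : ι => (0 : K)))
  have hI : I ≠ ⊤ := RingHom.ker_ne_top _
  obtain ⟨e, he, hspan⟩ := Sp_main c hc (Fintype.card ι) Finset.univ Finset.univ ⊥ rfl hcard.symm
    (by simp)
  have hle : (⊤ : Submodule (MvPolynomial ι K) (MvPolynomial κ K)) ≤
      Submodule.span (MvPolynomial ι K) (e : Set (MvPolynomial κ K)) ⊔ I • ⊤ := by
    intro y _
    obtain ⟨s, hs, hy⟩ := hspan y
    rw [bot_sup_eq] at hy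
    rw [show y = s + (y - s) by ring]
    refine Submodule.add_mem_sup ?_ ?_
    · exact Submodule.span_subset_span K (MvPolynomial ι K) _ hs
    · refine Submodule.span_induction ?_ (Submodule.zero_mem _) (fun _ _ _ _ h1 h2 => Submodule.add_mem _ h1 h2) ?_ hy
      · rintro _ ⟨i, -, rfl⟩
        have h1 : (X i : MvPolynomial ι K) ∈ I := by simp [I, RingHom.mem_ker]
        have h2 : (X i : MvPolynomial ι K) • (1 : MvPolynomial κ K) ∈
          I • (⊤ : Submodule (MvPolynomial ι K) (MvPolynomial κ K)) :=
          Submodule.smul_mem_smul h1 trivial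
        rw [Algebra.smul_def, hmap, aeval_X, mul_one] at h2
        exact h2
      · intro a x _ hx
        refine Submodule.smul_induction_on hx ?_ ?_
        · intro r hr n _
          rw [smul_eq_mul, mul_smul_comm]
          exact Submodule.smul_mem_smul hr trivial
        · intro x y hx hy
          rw [smul_add]
          exact Submodule.add_mem _ hx hy
  obtain ⟨P, hP, hdeg, hroot⟩ := minpoly_bound I hI e hle (X j0)
  let Q := P.map (MvPolynomial.eval b)
  have hQ : Q.Monic := hP.map _
  have hSQ : S ⊆ Q.roots.toFinset := by
    intro z hz
    obtain ⟨x, hx, hxb⟩ := hS z hz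
    rw [Multiset.mem_toFinset, Polynomial.mem_roots hQ.ne_zero, Polynomial.IsRoot,
      Polynomial.eval_map]
    have h1 := congrArg (MvPolynomial.eval x) hroot
    rw [map_zero, Polynomial.aeval_def, Polynomial.hom_eval₂, eval_X, hx] at h1
    rw [← h1]
    congr 1
    apply MvPolynomial.ringHom_ext
    · intro r; simp [hmap]
    · intro i; simp [hmap, f, ← hxb i, map_prod]
  calc S.card ≤ Q.roots.toFinset.card := Finset.card_le_card hSQ
    _ ≤ Q.roots.card := Multiset.toFinset_card_le _
    _ ≤ Q.natDegree := Polynomial.card_roots' _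
    _ ≤ P.natDegree := Polynomial.natDegree_map_le
    _ ≤ _ := hdeg.trans he

end

lemma exists_phi {E : Type} [Field E] [Fintype E] (q n m d : ℕ) (hq : 2 ≤ q)
    (hE : Fintype.card E = q ^ n) (hm : d * m = q - 1) :
    ∃ φ : E → ZMod m, (∀ x y, x ≠ 0 → y ≠ 0 → φ (x * y) = φ x + φ y) ∧
      ∀ x, x ≠ 0 → φ x = 0 → (x ^ (∑ k ∈ Finset.range n, q ^ k)) ^ d = 1 := by
  classical
  set M := ∑ k ∈ Finset.range n, q ^ k with hM
  have hN : Nat.card Eˣ = M * (q - 1) := by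
    rw [Nat.card_eq_fintype_card, Fintype.card_units, hE, hM, Nat.geomSum_eq hq, Nat.div_mul_cancel]
    simpa using Nat.sub_dvd_pow_sub_pow q 1 n
  have hdvd : m ∣ Nat.card Eˣ := by
    rw [hN, ← hm]; exact ⟨M * d, by ring⟩
  have hN0 : NeZero (Nat.card Eˣ) := ⟨Nat.card_pos.ne'⟩
  let e := zmodCyclicMulEquiv (G := Eˣ) inferInstance
  let ψ : Eˣ → ZMod m := fun u => ZMod.castHom hdvd (ZMod m) (Multiplicative.toAdd (e.symm u))
  have hψ : ∀ u v, ψ (u * v) = ψ u + ψ v := by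
    intro u v; simp only [ψ, map_mul, toAdd_mul, map_add]
  have hker : ∀ u, ψ u = 0 → (u ^ M) ^ d = 1 := by
    intro u hu
    set z := Multiplicative.toAdd (e.symm u) with hz
    have h1 : ((z.val : ℕ) : ZMod m) = 0 := by
      rw [← hu]; simp only [ψ, ← hz, ZMod.castHom_apply, ZMod.natCast_val]
    rw [ZMod.natCast_eq_zero_iff] at h1
    obtain ⟨w, hw⟩ := h1
    have h2 : e.symm ((u ^ M) ^ d) = 1 := by
      apply Multiplicative.toAdd.injective
      rw [map_pow e.symm, map_pow e.symm, toAdd_pow, toAdd_pow, ← hz, toAdd_one, ← ZMod.natCast_zmod_val z, hw,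
        nsmul_eq_mul, nsmul_eq_mul, ← Nat.cast_mul, ← Nat.cast_mul, ZMod.natCast_eq_zero_iff, hN, ← hm]
      exact ⟨w, by ring⟩
    exact (map_eq_one_iff e.symm e.symm.injective).1 h2
  refine ⟨fun x => if h : x = 0 then 0 else ψ (Units.mk0 x h), ?_, ?_⟩
  · intro x y hx hy
    simp only [hx, hy, mul_eq_zero, or_self, dif_neg, not_false_eq_true]
    rw [← hψ]; congr 1; ext; simp
  · intro x hx h
    simp only [hx, dif_neg, not_false_eq_true] at h
    have := congrArg (fun u : Eˣ => (u : E)) (hker _ h)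
    simpa using this

lemma norm_count {E : Type} [Field E] (q n m d s : ℕ) (hn : 1 ≤ n) (hq : 2 ≤ q) (hd : 0 < d)
    (hfrob : ∀ (k : ℕ) (x y : E), (x - y) ^ (q ^ k) = x ^ (q ^ k) - y ^ (q ^ k))
    (φ : E → ZMod m) (hφ : ∀ x y, x ≠ 0 → y ≠ 0 → φ (x * y) = φ x + φ y)
    (hker : ∀ x, x ≠ 0 → φ x = 0 → (x ^ (∑ k ∈ Finset.range n, q ^ k)) ^ d = 1)
    (P : Fin (n + 1) → E × ZMod m) (Q : Fin s → E × ZMod m)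
    (hP : Function.Injective P) (hQ : Function.Injective Q)
    (hadj : ∀ i j, (P i).1 + (Q j).1 ≠ 0 ∧ φ ((P i).1 + (Q j).1) = (P i).2 + (Q j).2) :
    s ≤ n.factorial * d ^ n := by
  classical
  rcases Nat.eq_zero_or_pos s with rfl | hs
  · exact Nat.zero_le _
  let j₁ : Fin s := ⟨0, hs⟩
  set M := ∑ k ∈ Finset.range n, q ^ k with hM
  have hPinj : ∀ i i', (P i).1 = (P i').1 → i = i' := by
    intro i i' h
    apply hP
    refine Prod.ext h ?_
    have h1 := (hadj i j₁).2
    have h2 := (hadj i' j₁).2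
    rw [h] at h1
    exact add_right_cancel (h1.symm.trans h2)
  have hQinj : ∀ i i', (Q i).1 = (Q i').1 → i = i' := by
    intro i i' h
    apply hQ
    refine Prod.ext h ?_
    have h1 := (hadj 0 i).2
    have h2 := (hadj 0 i').2
    rw [h] at h1
    exact add_left_cancel (h1.symm.trans h2)
  let Z : Fin s → E := fun j => ((P 0).1 + (Q j).1)⁻¹
  have hZ : Function.Injective Z := fun j j' h => hQinj _ _ (add_left_cancel (inv_injective h))
  let δ : Fin n → E := fun i => (P i.succ).1 - (P 0).1
  have hδ : ∀ i, δ i ≠ 0 := fun i => sub_ne_zero.2 fun h => absurd (hPinj _ _ h) (Fin.succ_ne_zero i)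
  let ρ : Fin n → Fin s → E := fun i j => ((P i.succ).1 + (Q j).1) * Z j
  have hZ0 : ∀ j, Z j ≠ 0 := fun j => inv_ne_zero (hadj 0 j).1
  have hρ0 : ∀ i j, ρ i j ≠ 0 := fun i j => mul_ne_zero (hadj _ j).1 (hZ0 j)
  have hρδ : ∀ i j, ρ i j = δ i * (Z j - (-(δ i)⁻¹)) := by
    intro i j
    have h1 := hδ i
    have h2 : ((P 0).1 + (Q j).1) * Z j = 1 := mul_inv_cancel₀ (hadj 0 j).1
    rw [sub_neg_eq_add, mul_add, mul_inv_cancel₀ h1]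
    simp only [ρ, δ]
    linear_combination h2
  have hφρ : ∀ i j, φ (ρ i j) = (P i.succ).2 - (P 0).2 := by
    intro i j
    have h1 : ρ i j * ((P 0).1 + (Q j).1) = (P i.succ).1 + (Q j).1 := by
      simp only [ρ, Z, mul_assoc, inv_mul_cancel₀ (hadj 0 j).1, mul_one]
    have h2 := hφ _ _ (hρ0 i j) (hadj 0 j).1
    rw [h1, (hadj _ j).2, (hadj 0 j).2] at h2
    linear_combination -h2
  let Ω : Fin n → Finset E := fun i => (Polynomial.nthRoots d ((ρ i j₁ ^ M) ^ d)).toFinset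
  have hΩ : ∀ i, (Ω i).card ≤ d := fun i =>
    (Multiset.toFinset_card_le _).trans (Polynomial.card_nthRoots _ _)
  have hmem : ∀ i j, ρ i j ^ M ∈ Ω i := by
    intro i j
    simp only [Ω, Multiset.mem_toFinset]
    rw [Polynomial.mem_nthRoots hd]
    have h1 : ρ i j / ρ i j₁ ≠ 0 := div_ne_zero (hρ0 _ _) (hρ0 _ _)
    have h2 := hφ _ _ h1 (hρ0 i j₁)
    rw [div_mul_cancel₀ _ (hρ0 i j₁), hφρ, hφρ] at h2
    have h3 := hker _ h1 (by linear_combination -h2)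
    rw [div_pow, div_pow, div_eq_one_iff_eq (pow_ne_zero _ (pow_ne_zero _ (hρ0 _ _)))] at h3
    exact h3
  have hpow : ∀ z c : E, ∏ k : Fin n, (z ^ (q ^ (k : ℕ)) - c ^ (q ^ (k : ℕ))) = (z - c) ^ M := by
    intro z c
    rw [hM, ← Finset.prod_pow_eq_pow_sum, ← Fin.prod_univ_eq_prod_range]
    exact Finset.prod_congr rfl fun k _ => (hfrob _ _ _).symm
  have hfinj : ∀ (k : ℕ) (x y : E), x ^ (q ^ k) = y ^ (q ^ k) → x = y := by
    intro k x y h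
    have := hfrob k x y
    rw [h, sub_self] at this
    exact sub_eq_zero.1 (pow_eq_zero_iff (pow_ne_zero _ (by omega)) |>.1 this)
  have main := Finset.card_le_mul_card_image_of_maps_to (s := (Finset.univ : Finset (Fin s)))
    (f := fun j => fun i => ρ i j ^ M) (t := Fintype.piFinset Ω)
    (fun j _ => Fintype.mem_piFinset.2 fun i => hmem i j) n.factorial (by
      intro ω _
      have := krs (K := E) (ι := Fin n) (κ := Fin n) rfl
        (fun i k => (-(δ i)⁻¹) ^ (q ^ (k : ℕ))) (by
          intro k i i' h
          have h1 := hfinj _ _ _ h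
          have h2 : δ i = δ i' := inv_injective (neg_injective h1)
          have h3 := hPinj _ _ (sub_left_injective h2)
          exact Fin.succ_injective _ h3) (fun i => ω i / δ i ^ M) ⟨0, hn⟩
        ((Finset.univ.filter fun j => (fun i => ρ i j ^ M) = ω).image Z) (by
          intro z hz
          simp only [Finset.mem_image, Finset.mem_filter, Finset.mem_univ, true_and] at hz
          obtain ⟨j, hj, rfl⟩ := hz
          refine ⟨fun k => Z j ^ (q ^ (k : ℕ)), by simp, fun i => ?_⟩
          rw [hpow, ← hj]
          simp only
          rw [hρδ, mul_pow, mul_div_cancel_left₀]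
          exact pow_ne_zero _ (hδ i))
      rw [Finset.card_image_of_injective _ hZ, Fintype.card_fin] at this
      exact this)
  rw [Finset.card_univ, Fintype.card_fin] at main
  refine main.trans (Nat.mul_le_mul_left _ ?_)
  rw [Fintype.card_piFinset]
  calc ∏ i, (Ω i).card ≤ ∏ _i : Fin n, d := Finset.prod_le_prod' fun i _ => hΩ i
    _ = d ^ n := by simp


lemma fGraph_le {I J Y : Type} [Fintype I] [Fintype J] (t s r : ℕ) (ht : 1 ≤ t) (hs : 1 ≤ s)
    (hr : Fintype.card I = r)
    (code : I × J → Bool × Y) (hcode : Function.Injective code) (R : Y → Y → Prop)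
    (hsymm : ∀ x y, R x y → R y x)
    (hfree : ∀ (f : Fin t → Y) (g : Fin s → Y), Function.Injective f → Function.Injective g →
      (∀ x y, R (f x) (g y)) → False)
    (hedge : ∀ i i', ∃ j j', (code (i, j)).1 ≠ (code (i', j')).1 ∧
      R (code (i, j)).2 (code (i', j')).2) :
    fGraph (completeBipartiteGraph (Fin t) (Fin s)) r ≤ Fintype.card J := by
  classical
  apply Nat.sInf_le
  let e : I × J ≃ Fin (Fintype.card (I × J)) := Fintype.equivFin _
  let eI : I ≃ Fin r := (Fintype.equivFin I).trans (finCongr hr)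
  let G : SimpleGraph (Fin (Fintype.card (I × J))) :=
    { Adj := fun u v => (code (e.symm u)).1 ≠ (code (e.symm v)).1 ∧
        R (code (e.symm u)).2 (code (e.symm v)).2
      symm := ⟨fun u v h => ⟨h.1.symm, hsymm _ _ h.2⟩⟩
      loopless := ⟨fun u h => h.1 rfl⟩ }
  refine ⟨_, G, ?_, ?_⟩
  · rintro ⟨F, hF⟩
    let w : Fin t ⊕ Fin s → Bool × Y := fun z => code (e.symm (F z))
    have hw : Function.Injective w := hcode.comp (e.symm.injective.comp hF)
    have hadj : ∀ x y, (w (Sum.inl x)).1 ≠ (w (Sum.inr y)).1 ∧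
        R (w (Sum.inl x)).2 (w (Sum.inr y)).2 := by
      intro x y
      have : G.Adj (F (Sum.inl x)) (F (Sum.inr y)) := F.map_adj (by simp)
      exact this
    have x0 : Fin t := ⟨0, ht⟩
    have y0 : Fin s := ⟨0, hs⟩
    refine hfree (fun x => (w (Sum.inl x)).2) (fun y => (w (Sum.inr y)).2) ?_ ?_
      (fun x y => (hadj x y).2)
    · intro x x' h
      have h1 := (hadj x y0).1
      have h2 := (hadj x' y0).1
      have h3 : (w (Sum.inl x)).1 = (w (Sum.inl x')).1 := by
        revert h1 h2
        generalize (w (Sum.inl x)).1 = b1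
        generalize (w (Sum.inl x')).1 = b2
        generalize (w (Sum.inr y0)).1 = b3
        revert b1 b2 b3
        decide
      exact Sum.inl_injective (hw (Prod.ext h3 h))
    · intro y y' h
      have h1 := (hadj x0 y).1
      have h2 := (hadj x0 y').1
      have h3 : (w (Sum.inr y)).1 = (w (Sum.inr y')).1 := by
        revert h1 h2
        generalize (w (Sum.inr y)).1 = b1
        generalize (w (Sum.inr y')).1 = b2
        generalize (w (Sum.inl x0)).1 = b3
        revert b1 b2 b3
        decide
      exact Sum.inr_injective (hw (Prod.ext h3 h))
  · refine ⟨fun i => Finset.univ.image fun j => e (eI.symm i, j), ?_, ?_, ?_⟩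
    · intro v
      refine ⟨eI (e.symm v).1, ?_, ?_⟩
      · simp only [Finset.mem_image, Finset.mem_univ, true_and, Equiv.symm_apply_apply]
        exact ⟨(e.symm v).2, by simp⟩
      · intro i hi
        simp only [Finset.mem_image, Finset.mem_univ, true_and] at hi
        obtain ⟨j, rfl⟩ := hi
        simp
    · intro i
      exact Finset.card_image_le
    · intro i i' _
      obtain ⟨j, j', h⟩ := hedge (eI.symm i) (eI.symm i')
      refine ⟨e (eI.symm i, j), by simp, e (eI.symm i', j'), by simp, ?_⟩
      change _ ∧ _
      simpa using h

lemma no_C4 {K : Type} [Field K] {x0 y0 x1 y1 u0 v0 u1 v1 : K} (h00 : y0 + v0 = x0 * u0)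
    (h01 : y0 + v1 = x0 * u1) (h10 : y1 + v0 = x1 * u0) (h11 : y1 + v1 = x1 * u1) :
    (x0 = x1 ∧ y0 = y1) ∨ (u0 = u1 ∧ v0 = v1) := by
  have : (x0 - x1) * (u0 - u1) = 0 := by linear_combination h01 + h10 - h00 - h11
  rcases mul_eq_zero.1 this with h | h
  · left
    have := sub_eq_zero.1 h
    subst this
    exact ⟨rfl, by linear_combination h00 - h10⟩
  · right
    have := sub_eq_zero.1 h
    subst this
    exact ⟨rfl, by linear_combination h00 - h01⟩

/-- The relation on `(E × ZMod m) ⊕ (E × (K × K))`. -/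
def RelUW {E K M : Type} [Add E] [Zero E] [Add K] [Mul K] [Add M] (φ : E → M) :
    (E × M) ⊕ (E × (K × K)) → (E × M) ⊕ (E × (K × K)) → Prop
  | Sum.inl u, Sum.inl v => u.1 + v.1 ≠ 0 ∧ φ (u.1 + v.1) = u.2 + v.2
  | Sum.inr u, Sum.inr v => u.1 + v.1 = 0 ∧ u.2.2 + v.2.2 = u.2.1 * v.2.1
  | _, _ => False

lemma cast_inj_aux {a h : ℕ} {i j k l : ℕ} (hi : i < a) (hj : j < a)
    (hk : k < h) (hl : l < h) (H : ((i + a * k : ℕ) : ZMod (h * a)) = ((j + a * l : ℕ) : ZMod (h * a))) :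
    i = j ∧ k = l := by
  have key : ∀ i k, i < a → k < h → i + a * k < h * a := by
    intro i k hi hk
    calc i + a * k < a + a * k := by omega
      _ = a * (k + 1) := by ring
      _ ≤ a * h := Nat.mul_le_mul_left _ hk
      _ = h * a := by ring
  rw [ZMod.natCast_eq_natCast_iff'] at H
  rw [Nat.mod_eq_of_lt (key i k hi hk), Nat.mod_eq_of_lt (key j l hj hl)] at H
  have h1 := congrArg (· % a) H
  simp only [Nat.add_mul_mod_self_left, Nat.mod_eq_of_lt hi, Nat.mod_eq_of_lt hj] at h1
  subst h1
  refine ⟨rfl, ?_⟩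
  have : a * k = a * l := by omega
  exact Nat.eq_of_mul_eq_mul_left (by omega) this

lemma main_bound (n q d a h p : ℕ) (hn : 1 ≤ n) (hq2 : 2 ≤ q) (hd : 0 < d) (ha : 0 < a)
    (hah : a ≤ h) (hm : d * (h * a) = q - 1) (hp : p.Prime) (hpa : a ≤ p ^ 3)
    (E : Type) [Field E] [Fintype E] (hE : Fintype.card E = q ^ n)
    (hfrob : ∀ (k : ℕ) (x y : E), (x - y) ^ (q ^ k) = x ^ (q ^ k) - y ^ (q ^ k)) :
    fGraph (completeBipartiteGraph (Fin (n + 1)) (Fin (n.factorial * d ^ n + 1))) (q ^ n * a)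
      ≤ h + a + (p + p) := by
  classical
  have : Fact p.Prime := ⟨hp⟩
  have hma : NeZero (h * a) := ⟨Nat.mul_ne_zero (by omega) (by omega)⟩
  obtain ⟨φ, hφ, hker⟩ := exists_phi (E := E) q n (h * a) d hq2 hE hm
  let K := GaloisField p 2
  have hKf : Fintype K := Fintype.ofFinite K
  have hKcard : Fintype.card K = p ^ 2 := by
    rw [← Nat.card_eq_fintype_card]; exact GaloisField.card p 2 (by norm_num)
  have hfr : Module.finrank (ZMod p) K = Module.finrank (ZMod p) (ZMod p × ZMod p) := by
    rw [GaloisField.finrank p (by norm_num)]; simp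
  let e : (ZMod p × ZMod p) ≃ₗ[ZMod p] K := (LinearEquiv.ofFinrankEq _ _ hfr).symm
  have hι : Nonempty (Fin a ↪ K × ZMod p) := by
    apply Function.Embedding.nonempty_of_card_le
    rw [Fintype.card_fin, Fintype.card_prod, hKcard, ZMod.card]
    calc a ≤ p ^ 3 := hpa
      _ = _ := by ring
  obtain ⟨ι⟩ := hι
  let code : (E × Fin a) × ((Fin h ⊕ Fin a) ⊕ (ZMod p ⊕ ZMod p)) →
      Bool × ((E × ZMod (h * a)) ⊕ (E × (K × K))) := fun z => match z with
    | ((X, i), Sum.inl (Sum.inl k)) => (true, Sum.inl (X, ((i + a * k : ℕ) : ZMod (h * a))))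
    | ((X, i), Sum.inl (Sum.inr k)) => (false, Sum.inl (X, ((k + a * i : ℕ) : ZMod (h * a))))
    | ((X, i), Sum.inr (Sum.inl k)) => (true, Sum.inr (X, ((ι i).1, e ((ι i).2, k))))
    | ((X, i), Sum.inr (Sum.inr k)) => (false, Sum.inr (X, ((ι i).1, e (k, (ι i).2))))
  have hcode : Function.Injective code := by
    rintro ⟨⟨X, i⟩, (k | k) | (k | k)⟩ ⟨⟨X', i'⟩, (k' | k') | (k' | k')⟩ H <;>
      simp only [code, Prod.mk.injEq, Sum.inl.injEq, Sum.inr.injEq, reduceCtorEq, false_and,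
        and_false, true_and, Bool.true_eq_false, Bool.false_eq_true] at H
    · obtain ⟨rfl, H⟩ := H
      obtain ⟨h1, h2⟩ := cast_inj_aux i.2 i'.2 k.2 k'.2 H
      rw [Fin.ext h1, Fin.ext h2]
    · obtain ⟨rfl, H⟩ := H
      obtain ⟨h1, h2⟩ := cast_inj_aux k.2 k'.2 (i.2.trans_le hah) (i'.2.trans_le hah) H
      rw [Fin.ext h1, Fin.ext h2]
    · obtain ⟨rfl, H1, H2⟩ := H
      have := e.injective H2
      simp only [Prod.mk.injEq] at this
      have h2 := ι.injective (Prod.ext H1 this.1)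
      rw [h2, this.2]
    · obtain ⟨rfl, H1, H2⟩ := H
      have := e.injective H2
      simp only [Prod.mk.injEq] at this
      have h2 := ι.injective (Prod.ext H1 this.2)
      rw [h2, this.1]
  have key := fGraph_le (I := E × Fin a) (n + 1) (n.factorial * d ^ n + 1) (q ^ n * a) (by omega)
    (by omega) (by rw [Fintype.card_prod, hE, Fintype.card_fin]) code hcode (RelUW φ) ?_ ?_ ?_
  · simpa [ZMod.card] using key
  · rintro (u | u) (v | v) H
    · exact ⟨by rw [add_comm]; exact H.1, by rw [add_comm, H.2, add_comm]⟩
    · exact H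
    · exact H
    · exact ⟨by rw [add_comm]; exact H.1, by rw [add_comm, H.2, mul_comm]⟩
  · intro f g hf hg H
    rcases hf0 : f 0 with u0 | u0
    · have hg1 : ∀ y, ∃ v, g y = Sum.inl v := by
        intro y
        have := H 0 y
        rw [hf0] at this
        rcases hgy : g y with v | v
        · exact ⟨v, rfl⟩
        · rw [hgy] at this; exact this.elim
      choose Q hQ using hg1
      have hf1 : ∀ x, ∃ v, f x = Sum.inl v := by
        intro x
        have := H x 0
        rw [hQ] at this
        rcases hgy : f x with v | v
        · exact ⟨v, rfl⟩
        · rw [hgy] at this; exact this.elim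
      choose P hP using hf1
      have := norm_count q n (h * a) d _ hn hq2 hd hfrob φ hφ hker P Q
        (fun x x' hx => hf (by rw [hP, hP, hx])) (fun x x' hx => hg (by rw [hQ, hQ, hx]))
        (fun x y => by
          have := H x y
          rw [hP, hQ] at this
          exact this)
      omega
    · have hg1 : ∀ y, ∃ v, g y = Sum.inr v := by
        intro y
        have := H 0 y
        rw [hf0] at this
        rcases hgy : g y with v | v
        · rw [hgy] at this; exact this.elim
        · exact ⟨v, rfl⟩
      choose Q hQ using hg1
      have hf1 : ∀ x, ∃ v, f x = Sum.inr v := by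
        intro x
        have := H x 0
        rw [hQ] at this
        rcases hgy : f x with v | v
        · rw [hgy] at this; exact this.elim
        · exact ⟨v, rfl⟩
      choose P hP using hf1
      have H' : ∀ x y, (P x).1 + (Q y).1 = 0 ∧ (P x).2.2 + (Q y).2.2 = (P x).2.1 * (Q y).2.1 := by
        intro x y
        have := H x y
        rw [hP, hQ] at this
        exact this
      have hs2 : 0 < n.factorial * d ^ n := Nat.mul_pos (Nat.factorial_pos _) (pow_pos hd _)
      let x1 : Fin (n + 1) := ⟨1, by omega⟩
      let y1 : Fin (n.factorial * d ^ n + 1) := ⟨1, by omega⟩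
      have hx : (0 : Fin (n + 1)) ≠ x1 := by intro hh; have := congrArg Fin.val hh; simp [x1] at this
      have hy : (0 : Fin (n.factorial * d ^ n + 1)) ≠ y1 := by
        intro hh; have := congrArg Fin.val hh; simp [y1] at this
      rcases no_C4 (H' 0 0).2 (H' 0 y1).2 (H' x1 0).2 (H' x1 y1).2 with ⟨h1, h2⟩ | ⟨h1, h2⟩
      · apply hx
        apply hf
        rw [hP, hP]
        congr 1
        refine Prod.ext ?_ (Prod.ext h1 h2)
        exact add_right_cancel ((H' 0 0).1.trans (H' x1 0).1.symm)
      · apply hy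
        apply hg
        rw [hQ, hQ]
        congr 1
        refine Prod.ext ?_ (Prod.ext h1 h2)
        exact add_left_cancel ((H' 0 0).1.trans (H' 0 y1).1.symm)
  · rintro ⟨X, i⟩ ⟨X', i'⟩
    by_cases hX : X + X' = 0
    · obtain ⟨z, hz⟩ := e.surjective ((ι i).1 * (ι i').1)
      refine ⟨Sum.inr (Sum.inl (z.2 - (ι i').2)), Sum.inr (Sum.inr (z.1 - (ι i).2)), ?_, hX, ?_⟩
      · simp [code]
      · change e _ + e _ = (ι i).1 * (ι i').1
        rw [← map_add, ← hz]
        congr 1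
        ext <;> simp
    · let w : ℕ := (φ (X + X') - ((i : ℕ) : ZMod (h * a)) - ((a * i' : ℕ) : ZMod (h * a))).val
      have hw : w < a * h := by rw [mul_comm]; exact ZMod.val_lt _
      refine ⟨Sum.inl (Sum.inl ⟨w / a, Nat.div_lt_of_lt_mul hw⟩),
        Sum.inl (Sum.inr ⟨w % a, Nat.mod_lt _ ha⟩), ?_, hX, ?_⟩
      · simp [code]
      · change φ (X + X') = ((i + a * (w / a) : ℕ) : ZMod (h * a)) + ((w % a + a * i' : ℕ) : ZMod (h * a))
        have h1 : ((a * (w / a) + w % a : ℕ) : ZMod (h * a)) =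
            φ (X + X') - ((i : ℕ) : ZMod (h * a)) - ((a * i' : ℕ) : ZMod (h * a)) := by
          rw [Nat.div_add_mod]; exact ZMod.natCast_zmod_val _
        push_cast at h1 ⊢
        linear_combination -h1

/-- For every `t ≥ 2` there is `C_t > 0` such that: if `q` is an even power of an odd prime,
`d` is a positive integer dividing `q−1`, and `a ≤ h` are positive integers with
`h·a = (q−1)/d`, then `f(q^{t−1}·a, K_{t,(t−1)!·d^{t−1}+1}) ≤ a + h + C_t·h^{2/5}`. -/
theorem stmt13 (t : ℕ) (ht : 2 ≤ t) :
    ∃ C : ℝ, 0 < C ∧ ∀ q d a h : ℕ,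
      (∃ p j : ℕ, p.Prime ∧ Odd p ∧ 1 ≤ j ∧ q = p ^ (2 * j)) →
      0 < d → d ∣ q - 1 → 0 < a → a ≤ h → h * a = (q - 1) / d →
      (fGraph (completeBipartiteGraph (Fin t)
          (Fin (Nat.factorial (t - 1) * d ^ (t - 1) + 1))) (q ^ (t - 1) * a) : ℝ)
        ≤ (a : ℝ) + (h : ℝ) + C * (h : ℝ) ^ ((2 : ℝ) / 5) := by
  refine ⟨8, by norm_num, ?_⟩
  rintro q d a h ⟨p₀, j, hp₀, -, hj, rfl⟩ hd hdvd ha hah hm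
  obtain ⟨n, rfl⟩ : ∃ n, t = n + 1 := ⟨t - 1, by omega⟩
  have hn : 1 ≤ n := by omega
  simp only [Nat.add_sub_cancel]
  have : Fact p₀.Prime := ⟨hp₀⟩
  let E := GaloisField p₀ (2 * j * n)
  have : Fintype E := Fintype.ofFinite E
  have hE : Fintype.card E = (p₀ ^ (2 * j)) ^ n := by
    rw [← pow_mul, ← Nat.card_eq_fintype_card]
    exact GaloisField.card p₀ _ (Nat.mul_ne_zero (by omega) (by omega))
  have hfrob : ∀ (k : ℕ) (x y : E), (x - y) ^ ((p₀ ^ (2 * j)) ^ k) =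
      x ^ ((p₀ ^ (2 * j)) ^ k) - y ^ ((p₀ ^ (2 * j)) ^ k) := by
    intro k x y
    rw [← pow_mul]
    have : CharP E p₀ := inferInstanceAs (CharP (GaloisField p₀ (2 * j * n)) p₀)
    exact sub_pow_char_pow x y _
  have hq2 : 2 ≤ p₀ ^ (2 * j) := hp₀.two_le.trans (Nat.le_self_pow (by omega) _)
  have ha1 : (1 : ℝ) ≤ a := by exact_mod_cast ha
  have hah1 : (a : ℝ) ≤ h := by exact_mod_cast hah
  have h13 : (1 : ℝ) ≤ (a : ℝ) ^ ((1 : ℝ) / 3) := Real.one_le_rpow ha1 (by norm_num)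
  let c : ℕ := ⌈(a : ℝ) ^ ((1 : ℝ) / 3)⌉₊
  have hc1 : (a : ℝ) ^ ((1 : ℝ) / 3) ≤ c := Nat.le_ceil _
  have hc2 : (c : ℝ) < (a : ℝ) ^ ((1 : ℝ) / 3) + 1 := Nat.ceil_lt_add_one (by positivity)
  have hc0 : c ≠ 0 := by
    intro h0
    rw [h0] at hc1
    norm_num at hc1
    linarith
  obtain ⟨p, hp, hcp, hpc⟩ := Nat.exists_prime_lt_and_le_two_mul c hc0
  have hpa : a ≤ p ^ 3 := by
    have h1 : (a : ℝ) = ((a : ℝ) ^ ((1 : ℝ) / 3)) ^ 3 := by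
      rw [← Real.rpow_natCast, ← Real.rpow_mul (by positivity)]; norm_num
    have h2 : ((a : ℝ) ^ ((1 : ℝ) / 3)) ^ 3 ≤ (c : ℝ) ^ 3 := by gcongr
    have h3 : a ≤ c ^ 3 := by exact_mod_cast h1.le.trans h2
    exact h3.trans (Nat.pow_le_pow_left hcp.le 3)
  have key := main_bound n _ d a h p hn hq2 hd ha hah
    (by rw [hm]; exact Nat.mul_div_cancel' hdvd) hp hpa E hE hfrob
  have h4 : (a : ℝ) ^ ((1 : ℝ) / 3) ≤ (h : ℝ) ^ ((2 : ℝ) / 5) :=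
    (Real.rpow_le_rpow (by positivity) hah1 (by norm_num)).trans
      (Real.rpow_le_rpow_of_exponent_le (ha1.trans hah1) (by norm_num))
  have h5 : (p : ℝ) ≤ 2 * c := by exact_mod_cast hpc
  have h6 : (fGraph (completeBipartiteGraph (Fin (n + 1)) (Fin (n.factorial * d ^ n + 1)))
      ((p₀ ^ (2 * j)) ^ n * a) : ℝ) ≤ h + a + (p + p) := by exact_mod_cast key
  refine le_trans h6 ?_
  linarith
end

section
/- Let H be a bipartite graph with no vertex of degree 1, and let 0 < a < 1/3 and c > 0 be reals. There exist a constant C > 0 and an integer n₀ such that the following holds: suppose n ≥ n₀, d := n^a is an integer, and G is an H-free d-regular graph on n vertices; let ρ_1 ≥ ρ_2 ≥ ⋯ ≥ ρ_n be the eigenvalues of the adjacency matrix of G, and set ρ := ρ_2 if G is bipartite and ρ := max{ρ_2, −ρ_n} otherwise; if ρ ≤ c·d^{1/2}, then f(m, H) ≤ C · m^{2/(1+a) − 1} · (log m)^{1/(1+a)}, where m := ⌊(1/4)·n^{(1+a)/2}/(log n)^{1/2}⌋. -/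
open SimpleGraph

open Classical in
lemma fiber_le {n m : ℕ} (X : Finset (Fin n → Fin m)) (s : Fin n) (c : Fin m) (b : Fin n → Fin m) :
    (X.filter (fun χ => Function.update χ s c = b)).card ≤ m := by
  have : (X.filter (fun χ => Function.update χ s c = b)).card ≤ (Finset.univ : Finset (Fin m)).card := by
    apply Finset.card_le_card_of_injOn (fun χ => χ s) (by simp)
    intro x hx y hy hxy
    simp only [Finset.coe_filter, Set.mem_ofPred_eq] at hx hy
    funext v
    by_cases hv : v = s
    · subst hv; exact hxy
    · have h1 := congrFun hx.2 v
      have h2 := congrFun hy.2 v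
      simp [hv] at h1 h2
      rw [h1, h2]
  simpa using this

open Classical in
/-- colourings with no edge from colour-`i` vertices of `S` to colour-`j` vertices -/
noncomputable def DD {n : ℕ} (G : SimpleGraph (Fin n)) {m : ℕ} (i j : Fin m) (S : Finset (Fin n)) :
    Finset (Fin n → Fin m) :=
  Finset.univ.filter (fun χ => ∀ s ∈ S, χ s = i → ∀ t, G.Adj s t → χ t ≠ j)

open Classical in
lemma step {n m d : ℕ} (G : SimpleGraph (Fin n)) [DecidableRel G.Adj] (hG : G.IsRegularOfDegree d)
    (hm : 2 * d + 1 ≤ m) (i j : Fin m) (hij : i ≠ j) (S : Finset (Fin n)) (s : Fin n) (hs : s ∉ S) :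
    d * (DD G i j S).card + 3 * m ^ 2 * (DD G i j (insert s S)).card
      ≤ 3 * m ^ 2 * (DD G i j S).card := by
  set D := DD G i j S with hD
  have memD : ∀ χ, χ ∈ D ↔ ∀ s ∈ S, χ s = i → ∀ t, G.Adj s t → χ t ≠ j := by
    intro χ; simp [hD, DD]
  set P := D.filter (fun χ => χ s = i) with hP
  set R := P.filter (fun χ => ∃ t, G.Adj s t ∧ χ t = j) with hR
  set Q := P.filter (fun χ => ¬ ∃ t, G.Adj s t ∧ χ t = j) with hQ
  have hPQ : R.card + Q.card = P.card := Finset.card_filter_add_card_filter_not _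
  have hins : DD G i j (insert s S) = D \ R := by
    ext χ
    simp only [DD, hR, hP, Finset.mem_sdiff, Finset.mem_filter, memD, Finset.mem_univ, true_and,
      Finset.mem_insert, forall_eq_or_imp]
    constructor
    · rintro ⟨h1, h2⟩
      refine ⟨h2, ?_⟩
      rintro ⟨⟨-, h3⟩, t, h4, h5⟩
      exact h1 h3 t h4 h5
    · rintro ⟨h1, h2⟩
      refine ⟨fun h3 t h4 h5 => h2 ⟨⟨h1, h3⟩, t, h4, h5⟩, h1⟩
  have hRD : R ⊆ D := (Finset.filter_subset _ _).trans (Finset.filter_subset _ _)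
  have hDR : (DD G i j (insert s S)).card + R.card = D.card := by
    rw [hins]; exact Finset.card_sdiff_add_card_eq_card hRD
  have hDP : D.card ≤ m * P.card := by
    apply Finset.card_le_mul_card_image_of_maps_to (f := fun χ => Function.update χ s i)
    · intro χ hχ
      simp only [hP, Finset.mem_filter, memD] at hχ ⊢
      refine ⟨?_, by simp⟩
      intro u hu hui t hut
      have hus : u ≠ s := fun h => hs (h ▸ hu)
      rw [Function.update_of_ne hus] at hui
      by_cases hts : t = s
      · subst hts; simpa using hij
      · rw [Function.update_of_ne hts]; exact hχ u hu hui t hut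
    · intro b _; exact fiber_le _ _ _ _
  have hQR : ∀ t, G.Adj s t →
      Q.card ≤ 2 * m * (R.filter (fun χ => χ t = j ∧ ∀ t', G.Adj s t' → t' ≠ t → χ t' ≠ j)).card := by
    intro t hst
    have hts : s ≠ t := hst.ne
    set Good := Q.filter (fun χ => ∀ u ∈ S, G.Adj t u → χ u ≠ i) with hGood
    set Bad := Q.filter (fun χ => ¬ ∀ u ∈ S, G.Adj t u → χ u ≠ i) with hBad
    have hGB : Good.card + Bad.card = Q.card := Finset.card_filter_add_card_filter_not _
    have hbadu : ∀ u ∈ S, (m - 1) * (Q.filter (fun χ => χ u = i)).card ≤ Q.card := by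
      intro u hu
      have hus : u ≠ s := fun h => hs (h ▸ hu)
      have hc : ((Finset.univ.erase j) ×ˢ (Q.filter (fun χ => χ u = i))).card
          = (m - 1) * (Q.filter (fun χ => χ u = i)).card := by
        rw [Finset.card_product]; simp
      rw [← hc]
      apply Finset.card_le_card_of_injOn (fun x => Function.update x.2 u x.1)
      · rintro ⟨c, χ⟩ hx
        simp only [Finset.coe_product, Set.mem_prod, Finset.mem_coe, Finset.mem_erase, hQ, hP,
          Finset.mem_filter, memD] at hx ⊢
        obtain ⟨⟨hcj, -⟩, ⟨⟨h1, h2⟩, h3⟩, h4⟩ := hx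
        refine ⟨⟨?_, ?_⟩, ?_⟩
        · intro v hv hvi t' hvt'
          by_cases htu : t' = u
          · subst htu; simpa using hcj
          · rw [Function.update_of_ne htu]
            by_cases hvu : v = u
            · subst hvu; exact h1 _ hv h4 _ hvt'
            · rw [Function.update_of_ne hvu] at hvi; exact h1 v hv hvi _ hvt'
        · rw [Function.update_of_ne hus.symm]; exact h2
        · rintro ⟨t', ht', h5⟩
          by_cases htu : t' = u
          · subst htu; simp at h5; exact hcj h5
          · rw [Function.update_of_ne htu] at h5; exact h3 ⟨t', ht', h5⟩
      · rintro ⟨c, χ⟩ hx ⟨c', χ'⟩ hx' heq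
        simp only [Finset.coe_product, Set.mem_prod, Finset.mem_coe, Finset.mem_filter] at hx hx' heq
        have h1 := congrFun heq u
        simp at h1
        subst h1
        congr 1
        funext v
        by_cases hv : v = u
        · subst hv; rw [hx.2.2, hx'.2.2]
        · have h2 := congrFun heq v
          simpa [hv] using h2
    have hBadle : (m - 1) * Bad.card ≤ d * Q.card := by
      have h1 : Bad ⊆ (S.filter (fun u => G.Adj t u)).biUnion (fun u => Q.filter (fun χ => χ u = i)) := by
        intro χ hχ
        simp only [hBad, Finset.mem_filter, Finset.mem_biUnion] at hχ ⊢
        obtain ⟨h2, h3⟩ := hχ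
        push Not at h3
        obtain ⟨u, hu, hut, hui⟩ := h3
        exact ⟨u, ⟨hu, hut⟩, h2, hui⟩
      have h2 : (S.filter (fun u => G.Adj t u)).card ≤ d := by
        rw [← hG t, ← SimpleGraph.card_neighborFinset_eq_degree]
        apply Finset.card_le_card
        intro u hu
        simp at hu ⊢
        exact hu.2
      calc (m - 1) * Bad.card
          ≤ (m - 1) * ∑ u ∈ S.filter (fun u => G.Adj t u), (Q.filter (fun χ => χ u = i)).card := by
            gcongr; exact (Finset.card_le_card h1).trans Finset.card_biUnion_le
        _ = ∑ u ∈ S.filter (fun u => G.Adj t u), (m - 1) * (Q.filter (fun χ => χ u = i)).card := by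
            rw [Finset.mul_sum]
        _ ≤ ∑ u ∈ S.filter (fun u => G.Adj t u), Q.card := by
            apply Finset.sum_le_sum
            intro u hu
            exact hbadu u (Finset.mem_filter.1 hu).1
        _ = (S.filter (fun u => G.Adj t u)).card * Q.card := by simp
        _ ≤ d * Q.card := by gcongr
    have hQG : Q.card ≤ 2 * Good.card := by
      have hd : 0 < d := by
        rw [← hG s, SimpleGraph.degree_pos_iff_exists_adj]; exact ⟨t, hst⟩
      have h1 : 2 * d * Bad.card ≤ d * Q.card :=
        (Nat.mul_le_mul_right _ (by omega)).trans hBadle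
      have h2 : 2 * Bad.card ≤ Q.card := by
        apply Nat.le_of_mul_le_mul_left _ hd
        calc d * (2 * Bad.card) = 2 * d * Bad.card := by ring
          _ ≤ _ := h1
      omega
    have hGR : Good.card ≤ m * (R.filter (fun χ => χ t = j ∧ ∀ t', G.Adj s t' → t' ≠ t → χ t' ≠ j)).card := by
      apply Finset.card_le_mul_card_image_of_maps_to (f := fun χ => Function.update χ t j)
      · intro χ hχ
        simp only [hGood, hR, hQ, hP, Finset.mem_filter, memD] at hχ ⊢
        obtain ⟨⟨⟨h1, h2⟩, h3⟩, h4⟩ := hχ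
        refine ⟨⟨⟨?_, ?_⟩, t, hst, by simp⟩, by simp, ?_⟩
        · intro v hv hvi t' hvt'
          have hvt : v ≠ t := by
            rintro rfl; simp at hvi; exact hij hvi.symm
          rw [Function.update_of_ne hvt] at hvi
          by_cases htt : t' = t
          · subst htt; exact absurd hvi (h4 v hv hvt'.symm)
          · rw [Function.update_of_ne htt]; exact h1 v hv hvi t' hvt'
        · rw [Function.update_of_ne hts]; exact h2
        · intro t' ht' hne
          rw [Function.update_of_ne hne]
          exact fun h => h3 ⟨t', ht', h⟩
      · intro b _; exact fiber_le _ _ _ _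
    nlinarith
  have hQR' : d * Q.card ≤ 2 * m * R.card := by
    have h1 : ∑ t ∈ G.neighborFinset s,
        (R.filter (fun χ => χ t = j ∧ ∀ t', G.Adj s t' → t' ≠ t → χ t' ≠ j)).card ≤ R.card := by
      rw [← Finset.card_biUnion]
      · apply Finset.card_le_card
        intro χ hχ
        simp only [Finset.mem_biUnion] at hχ
        obtain ⟨t, _, h⟩ := hχ
        exact (Finset.mem_filter.1 h).1
      · intro t ht t' ht' hne
        rw [Function.onFun, Finset.disjoint_left]
        intro χ h1 h2
        simp only [Finset.mem_filter, Finset.mem_coe, mem_neighborFinset] at h1 h2 ht ht'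
        exact h1.2.2 t' ht' hne.symm h2.2.1
    calc d * Q.card = ∑ t ∈ G.neighborFinset s, Q.card := by
          rw [Finset.sum_const, SimpleGraph.card_neighborFinset_eq_degree, hG s]; simp
      _ ≤ ∑ t ∈ G.neighborFinset s, 2 * m * (R.filter (fun χ => χ t = j ∧ ∀ t', G.Adj s t' → t' ≠ t → χ t' ≠ j)).card := by
          apply Finset.sum_le_sum
          intro t ht
          exact hQR t (by simpa using ht)
      _ ≤ 2 * m * R.card := by rw [← Finset.mul_sum]; gcongr
  have h5 : d * P.card ≤ 3 * m * R.card := by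
    have : d * R.card ≤ m * R.card := Nat.mul_le_mul_right _ (by omega)
    rw [← hPQ]; nlinarith
  have h6 : d * D.card ≤ 3 * m ^ 2 * R.card := by
    calc d * D.card ≤ d * (m * P.card) := by gcongr
      _ = m * (d * P.card) := by ring
      _ ≤ m * (3 * m * R.card) := by gcongr
      _ = _ := by ring
  rw [← hDR] at h6 ⊢
  nlinarith

open Classical in
lemma core {n m d : ℕ} (G : SimpleGraph (Fin n)) [DecidableRel G.Adj] (hG : G.IsRegularOfDegree d)
    (hm : 2 * d + 1 ≤ m) (i j : Fin m) (hij : i ≠ j) (S : Finset (Fin n)) :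
    ((DD G i j S).card : ℝ) ≤ (m : ℝ) ^ n * (1 - d / (3 * (m:ℝ) ^ 2)) ^ S.card := by
  have hm0 : (1:ℝ) ≤ m := by exact_mod_cast (by omega : 1 ≤ m)
  have hdm : (d:ℝ) ≤ m := by exact_mod_cast (by omega : d ≤ m)
  have h0 : 0 ≤ 1 - d / (3 * (m:ℝ) ^ 2) := by
    rw [sub_nonneg, div_le_one (by positivity)]; nlinarith
  induction S using Finset.induction_on with
  | empty => 
    have : (DD G i j ∅).card ≤ m ^ n := by
      refine (Finset.card_le_univ _).trans ?_
      simp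
    simpa using (by exact_mod_cast this : ((DD G i j ∅).card : ℝ) ≤ (m : ℝ) ^ n)
  | insert s S hs ih =>
    have h1 := step G hG hm i j hij S s hs
    have h2 : (d:ℝ) * (DD G i j S).card + 3 * m ^ 2 * (DD G i j (insert s S)).card
      ≤ 3 * m ^ 2 * (DD G i j S).card := by exact_mod_cast h1
    rw [Finset.card_insert_of_notMem hs, pow_succ, ← mul_assoc]
    refine le_trans ?_ (mul_le_mul_of_nonneg_right ih h0)
    have h3 : ((DD G i j S).card : ℝ) * (1 - d / (3 * (m:ℝ) ^ 2)) =
       (3 * m ^ 2 * (DD G i j S).card - d * (DD G i j S).card) / (3 * (m:ℝ) ^ 2) := by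
      field_simp
    rw [h3, le_div_iff₀ (by positivity)]
    linarith

open Classical in
lemma sizes {n m : ℕ} (hm : 1 ≤ m) (i : Fin m) (k : ℕ) :
    ((Finset.univ.filter (fun χ : Fin n → Fin m => k < (Finset.univ.filter (fun v => χ v = i)).card)).card : ℝ)
      * 2 ^ (k+1) ≤ (m + 1 : ℝ) ^ n := by
  have h1 : ∑ χ : Fin n → Fin m, (2:ℝ) ^ (Finset.univ.filter (fun v => χ v = i)).card = (m + 1 : ℝ) ^ n := by
    have h2 : ∀ χ : Fin n → Fin m, (2:ℝ) ^ (Finset.univ.filter (fun v => χ v = i)).card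
        = ∏ v, (if χ v = i then (2:ℝ) else 1) := by
      intro χ; rw [Finset.prod_ite]; simp
    simp_rw [h2]
    rw [← Fintype.piFinset_univ, ← Finset.prod_univ_sum (fun _ => Finset.univ) (fun _ c => if c = i then (2:ℝ) else 1)]
    have h3 : ∑ c : Fin m, (if c = i then (2:ℝ) else 1) = m + 1 := by
      have : ∀ c : Fin m, (if c = i then (2:ℝ) else 1) = 1 + if c = i then 1 else 0 := by
        intro c; split_ifs <;> norm_num
      simp_rw [this, Finset.sum_add_distrib]; simp
    rw [h3]; simp
  rw [← h1]
  have key : ∀ (X : Finset (Fin n → Fin m)) (g : (Fin n → Fin m) → ℕ), (∀ χ ∈ X, k + 1 ≤ g χ) →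
      (X.card : ℝ) * 2 ^ (k+1) ≤ ∑ χ, (2:ℝ) ^ (g χ) := by
    intro X g hX
    calc (X.card : ℝ) * 2 ^ (k+1) = ∑ χ ∈ X, (2:ℝ) ^ (k+1) := by
          rw [Finset.sum_const, nsmul_eq_mul]
      _ ≤ ∑ χ ∈ X, (2:ℝ) ^ (g χ) :=
          Finset.sum_le_sum (fun χ hχ => pow_le_pow_right₀ (by norm_num) (hX χ hχ))
      _ ≤ ∑ χ, (2:ℝ) ^ (g χ) :=
          Finset.sum_le_univ_sum_of_nonneg (fun χ => by positivity)
  exact key _ _ (fun χ hχ => (Finset.mem_filter.1 hχ).2)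

open Classical in
lemma rk_exists {n m d k : ℕ} (G : SimpleGraph (Fin n)) [DecidableRel G.Adj]
    (hG : G.IsRegularOfDegree d) (hm : 2 * d + 1 ≤ m) (ε₁ ε₂ : ℝ)
    (h1 : (1 - d / (3 * (m:ℝ) ^ 2)) ^ n ≤ ε₁) (h2 : (m + 1 : ℝ) ^ n ≤ ε₂ * m ^ n * 2 ^ (k+1))
    (h3 : (m:ℝ) ^ 2 * ε₁ + m * ε₂ < 1) : IsRKGraph G m k := by
  have hm0 : (1:ℝ) ≤ m := by exact_mod_cast (by omega : 1 ≤ m)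
  by_contra hno
  have hcov : (Finset.univ : Finset (Fin n → Fin m)) ⊆
      ((Finset.univ : Finset (Fin m × Fin m)).filter (fun x => x.1 ≠ x.2)).biUnion
        (fun x => DD G x.1 x.2 Finset.univ) ∪
      (Finset.univ : Finset (Fin m)).biUnion (fun i => Finset.univ.filter
        (fun χ : Fin n → Fin m => k < (Finset.univ.filter (fun v => χ v = i)).card)) := by
    intro χ _
    by_contra hχ
    simp only [Finset.mem_union, Finset.mem_biUnion, Finset.mem_filter, Finset.mem_univ, true_and,
      DD, Prod.exists, not_or, not_exists, not_and, not_lt] at hχ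
    obtain ⟨hA, hB⟩ := hχ
    apply hno
    refine ⟨fun i => Finset.univ.filter (fun v => χ v = i), ?_, hB, ?_⟩
    · intro v
      exact ⟨χ v, by simp, by intro y hy; exact (Finset.mem_filter.1 hy).2.symm⟩
    · intro i j hij
      have := hA i j hij
      push Not at this
      obtain ⟨u, -, hu, w, huw, hw⟩ := this
      exact ⟨u, by simpa using hu, w, by simpa using hw, huw⟩
  have hcard := (Finset.card_le_card hcov).trans (Finset.card_union_le _ _)
  have hε₁ : 0 ≤ ε₁ := le_trans (pow_nonneg (by
    have hdm : (d:ℝ) ≤ m := by exact_mod_cast (by omega : d ≤ m)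
    rw [sub_nonneg, div_le_one (by positivity)]; nlinarith) _) h1
  have e1 : ((((Finset.univ : Finset (Fin m × Fin m)).filter (fun x => x.1 ≠ x.2)).biUnion
        (fun x => DD G x.1 x.2 Finset.univ)).card : ℝ) ≤ (m:ℝ)^2 * (m ^ n * ε₁) := by
    calc _ ≤ ((∑ x ∈ (Finset.univ : Finset (Fin m × Fin m)).filter (fun x => x.1 ≠ x.2),
              (DD G x.1 x.2 Finset.univ).card : ℕ) : ℝ) := by
            exact_mod_cast Finset.card_biUnion_le
      _ = ∑ x ∈ (Finset.univ : Finset (Fin m × Fin m)).filter (fun x => x.1 ≠ x.2),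
              ((DD G x.1 x.2 Finset.univ).card : ℝ) := by push_cast; rfl
      _ ≤ ∑ x ∈ (Finset.univ : Finset (Fin m × Fin m)).filter (fun x => x.1 ≠ x.2),
              ((m:ℝ) ^ n * ε₁) := by
            apply Finset.sum_le_sum
            intro x hx
            refine (core G hG hm x.1 x.2 (Finset.mem_filter.1 hx).2 Finset.univ).trans ?_
            rw [Finset.card_univ, Fintype.card_fin]
            gcongr
      _ ≤ ∑ x : Fin m × Fin m, ((m:ℝ) ^ n * ε₁) :=
            Finset.sum_le_sum_of_subset_of_nonneg (Finset.subset_univ _) (fun _ _ _ => by positivity)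
      _ = _ := by
            rw [Finset.sum_const, Finset.card_univ, Fintype.card_prod, Fintype.card_fin, nsmul_eq_mul]
            push_cast; ring
  have e2 : (((Finset.univ : Finset (Fin m)).biUnion (fun i => Finset.univ.filter
        (fun χ : Fin n → Fin m => k < (Finset.univ.filter (fun v => χ v = i)).card))).card : ℝ)
        ≤ m * (m ^ n * ε₂) := by
    calc _ ≤ ((∑ i : Fin m, (Finset.univ.filter
        (fun χ : Fin n → Fin m => k < (Finset.univ.filter (fun v => χ v = i)).card)).card : ℕ) : ℝ) := by
            exact_mod_cast Finset.card_biUnion_le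
      _ = ∑ i : Fin m, ((Finset.univ.filter
        (fun χ : Fin n → Fin m => k < (Finset.univ.filter (fun v => χ v = i)).card)).card : ℝ) := by
            push_cast; rfl
      _ ≤ ∑ i : Fin m, ((m:ℝ) ^ n * ε₂) := by
            apply Finset.sum_le_sum
            intro i _
            have := (sizes (n := n) (by omega : 1 ≤ m) i k).trans h2
            have h2k : (0:ℝ) < 2 ^ (k+1) := by positivity
            refine le_of_mul_le_mul_right (this.trans (le_of_eq (by ring))) h2k
      _ = _ := by simp
  have hcard' : ((m:ℝ) ^ n) ≤ (m:ℝ)^2 * (m ^ n * ε₁) + m * (m ^ n * ε₂) := by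
    refine le_trans ?_ (add_le_add e1 e2)
    have h5 : (Finset.univ : Finset (Fin n → Fin m)).card = m ^ n := by simp
    rw [h5] at hcard
    exact_mod_cast hcard
  have hpos : (0:ℝ) < (m:ℝ) ^ n := by positivity
  nlinarith

lemma analytic (a : ℝ) (ha0 : 0 < a) (ha : a < 1 / 3) : ∃ n₀ : ℕ, ∀ n : ℕ, n₀ ≤ n → ∀ m : ℕ,
    m = ⌊(1 / 4 : ℝ) * (n : ℝ) ^ ((1 + a) / 2) / (Real.log n) ^ ((1 : ℝ) / 2)⌋₊ →
    3 ≤ n ∧ 1 ≤ Real.log n ∧ (m:ℝ) ^ 2 * (16 * Real.log n) ≤ n * (n:ℝ) ^ a ∧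
    n * (n:ℝ) ^ a ≤ (m:ℝ) ^ 2 * (64 * Real.log n) ∧ (n:ℝ) ^ (1/8 : ℝ) ≤ m ∧
    2 * (n:ℝ) ^ a + 1 ≤ m ∧ m * (3 * Real.log n) ≤ n := by
  have ev1 : ∀ᶠ n : ℕ in Filter.atTop, Real.log n ≤ (n:ℝ) ^ (1/6 : ℝ) := by
    have h := (isLittleO_log_rpow_atTop (show (0:ℝ) < 1/6 by norm_num)).bound (show (0:ℝ) < 1 by norm_num)
    have h' := tendsto_natCast_atTop_atTop (R := ℝ) |>.eventually h
    filter_upwards [h', Filter.eventually_ge_atTop 1] with n hn hn1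
    rw [one_mul, Real.norm_of_nonneg (Real.log_natCast_nonneg n), Real.norm_of_nonneg (by positivity)] at hn
    exact hn
  have ev2 : ∀ᶠ n : ℕ in Filter.atTop, (16:ℝ) ≤ (n:ℝ) ^ (1/8 : ℝ) :=
    ((tendsto_rpow_atTop (show (0:ℝ) < 1/8 by norm_num)).comp
      (tendsto_natCast_atTop_atTop (R := ℝ))).eventually_ge_atTop 16
  have ev3 : ∀ᶠ n : ℕ in Filter.atTop, (1:ℝ) ≤ Real.log n :=
    (Real.tendsto_log_atTop.comp (tendsto_natCast_atTop_atTop (R := ℝ))).eventually_ge_atTop 1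
  obtain ⟨n₀, hn₀⟩ := Filter.eventually_atTop.1 (ev1.and (ev2.and (ev3.and (Filter.eventually_ge_atTop 3))))
  refine ⟨n₀, fun n hn m hm => ?_⟩
  obtain ⟨hL, h16, hL1, hn3⟩ := hn₀ n hn
  have hN : (3:ℝ) ≤ n := by exact_mod_cast hn3
  have hN0 : (0:ℝ) < n := by linarith
  have hN1 : (1:ℝ) ≤ n := by linarith
  set L := Real.log n with hLdef
  set s := L ^ ((1:ℝ)/2) with hs
  have hs2 : s ^ 2 = L := by
    rw [hs, ← Real.rpow_natCast, ← Real.rpow_mul (by linarith)]; norm_num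
  have hs1 : 1 ≤ s := Real.one_le_rpow hL1 (by norm_num)
  have hs12 : s ≤ (n:ℝ) ^ (1/12 : ℝ) := by
    calc s ≤ ((n:ℝ) ^ (1/6:ℝ)) ^ ((1:ℝ)/2) := Real.rpow_le_rpow (by linarith) hL (by norm_num)
      _ = _ := by rw [← Real.rpow_mul hN0.le]; norm_num
  set y := (n:ℝ) ^ ((1+a)/2) with hy
  have hy2 : y ^ 2 = n * (n:ℝ) ^ a := by
    rw [hy, ← Real.rpow_natCast, ← Real.rpow_mul hN0.le]
    rw [show (1 + a)/2 * ((2:ℕ):ℝ) = 1 + a by push_cast; ring, Real.rpow_add hN0, Real.rpow_one]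
  have hy0 : 0 < y := by positivity
  set x := (1 / 4 : ℝ) * y / s with hx
  have hxs : x * s = y / 4 := by rw [hx]; field_simp
  have hx0 : 0 ≤ x := by positivity
  have hmx : (m:ℝ) ≤ x := by rw [hm]; exact Nat.floor_le hx0
  have hxm : x < m + 1 := by rw [hm]; exact Nat.lt_floor_add_one x
  set z := (n:ℝ) ^ (1/8 : ℝ) with hz
  set b := (n:ℝ) ^ a with hb
  have hb1 : 1 ≤ b := Real.one_le_rpow hN1 ha0.le
  have hxb : b * z ^ 2 / 4 ≤ x := by
    rw [hx, le_div_iff₀ (by linarith)]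
    have h1 : b * z ^ 2 * (n:ℝ) ^ (1/12:ℝ) ≤ y := by
      rw [hb, hz, hy, ← Real.rpow_natCast, ← Real.rpow_mul hN0.le, ← Real.rpow_add hN0, ← Real.rpow_add hN0]
      apply Real.rpow_le_rpow_of_exponent_le hN1
      norm_num; linarith
    have h2 : b * z ^ 2 * s ≤ b * z ^ 2 * (n:ℝ) ^ (1/12:ℝ) := by gcongr
    linarith
  have hbz : 256 * b ≤ b * z ^ 2 := by
    have : 256 ≤ z ^ 2 := by nlinarith
    nlinarith
  have hbz' : 16 * z ≤ b * z ^ 2 := by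
    have : 16 * z ≤ z ^ 2 := by nlinarith
    nlinarith
  have hxm2 : x ≤ 2 * m := by linarith
  refine ⟨hn3, hL1, ?_, ?_, ?_, ?_, ?_⟩
  · rw [← hy2, ← hs2]
    have : (m:ℝ) * s ≤ y / 4 := by rw [← hxs]; gcongr
    have h0 : 0 ≤ (m:ℝ) * s := by positivity
    nlinarith
  · rw [← hy2, ← hs2]
    have : y / 4 ≤ 2 * (m:ℝ) * s := by rw [← hxs]; gcongr
    nlinarith
  · linarith
  · linarith
  · have : (m:ℝ) * s ≤ y / 4 := by rw [← hxs]; gcongr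
    have h1 : y * (n:ℝ) ^ (1/12:ℝ) ≤ n := by
      rw [hy, ← Real.rpow_add hN0]
      conv_rhs => rw [← Real.rpow_one (n:ℝ)]
      apply Real.rpow_le_rpow_of_exponent_le hN1
      linarith
    have h2 : y * s ≤ y * (n:ℝ) ^ (1/12:ℝ) := by gcongr
    have h3 : (m:ℝ) * s * s ≤ y / 4 * s := by gcongr
    have h4 : (m:ℝ) * (3 * L) = 3 * (m * s * s) := by rw [← hs2]; ring
    rw [h4]
    linarith

lemma final_bound (a L : ℝ) (n m : ℕ) (ha0 : 0 < a) (hL : L = Real.log n) (hn : 3 ≤ n) (hL1 : 1 ≤ L)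
    (h4 : n * (n:ℝ) ^ a ≤ (m:ℝ) ^ 2 * (64 * L)) (h5 : (n:ℝ) ^ (1/8 : ℝ) ≤ m) :
    4 * (n:ℝ) / m ≤ 2048 * (m:ℝ) ^ (2 / (1 + a) - 1) * (Real.log m) ^ (1 / (1+a)) := by
  have hN : (3:ℝ) ≤ n := by exact_mod_cast hn
  have hN0 : (0:ℝ) < n := by linarith
  have hm0 : (0:ℝ) < m := lt_of_lt_of_le (by positivity) h5
  have hlm : L / 8 ≤ Real.log m := by
    have := Real.log_le_log (by positivity) h5
    rw [Real.log_rpow hN0, ← hL] at this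
    linarith
  have hlm0 : 0 ≤ Real.log m := by linarith
  have h6 : (n:ℝ) ^ (1+a) ≤ 512 * ((m:ℝ) ^ (2:ℝ) * Real.log m) := by
    rw [Real.rpow_add hN0, Real.rpow_one, Real.rpow_two]
    have : 0 < (m:ℝ)^2 := by positivity
    nlinarith
  have h7 : (n:ℝ) ≤ 512 ^ (1/(1+a)) * ((m:ℝ) ^ (2/(1+a)) * (Real.log m) ^ (1/(1+a))) := by
    have := Real.rpow_le_rpow (by positivity) h6 (show 0 ≤ 1/(1+a) by positivity)
    rw [← Real.rpow_mul hN0.le, mul_one_div_cancel (by positivity), Real.rpow_one,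
      Real.mul_rpow (by norm_num) (by positivity), Real.mul_rpow (by positivity) hlm0,
      ← Real.rpow_mul hm0.le, mul_one_div] at this
    exact this
  have h8 : (512:ℝ) ^ (1/(1+a)) ≤ 512 := by
    conv_rhs => rw [← Real.rpow_one (512:ℝ)]
    apply Real.rpow_le_rpow_of_exponent_le (by norm_num)
    rw [div_le_one (by positivity)]; linarith
  rw [Real.rpow_sub hm0, Real.rpow_one, div_le_iff₀ hm0]
  have h9 : 0 ≤ (m:ℝ) ^ (2/(1+a)) * (Real.log m) ^ (1/(1+a)) := by positivity
  have h10 : 2048 * ((m:ℝ) ^ (2/(1+a)) / m) * (Real.log m) ^ (1/(1+a)) * m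
      = 2048 * ((m:ℝ) ^ (2/(1+a)) * (Real.log m) ^ (1/(1+a))) := by field_simp
  rw [h10]
  nlinarith

/-- Let `H` be a bipartite graph with no vertex of degree 1, `0 < a < 1/3`, `c > 0`.
There exist `C > 0` and `n₀` such that: if `n ≥ n₀` (with `n ≥ 2`), `d = n^a` is an integer,
`G` is an `H`-free `d`-regular graph on `n` vertices whose adjacency matrix has eigenvalues
`ρ 0 ≥ ρ 1 ≥ ⋯ ≥ ρ (n-1)`, and `ρ ≤ c·d^{1/2}` where `ρ := ρ_2` if `G` is bipartite and
`ρ := max{ρ_2, −ρ_n}` otherwise, then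
`f(m,H) ≤ C·m^{2/(1+a)−1}·(log m)^{1/(1+a)}` where `m = ⌊(1/4)·n^{(1+a)/2}/(log n)^{1/2}⌋`. -/
theorem stmt14 {W : Type} [Fintype W] (H : SimpleGraph W) [DecidableRel H.Adj]
    (hbip : H.Colorable 2) (hdeg : ∀ v : W, H.degree v ≠ 1)
    (a c : ℝ) (ha0 : 0 < a) (ha : a < 1 / 3) (hc : 0 < c) :
    ∃ (C : ℝ) (n₀ : ℕ), 0 < C ∧
      ∀ (n d : ℕ), n₀ ≤ n → ∀ h1 : 1 < n, (d : ℝ) = (n : ℝ) ^ a →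
      ∀ (G : SimpleGraph (Fin n)) (_ : DecidableRel G.Adj),
        ¬ ContainsSub H G → G.IsRegularOfDegree d →
        ∀ (ρ : Fin n → ℝ) (hA : (G.adjMatrix ℝ).IsHermitian) (σ : Equiv.Perm (Fin n)),
          ρ = hA.eigenvalues ∘ σ → Antitone ρ →
          (G.Colorable 2 → ρ ⟨1, h1⟩ ≤ c * (d : ℝ) ^ ((1 : ℝ) / 2)) →
          (¬ G.Colorable 2 →
            max (ρ ⟨1, h1⟩) (-(ρ ⟨n - 1, by omega⟩)) ≤ c * (d : ℝ) ^ ((1 : ℝ) / 2)) →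
          (fGraph H (⌊(1 / 4 : ℝ) * (n : ℝ) ^ ((1 + a) / 2) / (Real.log n) ^ ((1 : ℝ) / 2)⌋₊) : ℝ)
            ≤ C * ((⌊(1 / 4 : ℝ) * (n : ℝ) ^ ((1 + a) / 2) / (Real.log n) ^ ((1 : ℝ) / 2)⌋₊ : ℝ)) ^
                  (2 / (1 + a) - 1) *
                (Real.log (⌊(1 / 4 : ℝ) * (n : ℝ) ^ ((1 + a) / 2) /
                    (Real.log n) ^ ((1 : ℝ) / 2)⌋₊ : ℝ)) ^ (1 / (1 + a)) := by
  obtain ⟨n₀, hn₀⟩ := analytic a ha0 ha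
  refine ⟨2048, n₀, by norm_num, ?_⟩
  intro n d hn h1 hd G _ hfree hreg ρ hA σ _ _ _ _
  obtain ⟨m, hm⟩ : ∃ m, m = ⌊(1 / 4 : ℝ) * (n : ℝ) ^ ((1 + a) / 2) / (Real.log n) ^ ((1 : ℝ) / 2)⌋₊ :=
    ⟨_, rfl⟩
  rw [← hm]
  obtain ⟨hn3, hL1, f1, f2, f3, f4, f5⟩ := hn₀ n hn m hm
  have hfin := final_bound a _ n m ha0 rfl hn3 hL1 f2 f3
  have hN : (3:ℝ) ≤ n := by exact_mod_cast hn3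
  have hN0 : (0:ℝ) < n := by linarith
  have hm0 : (0:ℝ) < m := lt_of_lt_of_le (by positivity) f3
  rw [← hd] at f1 f4
  have hdm : 2 * d + 1 ≤ m := by exact_mod_cast f4
  have hmn : (m:ℝ) ≤ n := by nlinarith
  have hexp : Real.exp (-Real.log n) = 1 / n := by
    rw [Real.exp_neg, Real.exp_log hN0, one_div]
  suffices hrk : IsRKGraph G m ⌊4 * (n:ℝ) / m⌋₊ by
    refine le_trans ?_ hfin
    refine le_trans ?_ (Nat.floor_le (by positivity))
    have hle : fGraph H m ≤ ⌊4 * (n:ℝ) / m⌋₊ := Nat.sInf_le ⟨n, G, hfree, hrk⟩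
    exact_mod_cast hle
  apply rk_exists G hreg hdm ((1 / n)^5) ((1 / n)^3)
  · have hd0 : (d:ℝ) ≤ m := by exact_mod_cast (by omega : d ≤ m)
    have hm1 : (1:ℝ) ≤ m := by exact_mod_cast (by omega : 1 ≤ m)
    calc (1 - d / (3 * (m:ℝ) ^ 2)) ^ n ≤ (Real.exp (-(d / (3 * (m:ℝ) ^ 2)))) ^ n := by
          apply pow_le_pow_left₀
          · rw [sub_nonneg, div_le_one (by positivity)]; nlinarith
          · have := Real.add_one_le_exp (-(d / (3 * (m:ℝ) ^ 2))); linarith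
      _ = Real.exp (n * -(d / (3 * (m:ℝ) ^ 2))) := by rw [← Real.exp_nat_mul]
      _ ≤ Real.exp ((5:ℕ) * -Real.log n) := by
          apply Real.exp_le_exp.2
          have : 5 * Real.log n ≤ n * (d / (3 * (m:ℝ) ^ 2)) := by
            rw [← mul_div_assoc, le_div_iff₀ (by positivity)]
            nlinarith [sq_nonneg (m:ℝ), mul_nonneg (sq_nonneg (m:ℝ)) (by linarith : 0 ≤ Real.log n)]
          push_cast; linarith
      _ = _ := by rw [Real.exp_nat_mul, hexp]
  · set t := (n:ℝ) / m with ht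
    have ht3 : 3 * Real.log n ≤ t := by rw [ht, le_div_iff₀ hm0]; linarith
    have e1 : (m + 1 : ℝ) ^ n ≤ m ^ n * Real.exp t := by
      have h2 : (m + 1 : ℝ) ≤ m * Real.exp (1 / m) := by
        have := Real.add_one_le_exp (1 / (m:ℝ))
        calc (m + 1 : ℝ) = m * (1 / m + 1) := by field_simp; ring
          _ ≤ _ := by gcongr
      calc (m + 1 : ℝ) ^ n ≤ (m * Real.exp (1 / m)) ^ n := by gcongr
        _ = m ^ n * Real.exp t := by
          rw [mul_pow, ← Real.exp_nat_mul, ht, mul_one_div]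
    have e2 : Real.exp (2 * t) ≤ 2 ^ (⌊4 * (n:ℝ) / m⌋₊ + 1) := by
      have h2 : 4 * t ≤ ((⌊4 * (n:ℝ) / m⌋₊ + 1 : ℕ) : ℝ) := by
        rw [ht, ← mul_div_assoc]; push_cast
        exact (Nat.lt_floor_add_one _).le
      have h3 : (2:ℝ) ^ (⌊4 * (n:ℝ) / m⌋₊ + 1)
          = Real.exp ((⌊4 * (n:ℝ) / m⌋₊ + 1 : ℕ) * Real.log 2) := by
        rw [Real.exp_nat_mul, Real.exp_log (by norm_num)]
      rw [h3]
      apply Real.exp_le_exp.2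
      have := Real.log_two_gt_d9
      have ht0 : 0 ≤ t := by linarith
      nlinarith
    have e3 : Real.exp (-t) ≤ (1/n)^3 := by
      rw [← hexp, ← Real.exp_nat_mul]
      apply Real.exp_le_exp.2
      push_cast; linarith
    calc (m + 1 : ℝ) ^ n ≤ m ^ n * Real.exp t := e1
      _ = Real.exp (-t) * m ^ n * Real.exp (2 * t) := by
        rw [mul_comm (Real.exp (-t)), mul_assoc, ← Real.exp_add]; ring_nf
      _ ≤ _ := by gcongr
  · have hq : (1:ℝ) / n ≤ 1 / 3 := by apply one_div_le_one_div_of_le <;> linarith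
    have hq0 : (0:ℝ) < 1 / n := by positivity
    have hnq : (n:ℝ) * (1 / n) = 1 := by field_simp
    set q := (1:ℝ) / n with hqdef
    have hmq : (m:ℝ) * q ≤ 1 := by rw [← hnq]; gcongr
    have hmq0 : 0 ≤ (m:ℝ) * q := by positivity
    have hA1 : (m:ℝ) ^ 2 * q ^ 5 = (m * q) ^ 2 * q ^ 3 := by ring
    have hA2 : (m:ℝ) * q ^ 3 = (m * q) * q ^ 2 := by ring
    rw [hA1, hA2]
    have hB1 : ((m:ℝ) * q) ^ 2 ≤ 1 := pow_le_one₀ hmq0 hmq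
    have hB2 : q ^ 2 ≤ (1/3) ^ 2 := by gcongr
    have hB3 : q ^ 3 ≤ (1/3) ^ 3 := by gcongr
    have hC1 : ((m:ℝ) * q) ^ 2 * q ^ 3 ≤ 1 * (1/3) ^ 3 := by gcongr
    have hC2 : ((m:ℝ) * q) * q ^ 2 ≤ 1 * (1/3) ^ 2 := by gcongr
    norm_num at hC1 hC2 ⊢
    linarith
end

section
/- For every odd prime power s, f(s⁵, θ_{3,4}) ≤ 2s³. -/
open SimpleGraph

/-- The theta graph `θ_{3,4}`: three internally disjoint paths of length 4 sharing
their two endpoints.  The endpoints are `Sum.inl 0` and `Sum.inl 1`; path `i` has internal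
vertices `(i,0), (i,1), (i,2)`. -/
def theta34 : SimpleGraph ((Fin 2) ⊕ (Fin 3 × Fin 3)) :=
  SimpleGraph.fromRel (fun a b =>
    (∃ i : Fin 3, a = Sum.inl 0 ∧ b = Sum.inr (i, 0)) ∨
    (∃ i : Fin 3, a = Sum.inl 1 ∧ b = Sum.inr (i, 2)) ∨
    (∃ (i : Fin 3) (j : Fin 3) (hj : (j : ℕ) + 1 < 3),
      a = Sum.inr (i, j) ∧ b = Sum.inr (i, ⟨(j : ℕ) + 1, hj⟩)))


section algebra
variable {K : Type} [Field K]

/-- The equations satisfied by a path of length four. -/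
def PathEq (a b D1 D2 D3 x c y : K) : Prop :=
  (a - c) * x + (c - b) * y = D1 ∧ (a ^ 2 - c ^ 2) * x + (c ^ 2 - b ^ 2) * y = D2 ∧
  (a - c) * x ^ 2 + (c - b) * y ^ 2 = D3 ∧ a ≠ c ∧ c ≠ b ∧ x ≠ y

lemma path_eq_loop (h2 : (2 : K) ≠ 0) {a D1 D2 D3 x c y x' c' y' : K}
    (h : PathEq a a D1 D2 D3 x c y) (h' : PathEq a a D1 D2 D3 x' c' y') : x = x' := by
  obtain ⟨e1, e2, e3, n1, n2, n3⟩ := h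
  obtain ⟨f1, f2, f3, m1, m2, m3⟩ := h'
  have hD : D1 ≠ 0 := by
    have : D1 = (a - c) * (x - y) := by rw [← e1]; ring
    rw [this]
    exact mul_ne_zero (sub_ne_zero.2 n1) (sub_ne_zero.2 n3)
  have hc : c = c' := by
    apply mul_right_cancel₀ hD
    linear_combination (-a - c) * e1 + e2 + (a + c') * f1 - f2
  subst hc
  have hu : a - c ≠ 0 := sub_ne_zero.2 n1
  have hd : x - y = x' - y' := by
    apply mul_left_cancel₀ hu
    linear_combination e1 - f1
  have hs : x + y = x' + y' := by
    apply mul_left_cancel₀ hD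
    linear_combination e3 - f3 - (x + y) * e1 + (x' + y') * f1
  apply mul_left_cancel₀ h2
  linear_combination hd + hs

lemma path_two {a b D1 D2 D3 x c y x' c' y' : K} (hab : a ≠ b)
    (h : PathEq a b D1 D2 D3 x c y) (h' : PathEq a b D1 D2 D3 x' c' y') (hx : x ≠ x') :
    c ≠ c' ∧ c + c' = a + b := by
  obtain ⟨e1, e2, e3, n1, n2, n3⟩ := h
  obtain ⟨f1, f2, f3, m1, m2, m3⟩ := h'
  have hE : (a - b) * D3 - D1 ^ 2 = (a - c) * (c - b) * (x - y) ^ 2 := by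
    rw [← e3, ← e1]; ring
  have hF : D2 - (a + b) * D1 = (a - c) * (c - b) * (x - y) := by
    rw [← e2, ← e1]; ring
  have hE' : (a - b) * D3 - D1 ^ 2 = (a - c') * (c' - b) * (x' - y') ^ 2 := by
    rw [← f3, ← f1]; ring
  have hF' : D2 - (a + b) * D1 = (a - c') * (c' - b) * (x' - y') := by
    rw [← f2, ← f1]; ring
  have hF0 : D2 - (a + b) * D1 ≠ 0 := by
    rw [hF]
    exact mul_ne_zero (mul_ne_zero (sub_ne_zero.2 n1) (sub_ne_zero.2 n2)) (sub_ne_zero.2 n3)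
  have hd : x - y = x' - y' := by
    apply mul_left_cancel₀ hF0
    linear_combination (x - y) * hF - (x' - y') * hF' - hE + hE'
  have huv : (a - c) * (c - b) = (a - c') * (c' - b) := by
    apply mul_right_cancel₀ (sub_ne_zero.2 n3)
    rw [← hF, hF', hd]
  have hcc : c ≠ c' := by
    intro hc
    subst hc
    apply hx
    apply mul_left_cancel₀ (sub_ne_zero.2 hab)
    linear_combination e1 - f1 + (c - b) * hd
  refine ⟨hcc, ?_⟩
  apply mul_left_cancel₀ (sub_ne_zero.2 hcc)
  linear_combination -huv

lemma no_three (h2 : (2 : K) ≠ 0) {a b D1 D2 D3 : K} (x c y : Fin 3 → K)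
    (h : ∀ i, PathEq a b D1 D2 D3 (x i) (c i) (y i)) : ∃ i j, i ≠ j ∧ x i = x j := by
  by_contra! hx
  by_cases hab : a = b
  · subst hab
    exact hx 0 1 (by decide) (path_eq_loop h2 (h 0) (h 1))
  · have h01 := path_two hab (h 0) (h 1) (hx 0 1 (by decide))
    have h02 := path_two hab (h 0) (h 2) (hx 0 2 (by decide))
    have h12 := path_two hab (h 1) (h 2) (hx 1 2 (by decide))
    exact h12.1 (by linear_combination h01.2 - h02.2)

/-- Vertices: a side and four coordinates. -/
abbrev TV (K : Type) := Bool × K × K × K × K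

/-- The bipartite algebraically defined graph. -/
def TG (K : Type) [Field K] : SimpleGraph (TV K) where
  Adj u v := u.1 ≠ v.1 ∧ u.2.2.1 + v.2.2.1 = u.2.1 * v.2.1 ∧
    u.2.2.2.1 + v.2.2.2.2 = u.2.1 ^ 2 * v.2.1 ∧
    u.2.2.2.2 + v.2.2.2.1 = u.2.1 * v.2.1 ^ 2
  symm := ⟨by
    rintro u v ⟨h0, h1, h2, h3⟩
    refine ⟨h0.symm, ?_, ?_, ?_⟩
    · linear_combination h1
    · linear_combination h3
    · linear_combination h2⟩
  loopless := ⟨fun u h => h.1 rfl⟩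

lemma TG_nbr {u v w : TV K} (h : (TG K).Adj u v) (h' : (TG K).Adj u w)
    (e : v.2.1 = w.2.1) : v = w := by
  obtain ⟨b, u1, u2, u3, u4⟩ := u
  obtain ⟨b', v1, v2, v3, v4⟩ := v
  obtain ⟨b'', w1, w2, w3, w4⟩ := w
  obtain ⟨h0, h1, h2, h3⟩ := h
  obtain ⟨g0, g1, g2, g3⟩ := h'
  simp only at *
  subst e
  have e0 : b' = b'' := by revert h0 g0; revert b b' b''; decide
  have e2 : v2 = w2 := by linear_combination h1 - g1
  have e3 : v3 = w3 := by linear_combination h3 - g3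
  have e4 : v4 = w4 := by linear_combination h2 - g2
  rw [e0, e2, e3, e4]

lemma TG_path {P x c y Q : TV K} (h1 : (TG K).Adj P x) (h2 : (TG K).Adj x c)
    (h3 : (TG K).Adj c y) (h4 : (TG K).Adj y Q) (n1 : P ≠ c) (n2 : c ≠ Q) (n3 : x ≠ y) :
    PathEq P.2.1 Q.2.1 (P.2.2.1 - Q.2.2.1) (P.2.2.2.1 - Q.2.2.2.1) (P.2.2.2.2 - Q.2.2.2.2)
      x.2.1 c.2.1 y.2.1 := by
  refine ⟨?_, ?_, ?_, fun e => n1 (TG_nbr h1.symm h2 e), fun e => n2 (TG_nbr h3.symm h4 e),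
    fun e => n3 (TG_nbr h2.symm h3 e)⟩
  · linear_combination -h1.2.1 + h2.2.1 - h3.2.1 + h4.2.1
  · linear_combination -h1.2.2.1 + h2.2.2.2 - h3.2.2.1 + h4.2.2.2
  · linear_combination -h1.2.2.2 + h2.2.2.1 - h3.2.2.2 + h4.2.2.1

lemma TG_free (h2 : (2 : K) ≠ 0) : ¬ ContainsSub theta34 (TG K) := by
  rintro ⟨f, hf⟩
  have a1 : ∀ i, theta34.Adj (Sum.inl 0) (Sum.inr (i, 0)) := fun i => by
    refine ⟨by simp, Or.inl (Or.inl ⟨i, rfl, rfl⟩)⟩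
  have a2 : ∀ i, theta34.Adj (Sum.inr (i, 0)) (Sum.inr (i, 1)) := fun i => by
    refine ⟨by simp, Or.inl (Or.inr (Or.inr ⟨i, 0, by decide, rfl, rfl⟩))⟩
  have a3 : ∀ i, theta34.Adj (Sum.inr (i, 1)) (Sum.inr (i, 2)) := fun i => by
    refine ⟨by simp, Or.inl (Or.inr (Or.inr ⟨i, 1, by decide, rfl, rfl⟩))⟩
  have a4 : ∀ i, theta34.Adj (Sum.inr (i, 2)) (Sum.inl 1) := fun i => by
    refine ⟨by simp, Or.inr (Or.inr (Or.inl ⟨i, rfl, rfl⟩))⟩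
  obtain ⟨i, j, hij, e⟩ := no_three h2 (fun i => (f (Sum.inr (i, 0))).2.1)
    (fun i => (f (Sum.inr (i, 1))).2.1) (fun i => (f (Sum.inr (i, 2))).2.1)
    (fun i => TG_path (f.map_adj (a1 i)) (f.map_adj (a2 i)) (f.map_adj (a3 i))
      (f.map_adj (a4 i)) (hf.ne (by simp)) (hf.ne (by simp)) (hf.ne (by simp)))
  have := hf (TG_nbr (f.map_adj (a1 i)) (f.map_adj (a1 j)) e)
  simp at this
  exact hij this

end algebra

lemma fGraph_le_s18 {W V I : Type} [Fintype V] [Fintype I] (H : SimpleGraph W) (G : SimpleGraph V)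
    (hG : ¬ ContainsSub H G) (r k : ℕ) (hr : Fintype.card I = r) (π : V → I)
    (hk : ∀ i, Nat.card {v // π v = i} ≤ k)
    (hE : ∀ i j, ∃ u w, π u = i ∧ π w = j ∧ G.Adj u w) : fGraph H r ≤ k := by
  classical
  let e := Fintype.equivFin V
  let g : I ≃ Fin r := Fintype.equivFinOfCardEq hr
  refine Nat.sInf_le ⟨Fintype.card V, G.comap e.symm, ?_, ?_⟩
  · rintro ⟨f, hf⟩
    exact hG ⟨⟨fun w => e.symm (f w), fun h => f.map_adj h⟩, fun a b h => hf (e.symm.injective h)⟩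
  · refine ⟨fun i => Finset.univ.filter (fun v => g (π (e.symm v)) = i), ?_, ?_, ?_⟩
    · intro v
      refine ⟨g (π (e.symm v)), by simp, ?_⟩
      intro i hi
      exact (Finset.mem_filter.1 hi).2.symm
    · intro i
      refine le_trans (le_of_eq ?_) (hk (g.symm i))
      rw [Nat.card_eq_fintype_card, ← Fintype.card_subtype]
      refine Fintype.card_congr (e.symm.subtypeEquiv ?_)
      intro a
      exact (Equiv.eq_symm_apply g).symm
    · intro i j _
      obtain ⟨u, w, hu, hw, huw⟩ := hE (g.symm i) (g.symm j)
      refine ⟨e u, by simp [hu], e w, by simp [hw], ?_⟩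
      simpa using huw

section parts
variable {K F : Type} [Field K] [AddCommGroup F]

/-- The index of the part containing a vertex. -/
def partIdx (e : K ≃+ F × F) (v : TV K) : K × F × F × F :=
  match v with
  | (true, a, b, c, d) => (a, (e b).1, (e c).1, (e d).1)
  | (false, a, b, c, d) => (a, (e b).2, (e c).2, (e d).2)

/-- The remaining coordinates of a vertex. -/
def partRest (e : K ≃+ F × F) (v : TV K) : Bool × F × F × F :=
  match v with
  | (true, _, b, c, d) => (true, (e b).2, (e c).2, (e d).2)
  | (false, _, b, c, d) => (false, (e b).1, (e c).1, (e d).1)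

lemma part_inj (e : K ≃+ F × F) {u v : TV K} (h : partIdx e u = partIdx e v)
    (h' : partRest e u = partRest e v) : u = v := by
  obtain ⟨_ | _, a, b, c, d⟩ := u <;> obtain ⟨_ | _, a', b', c', d'⟩ := v <;>
    simp only [partIdx, partRest, Prod.mk.injEq, reduceCtorEq, false_and, true_and] at h h'
  all_goals
    obtain ⟨rfl, h1, h2, h3⟩ := h
    obtain ⟨k1, k2, k3⟩ := h'
    have e1 : b = b' := e.injective (Prod.ext (by assumption) (by assumption))
    have e2 : c = c' := e.injective (Prod.ext (by assumption) (by assumption))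
    have e3 : d = d' := e.injective (Prod.ext (by assumption) (by assumption))
    rw [e1, e2, e3]

lemma part_edge (e : K ≃+ F × F) (i j : K × F × F × F) :
    ∃ u w, partIdx e u = i ∧ partIdx e w = j ∧ (TG K).Adj u w := by
  obtain ⟨a, σ1, σ2, σ3⟩ := i
  obtain ⟨b, τ1, τ2, τ3⟩ := j
  have key : ∀ (z : K) (σ τ : F), ∃ p l : K, (e p).2 = σ ∧ (e l).1 = τ ∧ p + l = z := by
    intro z σ τ
    refine ⟨e.symm ((e z).1 - τ, σ), e.symm (τ, (e z).2 - σ), by simp, by simp, ?_⟩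
    apply e.injective
    simp
  obtain ⟨p1, l1, x1, y1, z1⟩ := key (a * b) σ1 τ1
  obtain ⟨p2, l2, x2, y2, z2⟩ := key (a ^ 2 * b) σ2 τ3
  obtain ⟨p3, l3, x3, y3, z3⟩ := key (a * b ^ 2) σ3 τ2
  refine ⟨(false, a, p1, p2, p3), (true, b, l1, l3, l2), ?_, ?_, ?_⟩
  · simp [partIdx, x1, x2, x3]
  · simp [partIdx, y1, y2, y3]
  · exact ⟨by simp, z1, z2, z3⟩

end parts

/-- For every odd prime power `s`, `f(s⁵, θ_{3,4}) ≤ 2s³`. -/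
theorem stmt18 (s : ℕ) (hs : IsPrimePow s) (hodd : Odd s) :
    fGraph theta34 (s ^ 5) ≤ 2 * s ^ 3 := by
  obtain ⟨p, n, hp, hn, rfl⟩ := hs
  have hp' : p.Prime := hp.nat_prime
  have : Fact p.Prime := ⟨hp'⟩
  let K := GaloisField p (2 * n)
  let F := Fin n → ZMod p
  have hcK : Nat.card K = p ^ (2 * n) := GaloisField.card p (2 * n) (by omega)
  have : Finite K := Nat.finite_of_card_ne_zero (by rw [hcK]; exact pow_ne_zero _ hp'.ne_zero)
  have : Fintype K := Fintype.ofFinite K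
  have hcK' : Fintype.card K = p ^ (2 * n) := by rw [← Nat.card_eq_fintype_card, hcK]
  have hcF : Fintype.card F = p ^ n := by simp [F, ZMod.card]
  have hp2 : p ≠ 2 := by
    rintro rfl
    rw [Nat.odd_pow_iff hn.ne'] at hodd
    exact absurd hodd (by decide)
  have h2 : (2 : K) ≠ 0 := Ring.two_ne_zero (by rw [ringChar.eq K p]; exact hp2)
  have hfr : Module.finrank (ZMod p) K = Module.finrank (ZMod p) (F × F) := by
    rw [GaloisField.finrank p (by omega)]
    simp [F]
    omega
  let e : K ≃+ F × F := (LinearEquiv.ofFinrankEq K (F × F) hfr).toAddEquiv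
  refine fGraph_le_s18 (I := K × F × F × F) theta34 (TG K) (TG_free h2) _ _ ?_ (partIdx e) ?_
    (part_edge e)
  · rw [Fintype.card_prod, Fintype.card_prod, Fintype.card_prod, hcK', hcF]
    ring
  · intro i
    have : Nat.card (Bool × F × F × F) = 2 * (p ^ n) ^ 3 := by
      rw [Nat.card_eq_fintype_card, Fintype.card_prod, Fintype.card_prod, Fintype.card_prod, hcF,
        Fintype.card_bool]
      ring
    rw [← this]
    refine Nat.card_le_card_of_injective (fun v => partRest e v.1) ?_
    intro u v h
    exact Subtype.ext (part_inj e (u.2.trans v.2.symm) h)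
end
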